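/- arXiv:1306.6899 — 5 statements merged into one kernel-verified Lean document; each statement's English description precedes it below -/
import Mathlib

section
/- Let γ ∈ (-1, 0) and p ≥ 1. Let f : ℝ → [0,∞) be a bounded Lipschitz continuous function, not identically zero. For t > 0 define h_t(z) = sup{((f(x))^γ + t·|y|^p/p)^{1/γ} : x, y ∈ ℝ, z = x + t·y, f(x) > 0, y ≠ 0} (with sup of the empty set taken as 0), and assume that for each t > 0 the function h_t is Lebesgue-measurable and Lebesgue-integrable on ℝ. Then the function F(t) = ∫_ℝ h_t(z) dz is concave on (0,∞). -/
open MeasureTheory Set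

/-!
A negative power `u ^ (-k)` is a mixture over `R` of the truncations `(R - u)₊`. Applied to
`u = h_t(z) ^ γ`, which is the infimum over `x` of `f x ^ γ + t * V ((z - x) / t)`, this reduces the
theorem to the positive parts of the linear Hopf–Lax transforms
`z ↦ sup_x (R - f x ^ γ - P (t, z - x))`, where the cost `P (t, y) = t * V (y / t)` is jointly
convex.

For finitely many sources `x`, a convex cost makes the difference of two translates monotone in `z`:
to the left of some threshold `ρ` the supremum is attained by the earlier sources, to its right by
the last one. Adding the sources from left to right, the integral up to `σ` becomes a partial
maximum over `ρ ≤ σ`. Once the primitive of the cost from the last source is added, the function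
being maximised is jointly concave in `(t, σ, ρ)`, and concavity survives both the partial
maximisation and moving the reference source to the right. Positive parts are harmless because a
fine net of additional sources makes the supremum nonnegative on a bounded interval.
-/

open Filter Topology
open scoped NNReal ENNReal

theorem concaveOn_of_isGreatest {𝕜 E F β : Type*} [Semiring 𝕜] [PartialOrder 𝕜]
    [AddCommMonoid E] [AddCommMonoid F] [AddCommMonoid β] [PartialOrder β]
    [SMul 𝕜 E] [SMul 𝕜 F] [SMul 𝕜 β]
    {s : Set E} {C : Set (E × F)} {G : E × F → β} {m : E → β}
    (hs : Convex 𝕜 s) (hG : ConcaveOn 𝕜 C G)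
    (hm : ∀ q ∈ s, IsGreatest {v | ∃ ρ, (q, ρ) ∈ C ∧ G (q, ρ) = v} (m q)) :
    ConcaveOn 𝕜 s m := by
  refine ⟨hs, fun q₁ hq₁ q₂ hq₂ a b ha hb hab => ?_⟩
  obtain ⟨ρ₁, hρ₁, h₁⟩ := (hm q₁ hq₁).1
  obtain ⟨ρ₂, hρ₂, h₂⟩ := (hm q₂ hq₂).1
  rw [← h₁, ← h₂]
  exact (hG.2 hρ₁ hρ₂ ha hb hab).trans
    ((hm _ (hs hq₁ hq₂ ha hb hab)).2 ⟨_, hG.1 hρ₁ hρ₂ ha hb hab, rfl⟩)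

theorem convexOn_integral {α E : Type*} [MeasurableSpace α] {μ : Measure α} [AddCommMonoid E]
    [Module ℝ E] {s : Set E} {g : α → E → ℝ} (hs : Convex ℝ s)
    (hg : ∀ᵐ r ∂μ, ConvexOn ℝ s (g r)) (hint : ∀ q ∈ s, Integrable (fun r => g r q) μ) :
    ConvexOn ℝ s fun q => ∫ r, g r q ∂μ := by
  refine ⟨hs, fun q₁ hq₁ q₂ hq₂ a b ha hb hab => ?_⟩
  have h₁ : Integrable (fun r => a • g r q₁) μ := (hint q₁ hq₁).smul a
  have h₂ : Integrable (fun r => b • g r q₂) μ := (hint q₂ hq₂).smul b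
  rw [← integral_smul, ← integral_smul, ← integral_add h₁ h₂]
  refine integral_mono_ae (hint _ (hs hq₁ hq₂ ha hb hab)) (h₁.add h₂) ?_
  filter_upwards [hg] with r hr using hr.2 hq₁ hq₂ ha hb hab

theorem monotone_sub_translate_of_convexOn {g : ℝ → ℝ} (hg : ConvexOn ℝ univ g) {x y : ℝ}
    (hxy : x ≤ y) : Monotone fun z => g (z - x) - g (z - y) := by
  intro z w hzw
  rcases hxy.eq_or_lt with rfl | hxy
  · simp
  rcases hzw.eq_or_lt with rfl | hzw
  · rfl
  have h₁ := hg.secant_mono_aux1 (mem_univ (z - y)) (mem_univ (w - x))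
    (y := z - x) (by linarith) (by linarith)
  have h₂ := hg.secant_mono_aux1 (mem_univ (z - y)) (mem_univ (w - x))
    (y := w - y) (by linarith) (by linarith)
  suffices g (z - x) + g (w - y) ≤ g (z - y) + g (w - x) by dsimp only; linarith
  exact le_of_mul_le_mul_left (a := w - z + (y - x)) (by linarith) (by linarith)

theorem exists_threshold_of_antitone {α β : Type*} [ConditionallyCompleteLinearOrder α]
    [LinearOrder β] {g : α → β} (hg : Antitone g) (c : β) {A σ : α} (hA : A ≤ σ) :
    ∃ ρ ∈ Icc A σ, (∀ z ∈ Ioo A ρ, c ≤ g z) ∧ ∀ z ∈ Ioo ρ σ, g z ≤ c := by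
  set S := {z ∈ Icc A σ | ∀ w ∈ Ioo A z, c ≤ g w}
  have hAS : A ∈ S := ⟨left_mem_Icc.2 hA, by simp⟩
  have hS : BddAbove S := ⟨σ, fun z hz => hz.1.2⟩
  have hAρ : A ≤ sSup S := le_csSup hS hAS
  refine ⟨sSup S, ⟨hAρ, csSup_le ⟨A, hAS⟩ fun z hz => hz.1.2⟩, fun z hz => ?_, fun z hz => ?_⟩
  · obtain ⟨z', hz', hzz'⟩ := exists_lt_of_lt_csSup ⟨A, hAS⟩ hz.2
    exact hz'.2 z ⟨hz.1, hzz'⟩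
  · by_contra! hc
    have hzS : z ∈ S := ⟨⟨hAρ.trans hz.1.le, hz.2.le⟩, fun w hw => hc.le.trans (hg hw.2.le)⟩
    exact hz.1.not_ge (le_csSup hS hzS)

theorem isGreatest_integral_sup_of_antitone_sub {u v : ℝ → ℝ} (hu : Continuous u)
    (hv : Continuous v) (huv : Antitone (u - v)) {A σ : ℝ} (hA : A ≤ σ) :
    IsGreatest {w | ∃ ρ ∈ Icc A σ, (∫ z in A..ρ, u z) + ∫ z in ρ..σ, v z = w}
      (∫ z in A..σ, (u ⊔ v) z) := by
  have split (ρ : ℝ) : (∫ z in A..σ, (u ⊔ v) z) =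
      (∫ z in A..ρ, (u ⊔ v) z) + ∫ z in ρ..σ, (u ⊔ v) z :=
    (intervalIntegral.integral_add_adjacent_intervals ((hu.sup hv).intervalIntegrable _ _)
      ((hu.sup hv).intervalIntegrable _ _)).symm
  constructor
  · obtain ⟨ρ, hρ, hleft, hright⟩ := exists_threshold_of_antitone huv 0 hA
    refine ⟨ρ, hρ, ?_⟩
    rw [split ρ]
    congr 1
    · refine intervalIntegral.integral_congr_Ioo_of_le hρ.1 fun z hz => ?_
      exact (max_eq_left (sub_nonneg.1 (hleft z hz))).symm
    · refine intervalIntegral.integral_congr_Ioo_of_le hρ.2 fun z hz => ?_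
      exact (max_eq_right (sub_nonpos.1 (hright z hz))).symm
  · rintro _ ⟨ρ, hρ, rfl⟩
    rw [split ρ]
    exact add_le_add
      (intervalIntegral.integral_mono_on hρ.1 (hu.intervalIntegrable _ _)
        ((hu.sup hv).intervalIntegrable _ _) fun z _ => le_max_left _ _)
      (intervalIntegral.integral_mono_on hρ.2 (hv.intervalIntegrable _ _)
        ((hu.sup hv).intervalIntegrable _ _) fun z _ => le_max_right _ _)

theorem integral_const_sub_translate {g : ℝ → ℝ} (hg : Continuous g) (c x ρ σ : ℝ) :
    ∫ z in ρ..σ, (c - g (z - x)) =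
      c * (σ - ρ) + (∫ r in 0..ρ - x, g r) - ∫ r in 0..σ - x, g r := by
  have hgx : Continuous fun z => g (z - x) := by fun_prop
  rw [intervalIntegral.integral_sub (by simp) (hgx.intervalIntegrable _ _),
    intervalIntegral.integral_comp_sub_right, intervalIntegral.integral_const, smul_eq_mul,
    ← intervalIntegral.integral_add_adjacent_intervals (hg.intervalIntegrable 0 (ρ - x))
      (hg.intervalIntegrable (ρ - x) (σ - x))]
  ring

/-! ### Envelopes of translates of a jointly convex cost -/

theorem convexOn_snd_slice {T E : Type*} [AddCommGroup T] [Module ℝ T] [AddCommGroup E]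
    [Module ℝ E] {I : Set T} {s : Set E} {P : T × E → ℝ} (hP : ConvexOn ℝ (I ×ˢ s) P) {t : T}
    (ht : t ∈ I) : ConvexOn ℝ s fun y => P (t, y) := by
  refine ⟨fun y hy z hz a b ha hb hab => ?_, fun y hy z hz a b ha hb hab => ?_⟩
  · exact (hP.1 (mk_mem_prod ht hy) (mk_mem_prod ht hz) ha hb hab).2
  · have h := hP.2 (mk_mem_prod ht hy) (mk_mem_prod ht hz) ha hb hab
    simpa [← add_smul, hab] using h

section Translates

variable {T : Type*} [AddCommGroup T] [Module ℝ T] {I : Set T} {P : T × ℝ → ℝ}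

theorem convex_of_convexOn_prod_univ (hP : ConvexOn ℝ (I ×ˢ univ) P) : Convex ℝ I :=
  fun _ hs _ ht _ _ ha hb hab =>
    (hP.1 (mk_mem_prod hs (mem_univ (0 : ℝ))) (mk_mem_prod ht (mem_univ 0)) ha hb hab).1

theorem continuous_snd_slice (hP : ConvexOn ℝ (I ×ˢ univ) P) {t : T} (ht : t ∈ I) :
    Continuous fun y => P (t, y) :=
  continuousOn_univ.1 ((convexOn_snd_slice hP ht).continuousOn isOpen_univ)

theorem convexOn_integral_translate (hP : ConvexOn ℝ (I ×ˢ univ) P) {x y : ℝ} (hxy : x ≤ y) :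
    ConvexOn ℝ (I ×ˢ univ) fun q : T × ℝ => ∫ r in x..y, P (q.1, q.2 - r) := by
  simp only [intervalIntegral.integral_of_le hxy]
  refine convexOn_integral hP.1 (ae_of_all _ fun r => ?_) fun q hq => ?_
  · have h := hP.translate_left (0, -r)
    have hs : (fun z : T × ℝ => (0, -r) + z) ⁻¹' I ×ˢ univ = I ×ˢ univ := by ext; simp
    rw [hs] at h
    exact h.congr fun q _ => congrArg P (by ext <;> simp [sub_eq_add_neg])
  · have : Continuous fun r => P (q.1, q.2 - r) :=
      (continuous_snd_slice hP hq.1).comp (continuous_const.sub continuous_id)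
    exact this.integrableOn_Ioc

/-- The primitive `σ ↦ ∫ z in A..σ, E (t, z)` of an envelope `E`, plus the primitive of the cost
`P (t, · - y)` of a source at `y`. The envelope alone has no jointly concave primitive; this
correction makes it jointly concave in `(t, σ)` as long as the sources of `E` are at most `y`. -/
noncomputable def relativePrimitive (P E : T × ℝ → ℝ) (A y : ℝ) (q : T × ℝ) : ℝ :=
  (∫ z in A..q.2, E (q.1, z)) + ∫ r in 0..q.2 - y, P (q.1, r)

/-- `E` behaves like a supremum of functions `(t, z) ↦ ψ x - P (t, z - x)` over finitely many
sources `x ∈ Icc A y`. The set `I` holds the admissible times. -/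
structure IsLeftEnvelope (I : Set T) (P : T × ℝ → ℝ) (A y : ℝ) (E : T × ℝ → ℝ) : Prop where
  continuous : ∀ t ∈ I, Continuous fun z => E (t, z)
  antitone : ∀ t ∈ I, Antitone fun z => E (t, z) + P (t, z - y)
  concaveOn : ConcaveOn ℝ (I ×ˢ Ici A) (relativePrimitive P E A y)

theorem IsLeftEnvelope.mono {E : T × ℝ → ℝ} {A x y : ℝ} (hP : ConvexOn ℝ (I ×ˢ univ) P)
    (hE : IsLeftEnvelope I P A x E) (hxy : x ≤ y) : IsLeftEnvelope I P A y E where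
  continuous := hE.continuous
  antitone t ht := by
    intro z w hzw
    have h₁ := hE.antitone t ht hzw
    have h₂ := monotone_sub_translate_of_convexOn (convexOn_snd_slice hP ht) hxy hzw
    dsimp only at h₁ h₂ ⊢
    linarith
  concaveOn := by
    have hD := (convexOn_integral_translate hP hxy).subset
      (prod_mono_right (subset_univ (Ici A))) hE.concaveOn.1
    refine (hE.concaveOn.sub hD).congr fun q hq => ?_
    have hPc := continuous_snd_slice hP hq.1
    have h := intervalIntegral.integral_add_adjacent_intervals (μ := volume)
      (hPc.intervalIntegrable 0 (q.2 - y)) (hPc.intervalIntegrable (q.2 - y) (q.2 - x))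
    simp only [relativePrimitive, Pi.sub_apply, ← h,
      intervalIntegral.integral_comp_sub_left (fun r => P (q.1, r))]
    ring

theorem isLeftEnvelope_translate (hP : ConvexOn ℝ (I ×ˢ univ) P) (c : ℝ) {A x : ℝ}
    (hA : A ≤ x) : IsLeftEnvelope I P A x fun q => c - P (q.1, q.2 - x) where
  continuous t ht :=
    continuous_const.sub ((continuous_snd_slice hP ht).comp (continuous_id.sub continuous_const))
  antitone t _ := by simpa using antitone_const
  concaveOn := by
    have hintegral := (convexOn_integral_translate hP (sub_nonneg.2 hA)).comp_linearMap
      (LinearMap.inl ℝ T ℝ ∘ₗ LinearMap.fst ℝ T ℝ)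
    have hdom : Convex ℝ (I ×ˢ Ici A) := by
      simpa [prod_inter_prod] using hP.1.inter (convex_univ.prod (convex_Ici A))
    have hlinear := ((c • LinearMap.snd ℝ T ℝ).concaveOn hdom).add_const (-(c * A))
    refine (hlinear.sub (hintegral.subset (fun q hq => ⟨hq.1, trivial⟩) hdom)).congr fun q hq => ?_
    have h := intervalIntegral.integral_comp_neg (a := 0) (b := x - A) fun r => P (q.1, r)
    rw [relativePrimitive, integral_const_sub_translate (continuous_snd_slice hP hq.1),
      intervalIntegral.integral_symm]
    simp only [neg_sub, neg_zero, zero_sub, sub_add_cancel, Pi.sub_apply, Pi.add_apply,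
      Pi.smul_apply, smul_eq_mul, Function.comp_apply, LinearMap.coe_comp, LinearMap.coe_smul,
      LinearMap.coe_fst, LinearMap.coe_snd, LinearMap.coe_inl] at h ⊢
    rw [h]
    ring

theorem IsLeftEnvelope.isGreatest_relativePrimitive_sup {E : T × ℝ → ℝ} {A y : ℝ}
    (hP : ConvexOn ℝ (I ×ˢ univ) P) (hE : IsLeftEnvelope I P A y E) (c : ℝ) {t : T} {σ : ℝ}
    (ht : t ∈ I) (hσ : A ≤ σ) :
    IsGreatest {w | ∃ ρ ∈ Icc A σ, relativePrimitive P E A y (t, ρ) + c * (σ - ρ) = w}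
      (relativePrimitive P (E ⊔ fun q => c - P (q.1, q.2 - y)) A y (t, σ)) := by
  have hPc := continuous_snd_slice hP ht
  have hanti : Antitone ((fun z => E (t, z)) - fun z => c - P (t, z - y)) := by
    intro z w hzw
    have := hE.antitone t ht hzw
    simp only [Pi.sub_apply] at this ⊢
    linarith
  have hsplit (ρ : ℝ) : relativePrimitive P E A y (t, ρ) + c * (σ - ρ) =
      ((∫ z in A..ρ, E (t, z)) + ∫ z in ρ..σ, (c - P (t, z - y))) +
        ∫ r in 0..σ - y, P (t, r) := by
    rw [relativePrimitive, integral_const_sub_translate hPc]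
    ring
  obtain ⟨⟨ρ, hρ, hmax⟩, hupper⟩ := isGreatest_integral_sup_of_antitone_sub
    (hE.continuous t ht) (continuous_const.sub (hPc.comp (continuous_sub_right y))) hanti hσ
  refine ⟨⟨ρ, hρ, (hsplit ρ).trans (congrArg (· + ∫ r in 0..σ - y, P (t, r)) hmax)⟩, ?_⟩
  rintro _ ⟨ρ, hρ, rfl⟩
  exact (hsplit ρ).trans_le (add_le_add_left (hupper ⟨ρ, hρ, rfl⟩) _)

theorem IsLeftEnvelope.sup_translate {E : T × ℝ → ℝ} {A y : ℝ}
    (hP : ConvexOn ℝ (I ×ˢ univ) P) (hE : IsLeftEnvelope I P A y E) (c : ℝ) :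
    IsLeftEnvelope I P A y (E ⊔ fun q => c - P (q.1, q.2 - y)) where
  continuous t ht := (hE.continuous t ht).sup
    (continuous_const.sub ((continuous_snd_slice hP ht).comp (continuous_id.sub continuous_const)))
  antitone t ht := by
    have h := (hE.antitone t ht).sup (antitone_const (c := c))
    refine fun z w hzw => ?_
    simpa [max_add_add_right, max_add] using h hzw
  concaveOn := by
    let L := (LinearMap.fst ℝ T ℝ ∘ₗ LinearMap.fst ℝ (T × ℝ) ℝ).prod (LinearMap.snd ℝ (T × ℝ) ℝ)
    let ℓ := LinearMap.snd ℝ T ℝ ∘ₗ LinearMap.fst ℝ (T × ℝ) ℝ - LinearMap.snd ℝ (T × ℝ) ℝ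
    have hC : Convex ℝ (L ⁻¹' (I ×ˢ Ici A) ∩ {q | 0 ≤ ℓ q}) :=
      (hE.concaveOn.comp_linearMap L).1.inter (convex_halfSpace_ge ℓ.isLinear 0)
    have hG := ((hE.concaveOn.comp_linearMap L).subset inter_subset_left hC).add
      ((c • ℓ).concaveOn hC)
    refine concaveOn_of_isGreatest hE.concaveOn.1 hG fun q ⟨ht, hA⟩ => ?_
    have h := hE.isGreatest_relativePrimitive_sup hP c ht hA
    refine ⟨?_, ?_⟩
    · obtain ⟨ρ, hρ, hw⟩ := h.1
      exact ⟨ρ, ⟨⟨ht, hρ.1⟩, sub_nonneg.2 hρ.2⟩, hw⟩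
    · rintro w ⟨ρ, ⟨hρ, hρq⟩, hw⟩
      exact h.2 ⟨ρ, ⟨hρ.2, sub_nonneg.1 hρq⟩, hw⟩

theorem isLeftEnvelope_sup' (hP : ConvexOn ℝ (I ×ˢ univ) P) (ψ : ℝ → ℝ) {A : ℝ}
    {F : Finset ℝ} (hF : F.Nonempty) {y : ℝ} (hAF : ∀ x ∈ F, A ≤ x) (hFy : ∀ x ∈ F, x ≤ y) :
    IsLeftEnvelope I P A y fun q => F.sup' hF fun x => ψ x - P (q.1, q.2 - x) := by
  induction F using Finset.induction_on_max generalizing y with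
  | empty => exact absurd hF Finset.not_nonempty_empty
  | insert a F ha ih =>
    rcases F.eq_empty_or_nonempty with rfl | hF'
    · simpa using (isLeftEnvelope_translate hP (ψ a) (hAF a (by simp))).mono hP (hFy a (by simp))
    · have h := ((ih hF' (fun x hx => hAF x (by simp [hx])) fun x hx => (ha x hx).le).sup_translate
        hP (ψ a)).mono hP (hFy a (by simp))
      convert h using 2 with q
      rw [Finset.sup'_insert hF', sup_comm]
      rfl

theorem concaveOn_integral_sup' (hP : ConvexOn ℝ (I ×ˢ univ) P) (ψ : ℝ → ℝ) {A B : ℝ}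
    {F : Finset ℝ} (hF : F.Nonempty) (hAB : ∀ x ∈ F, x ∈ Icc A B) :
    ConcaveOn ℝ I fun t => ∫ z in A..B, F.sup' hF fun x => ψ x - P (t, z - x) := by
  obtain ⟨x, hx⟩ := id hF
  have hAB' : A ≤ B := (hAB x hx).1.trans (hAB x hx).2
  have h := isLeftEnvelope_sup' hP ψ hF (fun x hx => (hAB x hx).1) fun x hx => (hAB x hx).2
  refine ⟨convex_of_convexOn_prod_univ hP, fun s hs t ht a b ha hb hab => ?_⟩
  have h' := h.concaveOn.2 (x := (s, B)) (y := (t, B)) ⟨hs, hAB'⟩ ⟨ht, hAB'⟩ ha hb hab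
  simpa [relativePrimitive, ← add_mul, hab] using h'

end Translates

/-! ### The linear Hopf–Lax transform -/

theorem lintegral_iSup_eq_iSup_finset {α ι : Type*} [TopologicalSpace α]
    [HereditarilyLindelofSpace α] [MeasurableSpace α] [OpensMeasurableSpace α] (μ : Measure α)
    {g : ι → α → ℝ≥0∞} (hg : ∀ i, LowerSemicontinuous (g i)) :
    ∫⁻ a, ⨆ i, g i a ∂μ = ⨆ F : Finset ι, ∫⁻ a, ⨆ i ∈ F, g i a ∂μ := by
  refine le_antisymm ?_ (iSup_le fun F => lintegral_mono fun a => iSup₂_le_iSup _ _)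
  obtain ⟨𝓕, h𝓕, hcount, hlub⟩ := exists_countable_lowerSemicontinuous_isLUB
    (forall_mem_range.2 hg) (isLUB_iSup (f := g))
  choose e he using fun f : 𝓕 => h𝓕 f.2
  have : Countable 𝓕 := hcount
  have hmeas (T : Finset 𝓕) : Measurable fun a => ⨆ f ∈ T, g (e f) a :=
    .biSup _ T.countable_toSet fun f _ => (hg (e f)).measurable
  have hdir : Directed (· ≤ ·) fun (T : Finset 𝓕) a => ⨆ f ∈ T, g (e f) a :=
    Monotone.directed_le fun S T hST _ => biSup_mono fun f hf => Finset.mem_of_subset hST hf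
  calc ∫⁻ a, ⨆ i, g i a ∂μ = ∫⁻ a, ⨆ T : Finset 𝓕, ⨆ f ∈ T, g (e f) a ∂μ := by
        refine lintegral_congr fun a => ?_
        rw [← iSup_eq_iSup_finset fun f : 𝓕 => g (e f) a, ← iSup_apply, ← hlub.sSup_eq,
          sSup_eq_iSup', iSup_apply]
        simp only [he]
    _ = ⨆ T : Finset 𝓕, ∫⁻ a, ⨆ f ∈ T, g (e f) a ∂μ :=
      lintegral_iSup_directed_of_measurable hmeas hdir
    _ ≤ ⨆ F : Finset ι, ∫⁻ a, ⨆ i ∈ F, g i a ∂μ := by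
      classical
      refine iSup_le fun T => le_iSup_of_le (T.image e) (lintegral_mono fun a => ?_)
      rw [Finset.iSup_finset_image]

theorem ofReal_integral_le_lintegral_ofReal {α : Type*} [MeasurableSpace α] {μ : Measure α}
    {g : α → ℝ} (hg : Integrable g μ) :
    ENNReal.ofReal (∫ a, g a ∂μ) ≤ ∫⁻ a, ENNReal.ofReal (g a) ∂μ := by
  calc ENNReal.ofReal (∫ a, g a ∂μ) ≤ ENNReal.ofReal (∫ a, max (g a) 0 ∂μ) :=
        ENNReal.ofReal_le_ofReal (integral_mono hg hg.pos_part fun a => le_max_left _ _)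
    _ = ∫⁻ a, ENNReal.ofReal (g a) ∂μ := by
      rw [ofReal_integral_eq_lintegral_ofReal hg.pos_part (ae_of_all _ fun a => le_max_right _ _)]
      simp

theorem ofReal_smul_add_smul (a b : ℝ≥0) {x y : ℝ} (hx : 0 ≤ x) (hy : 0 ≤ y) :
    ENNReal.ofReal (a • x + b • y) = a • ENNReal.ofReal x + b • ENNReal.ofReal y := by
  simp only [NNReal.smul_def, ENNReal.smul_def, smul_eq_mul]
  rw [ENNReal.ofReal_add (by positivity) (by positivity), ENNReal.ofReal_mul a.coe_nonneg,
    ENNReal.ofReal_mul b.coe_nonneg, ENNReal.ofReal_coe_nnreal, ENNReal.ofReal_coe_nnreal]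

theorem concaveOn_of_concaveOn_ofReal {E : Type*} [AddCommMonoid E] [Module ℝ E] {s : Set E}
    {g : E → ℝ} (hs : Convex ℝ s) (hg_nonneg : ∀ t ∈ s, 0 ≤ g t)
    (hg : ConcaveOn ℝ≥0 s fun t => ENNReal.ofReal (g t)) :
    ConcaveOn ℝ s g := by
  refine ⟨hs, fun q₁ hq₁ q₂ hq₂ a b ha hb hab => ?_⟩
  lift a to ℝ≥0 using ha
  lift b to ℝ≥0 using hb
  have h := hg.2 hq₁ hq₂ a.2 b.2 (NNReal.eq hab)
  rw [← ofReal_smul_add_smul a b (hg_nonneg _ hq₁) (hg_nonneg _ hq₂)] at h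
  exact (ENNReal.ofReal_le_ofReal_iff (hg_nonneg _ (hs hq₁ hq₂ a.2 b.2 hab))).1 h

/-- The positive part of the linear Hopf–Lax transform `z ↦ sup_{x ∈ D} (ψ x - P (t, z - x))`.
The positive part is taken inside the supremum, so that it lives in `ℝ≥0∞`. -/
noncomputable def posHopfLax {T : Type*} (P : T × ℝ → ℝ) (ψ : ℝ → ℝ) (D : Set ℝ) (t : T) (z : ℝ) :
    ℝ≥0∞ :=
  ⨆ x ∈ D, ENNReal.ofReal (ψ x - P (t, z - x))

section PosHopfLax

variable {T : Type*} {P : T × ℝ → ℝ} {ψ : ℝ → ℝ}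

theorem posHopfLax_mono_set {D D' : Set ℝ} (h : D ⊆ D') (t : T) (z : ℝ) :
    posHopfLax P ψ D t z ≤ posHopfLax P ψ D' t z :=
  biSup_mono fun _ hx => h hx

theorem posHopfLax_mono {ψ' : ℝ → ℝ} (h : ψ ≤ ψ') (D : Set ℝ) (t : T) (z : ℝ) :
    posHopfLax P ψ D t z ≤ posHopfLax P ψ' D t z :=
  iSup₂_mono fun x _ => ENNReal.ofReal_le_ofReal (sub_le_sub_right (h x) _)

theorem posHopfLax_add_const_le (ψ : ℝ → ℝ) (ε : ℝ) (D : Set ℝ) (t : T) (z : ℝ) :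
    posHopfLax P (fun x => ψ x + ε) D t z ≤ posHopfLax P ψ D t z + ENNReal.ofReal ε := by
  refine iSup₂_le fun x hx => ?_
  rw [add_sub_right_comm]
  exact ENNReal.ofReal_add_le.trans (add_le_add_left
    (le_iSup₂ (f := fun x (_ : x ∈ D) => ENNReal.ofReal (ψ x - P (t, z - x))) x hx) _)

theorem posHopfLax_coe_finset {F : Finset ℝ} (hF : F.Nonempty) (t : T) (z : ℝ) :
    posHopfLax P ψ F t z = ENNReal.ofReal (F.sup' hF fun x => ψ x - P (t, z - x)) := by
  simp only [posHopfLax, Finset.mem_coe]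
  rw [← Finset.sup_eq_iSup, ← Finset.sup'_eq_sup hF]
  exact (Finset.apply_sup'_eq_sup'_comp hF _ ENNReal.ofReal_max).symm

theorem posHopfLax_eq_univ {t : T} (hP : ∀ y, 0 ≤ P (t, y)) (ψ : ℝ → ℝ)
    (D : Set ℝ) (z : ℝ) :
    posHopfLax P ψ D t z = posHopfLax P (D.indicator fun x => max (ψ x) 0) univ t z := by
  simp only [posHopfLax, mem_univ, iSup_pos]
  refine iSup_congr fun x => ?_
  by_cases hx : x ∈ D
  · rw [iSup_pos hx, indicator_of_mem hx, ← max_sub_sub_right, ENNReal.ofReal_max,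
      ENNReal.ofReal_of_nonpos (sub_nonpos.2 (hP _)), max_eq_left zero_le]
  · simp [hx, hP]

variable [AddCommGroup T] [Module ℝ T] {I : Set T}

theorem lowerSemicontinuous_posHopfLax (hP : ConvexOn ℝ (I ×ˢ univ) P) (D : Set ℝ) {t : T}
    (ht : t ∈ I) : LowerSemicontinuous (posHopfLax P ψ D t) :=
  lowerSemicontinuous_biSup fun x _ => (ENNReal.continuous_ofReal.comp (continuous_const.sub
    ((continuous_snd_slice hP ht).comp (continuous_sub_right x)))).lowerSemicontinuous

theorem lintegral_posHopfLax_univ (hP : ConvexOn ℝ (I ×ˢ univ) P) {t : T} (ht : t ∈ I) :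
    ∫⁻ z, posHopfLax P ψ univ t z = ⨆ F : Finset ℝ, ∫⁻ z, posHopfLax P ψ F t z := by
  simpa [posHopfLax] using lintegral_iSup_eq_iSup_finset volume
    (g := fun x z => ENNReal.ofReal (ψ x - P (t, z - x))) fun x =>
    (ENNReal.continuous_ofReal.comp (continuous_const.sub
      ((continuous_snd_slice hP ht).comp (continuous_sub_right x)))).lowerSemicontinuous

theorem exists_finset_cost_lt (hP : ConvexOn ℝ (I ×ˢ univ) P) (hP₀ : ∀ t ∈ I, P (t, 0) = 0)
    {s t : T} {ε : ℝ} (hs : s ∈ I) (ht : t ∈ I) (hε : 0 < ε) (A B : ℝ) :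
    ∃ G : Finset ℝ, (∀ x ∈ G, x ∈ Icc A B) ∧
      ∀ z ∈ Icc A B, ∃ x ∈ G, P (s, z - x) < ε ∧ P (t, z - x) < ε := by
  have hsmall {u : T} (hu : u ∈ I) (x : ℝ) : ∀ᶠ z in 𝓝 x, P (u, z - x) < ε := by
    have hcont : Continuous fun z => P (u, z - x) :=
      (continuous_snd_slice hP hu).comp (continuous_sub_right x)
    exact hcont.continuousAt.eventually_lt_const (by simpa [hP₀ u hu] using hε)
  obtain ⟨G, hG, hcover⟩ := (isCompact_Icc (a := A) (b := B)).elim_nhds_subcover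
    (fun x => {z | P (s, z - x) < ε ∧ P (t, z - x) < ε}) fun x _ => (hsmall hs x).and (hsmall ht x)
  refine ⟨G, hG, fun z hz => ?_⟩
  obtain ⟨x, hx, hsx, htx⟩ := mem_iUnion₂.1 (hcover hz)
  exact ⟨x, hx, hsx, htx⟩

theorem setLIntegral_posHopfLax_finset_concave (hP : ConvexOn ℝ (I ×ˢ univ) P)
    {A B : ℝ} {F : Finset ℝ} (hF : F.Nonempty) (hFAB : ∀ x ∈ F, x ∈ Icc A B)
    {s t : T} (hs : s ∈ I) (ht : t ∈ I)
    (hs₀ : ∀ z ∈ Icc A B, 0 ≤ F.sup' hF fun x => ψ x - P (s, z - x))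
    (ht₀ : ∀ z ∈ Icc A B, 0 ≤ F.sup' hF fun x => ψ x - P (t, z - x))
    {a b : ℝ≥0} (hab : a + b = 1) :
    a • (∫⁻ z in Icc A B, posHopfLax P ψ F s z) + b • (∫⁻ z in Icc A B, posHopfLax P ψ F t z) ≤
      ∫⁻ z in Icc A B, posHopfLax P ψ F (a • s + b • t) z := by
  set m : T → ℝ → ℝ := fun t z => F.sup' hF fun x => ψ x - P (t, z - x)
  have hAB : A ≤ B := nonempty_Icc.1 (hF.imp hFAB)
  have hst : a • s + b • t ∈ I :=
    convex_of_convexOn_prod_univ hP hs ht a.2 b.2 (congrArg NNReal.toReal hab)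
  have hint {u : T} (hu : u ∈ I) : IntegrableOn (m u) (Icc A B) :=
    (Continuous.finset_sup'_apply hF fun x _ => continuous_const.sub
      ((continuous_snd_slice hP hu).comp (continuous_sub_right x))).integrableOn_Icc
  have hconcave := (concaveOn_integral_sup' hP ψ hF hFAB).2 hs ht a.2 b.2
    (congrArg NNReal.toReal hab)
  simp only [intervalIntegral.integral_of_le hAB, ← integral_Icc_eq_integral_Ioc] at hconcave
  have hlint {u : T} (hu : u ∈ I) (hu₀ : ∀ z ∈ Icc A B, 0 ≤ m u z) :
      ∫⁻ z in Icc A B, ENNReal.ofReal (m u z) = ENNReal.ofReal (∫ z in Icc A B, m u z) :=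
    (ofReal_integral_eq_lintegral_ofReal (hint hu)
      (ae_restrict_of_forall_mem measurableSet_Icc hu₀)).symm
  simp only [posHopfLax_coe_finset hF]
  calc a • (∫⁻ z in Icc A B, ENNReal.ofReal (m s z)) +
        b • (∫⁻ z in Icc A B, ENNReal.ofReal (m t z))
      = ENNReal.ofReal (a • (∫ z in Icc A B, m s z) + b • ∫ z in Icc A B, m t z) := by
        rw [hlint hs hs₀, hlint ht ht₀, ofReal_smul_add_smul _ _
          (setIntegral_nonneg measurableSet_Icc hs₀) (setIntegral_nonneg measurableSet_Icc ht₀)]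
    _ ≤ ENNReal.ofReal (∫ z in Icc A B, m (a • s + b • t) z) := ENNReal.ofReal_le_ofReal hconcave
    _ ≤ ∫⁻ z in Icc A B, ENNReal.ofReal (m (a • s + b • t) z) :=
      ofReal_integral_le_lintegral_ofReal (hint hst)

theorem setLIntegral_posHopfLax_concave_of_pos (hP : ConvexOn ℝ (I ×ˢ univ) P)
    (hP₀ : ∀ t ∈ I, P (t, 0) = 0) {ε : ℝ} (hε : 0 < ε) (hψ : ∀ x, ε ≤ ψ x)
    {A B : ℝ} (hAB : A ≤ B) {F : Finset ℝ} (hF : ∀ x ∈ F, x ∈ Icc A B)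
    {s t : T} (hs : s ∈ I) (ht : t ∈ I) {a b : ℝ≥0} (hab : a + b = 1) :
    a • (∫⁻ z in Icc A B, posHopfLax P ψ F s z) + b • (∫⁻ z in Icc A B, posHopfLax P ψ F t z) ≤
      ∫⁻ z in Icc A B, posHopfLax P ψ univ (a • s + b • t) z := by
  classical
  obtain ⟨G, hG, hcover⟩ := exists_finset_cost_lt hP hP₀ hs ht hε A B
  obtain ⟨x₀, hx₀, -⟩ := hcover A (left_mem_Icc.2 hAB)
  have hFG : ∀ x ∈ F ∪ G, x ∈ Icc A B := fun x hx => (Finset.mem_union.1 hx).elim (hF x) (hG x)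
  have hne : (F ∪ G).Nonempty := ⟨x₀, Finset.mem_union_right F hx₀⟩
  have hnonneg {u : T} (hu : ∀ z ∈ Icc A B, ∃ x ∈ G, P (u, z - x) < ε) (z : ℝ) (hz : z ∈ Icc A B) :
      0 ≤ (F ∪ G).sup' hne fun x => ψ x - P (u, z - x) := by
    obtain ⟨x, hx, hlt⟩ := hu z hz
    exact Finset.le_sup'_of_le _ (Finset.mem_union_right F hx) (by linarith [hψ x])
  have hFFG : (F : Set ℝ) ⊆ ↑(F ∪ G) := Finset.coe_subset.2 Finset.subset_union_left
  calc a • (∫⁻ z in Icc A B, posHopfLax P ψ F s z) + b • (∫⁻ z in Icc A B, posHopfLax P ψ F t z)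
      ≤ a • (∫⁻ z in Icc A B, posHopfLax P ψ ↑(F ∪ G) s z) +
          b • (∫⁻ z in Icc A B, posHopfLax P ψ ↑(F ∪ G) t z) := by
        gcongr <;> exact posHopfLax_mono_set hFFG _ _
    _ ≤ ∫⁻ z in Icc A B, posHopfLax P ψ ↑(F ∪ G) (a • s + b • t) z :=
      setLIntegral_posHopfLax_finset_concave hP hne hFG hs ht
        (hnonneg fun z hz => (hcover z hz).imp fun _ h => ⟨h.1, h.2.1⟩)
        (hnonneg fun z hz => (hcover z hz).imp fun _ h => ⟨h.1, h.2.2⟩) hab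
    _ ≤ ∫⁻ z in Icc A B, posHopfLax P ψ univ (a • s + b • t) z :=
      lintegral_mono (posHopfLax_mono_set (subset_univ _) _)

theorem setLIntegral_posHopfLax_concave (hP : ConvexOn ℝ (I ×ˢ univ) P)
    (hP₀ : ∀ t ∈ I, P (t, 0) = 0) (hψ : ∀ x, 0 ≤ ψ x)
    {A B : ℝ} (hAB : A ≤ B) {F : Finset ℝ} (hF : ∀ x ∈ F, x ∈ Icc A B)
    {s t : T} (hs : s ∈ I) (ht : t ∈ I) {a b : ℝ≥0} (hab : a + b = 1) :
    a • (∫⁻ z in Icc A B, posHopfLax P ψ F s z) + b • (∫⁻ z in Icc A B, posHopfLax P ψ F t z) ≤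
      ∫⁻ z in Icc A B, posHopfLax P ψ univ (a • s + b • t) z := by
  set J := ∫⁻ z in Icc A B, posHopfLax P ψ univ (a • s + b • t) z
  have hbound {ε : ℝ} (hε : 0 < ε) :
      a • (∫⁻ z in Icc A B, posHopfLax P ψ F s z) + b • (∫⁻ z in Icc A B, posHopfLax P ψ F t z) ≤
        J + ENNReal.ofReal ε * ENNReal.ofReal (B - A) := by
    have hle : ψ ≤ fun x => ψ x + ε := fun x => le_add_of_nonneg_right hε.le
    calc a • (∫⁻ z in Icc A B, posHopfLax P ψ F s z) + b • (∫⁻ z in Icc A B, posHopfLax P ψ F t z)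
        ≤ a • (∫⁻ z in Icc A B, posHopfLax P (fun x => ψ x + ε) F s z) +
            b • (∫⁻ z in Icc A B, posHopfLax P (fun x => ψ x + ε) F t z) := by
          gcongr <;> exact posHopfLax_mono hle _ _ _
      _ ≤ ∫⁻ z in Icc A B, posHopfLax P (fun x => ψ x + ε) univ (a • s + b • t) z :=
        setLIntegral_posHopfLax_concave_of_pos hP hP₀ hε (fun x => le_add_of_nonneg_left (hψ x))
          hAB hF hs ht hab
      _ ≤ ∫⁻ z in Icc A B, (posHopfLax P ψ univ (a • s + b • t) z + ENNReal.ofReal ε) :=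
        lintegral_mono (posHopfLax_add_const_le ψ ε univ _)
      _ = J + ENNReal.ofReal ε * ENNReal.ofReal (B - A) := by
        rw [lintegral_add_right _ measurable_const, setLIntegral_const, Real.volume_Icc]
  have hlim : Tendsto (fun ε => J + ENNReal.ofReal ε * ENNReal.ofReal (B - A)) (𝓝[>] 0) (𝓝 J) := by
    have hε : Tendsto ENNReal.ofReal (𝓝[>] 0) (𝓝 0) :=
      ENNReal.ofReal_zero ▸ ENNReal.continuous_ofReal.continuousWithinAt
    simpa using (ENNReal.Tendsto.mul_const hε (.inr ENNReal.ofReal_ne_top)).const_add J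
  exact ge_of_tendsto hlim (eventually_nhdsWithin_of_forall fun ε hε => hbound hε)

theorem lintegral_posHopfLax_finset_concave (hP : ConvexOn ℝ (I ×ˢ univ) P)
    (hP₀ : ∀ t ∈ I, P (t, 0) = 0) (hψ : ∀ x, 0 ≤ ψ x) (F : Finset ℝ)
    {s t : T} (hs : s ∈ I) (ht : t ∈ I) {a b : ℝ≥0} (hab : a + b = 1) :
    a • (∫⁻ z, posHopfLax P ψ F s z) + b • (∫⁻ z, posHopfLax P ψ F t z) ≤
      ∫⁻ z, posHopfLax P ψ univ (a • s + b • t) z := by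
  have hlim {u : T} (hu : u ∈ I) : Tendsto
      (fun r : ℝ => ∫⁻ z in Icc (-r) r, posHopfLax P ψ F u z) atTop
      (𝓝 (∫⁻ z, posHopfLax P ψ F u z)) :=
    (aecover_Icc tendsto_neg_atTop_atBot tendsto_id).lintegral_tendsto_of_countably_generated
      (lowerSemicontinuous_posHopfLax hP F hu).measurable.aemeasurable
  have hF : ∀ᶠ r : ℝ in atTop, ∀ x ∈ F, x ∈ Icc (-r) r := by
    refine F.eventually_all.2 fun x _ => (eventually_ge_atTop |x|).mono fun r hr => abs_le.1 hr
  have hsmul {u : T} (hu : u ∈ I) (c : ℝ≥0) :=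
    ENNReal.Tendsto.const_mul (hlim hu) (.inr (ENNReal.coe_ne_top (r := c)))
  refine le_of_tendsto ((hsmul hs a).add (hsmul ht b)) ?_
  filter_upwards [hF, eventually_ge_atTop 0] with r hFr hr
  exact (setLIntegral_posHopfLax_concave hP hP₀ hψ (neg_le_self hr) hFr hs ht hab).trans
    (setLIntegral_le_lintegral _ _)

theorem concaveOn_lintegral_posHopfLax (hP : ConvexOn ℝ (I ×ˢ univ) P)
    (hP₀ : ∀ t ∈ I, P (t, 0) = 0) (hψ : ∀ x, 0 ≤ ψ x) :
    ConcaveOn ℝ≥0 I fun t => ∫⁻ z, posHopfLax P ψ univ t z := by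
  refine ⟨fun s hs t ht a b ha hb hab =>
    convex_of_convexOn_prod_univ hP hs ht ha hb (congrArg NNReal.toReal hab),
    fun s hs t ht a b _ _ hab => ?_⟩
  have hmono (u : T) (c : ℝ≥0) :
      Monotone fun F : Finset ℝ => c • ∫⁻ z, posHopfLax P ψ F u z := fun F G hFG => by
    dsimp only
    gcongr
    exact posHopfLax_mono_set (Finset.coe_subset.2 hFG) _ _
  simp only [lintegral_posHopfLax_univ hP hs, lintegral_posHopfLax_univ hP ht, ENNReal.smul_iSup]
  rw [ENNReal.iSup_add_iSup_of_monotone (hmono s a) (hmono t b)]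
  exact iSup_le fun F => lintegral_posHopfLax_finset_concave hP hP₀ hψ F hs ht hab

theorem concaveOn_lintegral_posHopfLax_of_nonneg
    (hP : ConvexOn ℝ (I ×ˢ univ) P) (hP_nonneg : ∀ t ∈ I, ∀ y, 0 ≤ P (t, y))
    (hP₀ : ∀ t ∈ I, P (t, 0) = 0) (ψ : ℝ → ℝ) (D : Set ℝ) :
    ConcaveOn ℝ≥0 I fun t => ∫⁻ z, posHopfLax P ψ D t z :=
  (concaveOn_lintegral_posHopfLax hP hP₀ (ψ := D.indicator fun x => max (ψ x) 0)
    (indicator_nonneg fun _ _ => le_max_right _ _)).congr fun t ht =>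
      lintegral_congr fun z => (posHopfLax_eq_univ (hP_nonneg t ht) ψ D z).symm

end PosHopfLax

/-! ### Negative powers as mixtures of truncations -/

theorem concaveOn_lintegral {α E : Type*} [MeasurableSpace α] {μ : Measure α} [AddCommMonoid E]
    [Module ℝ≥0 E] {s : Set E} {g : α → E → ℝ≥0∞} (hs : Convex ℝ≥0 s)
    (hg : ∀ᵐ r ∂μ, ConcaveOn ℝ≥0 s (g r)) : ConcaveOn ℝ≥0 s fun q => ∫⁻ r, g r q ∂μ := by
  refine ⟨hs, fun q₁ hq₁ q₂ hq₂ a b ha hb hab => ?_⟩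
  calc a • (∫⁻ r, g r q₁ ∂μ) + b • (∫⁻ r, g r q₂ ∂μ)
      = (∫⁻ r, a • g r q₁ ∂μ) + ∫⁻ r, b • g r q₂ ∂μ := by
        simp only [ENNReal.smul_def, smul_eq_mul, lintegral_const_mul' _ _ ENNReal.coe_ne_top]
    _ ≤ ∫⁻ r, a • g r q₁ + b • g r q₂ ∂μ := le_lintegral_add _ _
    _ ≤ ∫⁻ r, g r (a • q₁ + b • q₂) ∂μ := by
        refine lintegral_mono_ae ?_
        filter_upwards [hg] with r hr using hr.2 hq₁ hq₂ ha hb hab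

section RpowMixture

variable {k u : ℝ}

theorem rpow_mul_sub_eqOn (k : ℝ) (hu : 0 < u) :
    EqOn (fun R => R ^ (-k - 1) - u * R ^ (-k - 2)) (fun R => R ^ (-k - 2) * (R - u)) (Ioi u) := by
  intro R hR
  have hpow : R ^ (-k - 1) = R ^ (-k - 2) * R := by
    rw [← Real.rpow_add_one (hu.trans hR).ne']
    ring_nf
  dsimp only
  rw [hpow]
  ring

theorem integrableOn_Ioi_rpow_mul_sub (hk : 0 < k) (hu : 0 < u) :
    IntegrableOn (fun R => R ^ (-k - 2) * (R - u)) (Ioi u) :=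
  ((integrableOn_Ioi_rpow_of_lt (by linarith) hu).sub
    ((integrableOn_Ioi_rpow_of_lt (by linarith) hu).const_mul u)).congr_fun
      (rpow_mul_sub_eqOn k hu) measurableSet_Ioi

theorem integral_Ioi_rpow_mul_sub (hk : 0 < k) (hu : 0 < u) :
    ∫ R in Ioi u, R ^ (-k - 2) * (R - u) = u ^ (-k) / (k * (k + 1)) := by
  rw [← setIntegral_congr_fun measurableSet_Ioi (rpow_mul_sub_eqOn k hu),
    integral_sub (integrableOn_Ioi_rpow_of_lt (by linarith) hu)
      ((integrableOn_Ioi_rpow_of_lt (by linarith) hu).const_mul u),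
    integral_const_mul, integral_Ioi_rpow_of_lt (by linarith) hu,
    integral_Ioi_rpow_of_lt (by linarith) hu,
    show -k - 1 + 1 = -k by ring, show -k - 2 + 1 = -k - 1 by ring, Real.rpow_sub_one hu.ne']
  have : -k - 1 ≠ 0 := by linarith
  have : k + 1 ≠ 0 := by positivity
  field_simp
  ring

/-- The mixing measure for which `u ^ (-k)` is the average of the truncations `(R - u)₊`; its
density is the second derivative of `R ^ (-k)`. -/
noncomputable def rpowMixture (k : ℝ) : Measure ℝ :=
  (volume.restrict (Ioi 0)).withDensity fun R => ENNReal.ofReal (k * (k + 1) * R ^ (-k - 2))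

instance (k : ℝ) : SFinite (rpowMixture k) := by unfold rpowMixture; infer_instance

theorem lintegral_ofReal_sub_rpowMixture (hk : 0 < k) (hu : 0 < u) :
    ∫⁻ R, ENNReal.ofReal (R - u) ∂rpowMixture k = ENNReal.ofReal (u ^ (-k)) := by
  set w : ℝ → ℝ≥0∞ := fun R => ENNReal.ofReal (k * (k + 1) * R ^ (-k - 2))
  have hsupp : Function.support (fun R => w R * ENNReal.ofReal (R - u)) ⊆ Ioi u := by
    intro R hR
    simpa using right_ne_zero_of_mul hR
  have hsub : Ioi u ⊆ Ioi 0 := Ioi_subset_Ioi hu.le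
  calc ∫⁻ R, ENNReal.ofReal (R - u) ∂rpowMixture k
      = ∫⁻ R in Ioi 0, w R * ENNReal.ofReal (R - u) :=
        lintegral_withDensity_eq_lintegral_mul _ (by fun_prop) (by fun_prop)
    _ = ∫⁻ R in Ioi u, w R * ENNReal.ofReal (R - u) := by
      rw [← setLIntegral_eq_of_support_subset hsupp, Measure.restrict_restrict_of_subset hsub]
    _ = ∫⁻ R in Ioi u, ENNReal.ofReal (k * (k + 1) * (R ^ (-k - 2) * (R - u))) := by
      refine setLIntegral_congr_fun measurableSet_Ioi fun R hR => ?_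
      have hR₀ : 0 < R := hsub hR
      rw [← mul_assoc, ENNReal.ofReal_mul]
      positivity
    _ = ENNReal.ofReal (∫ R in Ioi u, k * (k + 1) * (R ^ (-k - 2) * (R - u))) := by
      refine (ofReal_integral_eq_lintegral_ofReal
        ((integrableOn_Ioi_rpow_mul_sub hk hu).const_mul _)
        (ae_restrict_of_forall_mem measurableSet_Ioi fun R hR => ?_)).symm
      have h₀ : 0 < R := hsub hR
      have h₁ : 0 ≤ R - u := sub_nonneg.2 (le_of_lt hR)
      positivity
    _ = ENNReal.ofReal (u ^ (-k)) := by
      rw [integral_const_mul, integral_Ioi_rpow_mul_sub hk hu, mul_div_cancel₀]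
      positivity

end RpowMixture

/-! ### The `γ`-Hopf–Lax transform -/

/-- The perspective of `V`: the cost `t * V (y / t)` of a displacement `y` in time `t` at constant
velocity, as a function of `(t, y)`. It is only meaningful for `0 < t`. -/
noncomputable def perspective (V : ℝ → ℝ) (q : ℝ × ℝ) : ℝ :=
  q.1 * V (q.2 / q.1)

section Perspective

variable {V : ℝ → ℝ}

theorem convexOn_perspective (hV : ConvexOn ℝ univ V) :
    ConvexOn ℝ (Ioi 0 ×ˢ univ) (perspective V) := by
  refine ⟨(convex_Ioi 0).prod convex_univ, ?_⟩
  rintro ⟨s, y⟩ ⟨hs : 0 < s, -⟩ ⟨t, z⟩ ⟨ht : 0 < t, -⟩ a b ha hb hab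
  have hst : 0 < a * s + b * t := convex_Ioi (𝕜 := ℝ) (0 : ℝ) hs ht ha hb hab
  have hJensen := hV.2 (mem_univ (y / s)) (mem_univ (z / t))
    (show 0 ≤ a * s / (a * s + b * t) by positivity)
    (show 0 ≤ b * t / (a * s + b * t) by positivity) (by field_simp)
  calc (a * s + b * t) * V ((a * y + b * z) / (a * s + b * t))
      = (a * s + b * t) *
          V ((a * s / (a * s + b * t)) • (y / s) + (b * t / (a * s + b * t)) • (z / t)) := by
        congr 2
        simp only [smul_eq_mul]
        field_simp
    _ ≤ (a * s + b * t) *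
          ((a * s / (a * s + b * t)) • V (y / s) + (b * t / (a * s + b * t)) • V (z / t)) := by
        gcongr
    _ = a * (s * V (y / s)) + b * (t * V (z / t)) := by
        simp only [smul_eq_mul]
        field_simp

theorem perspective_nonneg (hV : ∀ y, 0 ≤ V y) {t : ℝ} (ht : 0 ≤ t) (y : ℝ) :
    0 ≤ perspective V (t, y) :=
  mul_nonneg ht (hV _)

theorem perspective_mul_right (V : ℝ → ℝ) {t : ℝ} (ht : t ≠ 0) (y : ℝ) :
    perspective V (t, t * y) = t * V y := by
  simp [perspective, ht]

theorem continuous_perspective_right (hV : Continuous V) (t : ℝ) :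
    Continuous fun y => perspective V (t, y) :=
  continuous_const.mul (hV.comp (continuous_id.div_const t))

end Perspective

/-- The value at `z` of the `γ`-Hopf–Lax transform of `f` along the straight path from `x`, i.e.
with velocity `y = (z - x) / t`. Only the points with `0 < f x` are relevant. -/
noncomputable def hopfLaxValue (γ : ℝ) (V f : ℝ → ℝ) (t z x : ℝ) : ℝ :=
  (f x ^ γ + perspective V (t, z - x)) ^ γ⁻¹

section HopfLaxValue

variable {γ : ℝ} {V f : ℝ → ℝ} {t x : ℝ}

theorem rpow_add_perspective_pos (γ : ℝ) (hV : ∀ y, 0 ≤ V y) (ht : 0 ≤ t) (hx : 0 < f x) (y : ℝ) :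
    0 < f x ^ γ + perspective V (t, y) :=
  add_pos_of_pos_of_nonneg (Real.rpow_pos_of_pos hx γ) (perspective_nonneg hV ht y)

theorem hopfLaxValue_pos (γ : ℝ) (hV : ∀ y, 0 ≤ V y) (ht : 0 ≤ t) (z : ℝ) (hx : 0 < f x) :
    0 < hopfLaxValue γ V f t z x :=
  Real.rpow_pos_of_pos (rpow_add_perspective_pos γ hV ht hx _) _

theorem hopfLaxValue_rpow (hγ : γ ≠ 0) (hV : ∀ y, 0 ≤ V y) (ht : 0 ≤ t) (z : ℝ) (hx : 0 < f x) :
    hopfLaxValue γ V f t z x ^ γ = f x ^ γ + perspective V (t, z - x) :=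
  Real.rpow_inv_rpow (rpow_add_perspective_pos γ hV ht hx _).le hγ

theorem hopfLaxValue_le (hγ : γ < 0) (hV : ∀ y, 0 ≤ V y) (ht : 0 ≤ t) (z : ℝ) (hx : 0 < f x) :
    hopfLaxValue γ V f t z x ≤ f x := by
  rw [← Real.rpow_le_rpow_iff_of_neg hx (hopfLaxValue_pos γ hV ht z hx) hγ,
    hopfLaxValue_rpow hγ.ne hV ht z hx]
  exact le_add_of_nonneg_right (perspective_nonneg hV ht _)

theorem continuousOn_hopfLaxValue (γ : ℝ) (hV : Continuous V) (hV₀ : ∀ y, 0 ≤ V y)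
    (hf : Continuous f) (ht : 0 ≤ t) (z : ℝ) :
    ContinuousOn (hopfLaxValue γ V f t z) {x | 0 < f x} := by
  have hcost : Continuous fun x => perspective V (t, z - x) :=
    (continuous_perspective_right hV t).comp (continuous_sub_left z)
  exact ((hf.continuousOn.rpow_const fun x hx => .inl (ne_of_gt hx)).add
    hcost.continuousOn).rpow_const fun x hx =>
      .inl (rpow_add_perspective_pos γ hV₀ ht hx (z - x)).ne'

theorem hopfLaxValue_image_inter_compl_singleton (γ : ℝ) (V f : ℝ → ℝ) (ht : t ≠ 0) (z : ℝ) :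
    hopfLaxValue γ V f t z '' ({x | 0 < f x} ∩ {z}ᶜ) = {v | ∃ x y : ℝ, z = x + t * y ∧
      0 < f x ∧ y ≠ 0 ∧ v = (f x ^ γ + t * V y) ^ γ⁻¹} := by
  ext v
  constructor
  · rintro ⟨x, ⟨hx, hxz : x ≠ z⟩, rfl⟩
    exact ⟨x, (z - x) / t, by field_simp; ring, hx, div_ne_zero (sub_ne_zero.2 hxz.symm) ht, rfl⟩
  · rintro ⟨x, y, rfl, hx, hy, rfl⟩
    refine ⟨x, ⟨hx, by simp [ht, hy]⟩, ?_⟩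
    rw [hopfLaxValue, add_sub_cancel_left, perspective_mul_right V ht]

theorem isLUB_hopfLaxValue_sSup (hγ : γ < 0) (hV : Continuous V) (hV₀ : ∀ y, 0 ≤ V y)
    (hf : Continuous f) (hfb : BddAbove (range f)) (hne : ∃ x, 0 < f x) (ht : 0 < t) (z : ℝ) :
    IsLUB (hopfLaxValue γ V f t z '' {x | 0 < f x}) (sSup {v | ∃ x y : ℝ, z = x + t * y ∧
      0 < f x ∧ y ≠ 0 ∧ v = (f x ^ γ + t * V y) ^ γ⁻¹}) := by
  have hopen : IsOpen {x | 0 < f x} := isOpen_lt continuous_const hf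
  have hdense := (dense_compl_singleton z).open_subset_closure_inter hopen
  have hnonempty := (dense_compl_singleton z).inter_open_nonempty _ hopen hne
  obtain ⟨M, hM⟩ := hfb
  have hbdd : BddAbove (hopfLaxValue γ V f t z '' ({x | 0 < f x} ∩ {z}ᶜ)) := by
    refine ⟨M, ?_⟩
    rintro _ ⟨x, ⟨hx, -⟩, rfl⟩
    exact (hopfLaxValue_le hγ hV₀ ht.le z hx).trans (hM (mem_range_self x))
  rw [← hopfLaxValue_image_inter_compl_singleton γ V f ht.ne']
  refine (isLUB_iff_of_subset_of_subset_closure (image_mono inter_subset_left) ?_).1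
    (isLUB_csSup (hnonempty.image _) hbdd)
  rintro _ ⟨x, hx, rfl⟩
  exact mem_closure_image ((continuousOn_hopfLaxValue γ hV hV₀ hf ht.le z).continuousAt
    (hopen.mem_nhds hx)) (hdense hx)

theorem pos_of_isLUB_hopfLaxValue {z m : ℝ} (hV : ∀ y, 0 ≤ V y) (ht : 0 ≤ t)
    (hm : IsLUB (hopfLaxValue γ V f t z '' {x | 0 < f x}) m) : 0 < m := by
  obtain ⟨_, x, hx, rfl⟩ := hm.nonempty
  exact (hopfLaxValue_pos γ hV ht z hx).trans_le (hm.1 ⟨x, hx, rfl⟩)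

theorem ofReal_sub_rpow_eq_posHopfLax {z m : ℝ} (hγ : γ < 0) (hV : ∀ y, 0 ≤ V y) (ht : 0 ≤ t)
    (hm : IsLUB (hopfLaxValue γ V f t z '' {x | 0 < f x}) m) (R : ℝ) :
    ENNReal.ofReal (R - m ^ γ) =
      posHopfLax (perspective V) (fun x => R - f x ^ γ) {x | 0 < f x} t z := by
  have hmono : MonotoneOn (fun v : ℝ => ENNReal.ofReal (R - v ^ γ))
      (hopfLaxValue γ V f t z '' {x | 0 < f x}) := by
    rintro _ ⟨x, hx, rfl⟩ w - hvw
    exact ENNReal.ofReal_le_ofReal (sub_le_sub_left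
      (Real.rpow_le_rpow_of_nonpos (hopfLaxValue_pos γ hV ht z hx) hvw hγ.le) R)
  have hcont : ContinuousAt (fun v : ℝ => ENNReal.ofReal (R - v ^ γ)) m :=
    ENNReal.continuous_ofReal.continuousAt.comp (continuousAt_const.sub
      (Real.continuousAt_rpow_const m γ (.inl (pos_of_isLUB_hopfLaxValue hV ht hm).ne')))
  have hlub := hm.isLUB_of_tendsto hmono hm.nonempty hcont.continuousWithinAt
  simp only [image_image] at hlub
  rw [posHopfLax, ← hlub.sSup_eq, sSup_image]
  refine biSup_congr fun x hx => ?_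
  rw [hopfLaxValue_rpow hγ.ne hV ht z hx, sub_sub]

end HopfLaxValue

theorem ofReal_integral_eq_lintegral_posHopfLax {γ : ℝ} (hγ : γ < 0) {V : ℝ → ℝ}
    (hV : ∀ y, 0 ≤ V y) {f g : ℝ → ℝ} {t : ℝ} (ht : 0 ≤ t)
    (hg : ∀ z, IsLUB (hopfLaxValue γ V f t z '' {x | 0 < f x}) (g z)) (hint : Integrable g) :
    ENNReal.ofReal (∫ z, g z) = ∫⁻ R, (∫⁻ z,
      posHopfLax (perspective V) (fun x => R - f x ^ γ) {x | 0 < f x} t z) ∂rpowMixture (-γ⁻¹) := by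
  have hg₀ (z : ℝ) : 0 < g z := pos_of_isLUB_hopfLaxValue hV ht (hg z)
  have hmeas : AEMeasurable (fun q : ℝ × ℝ => ENNReal.ofReal (q.2 - g q.1 ^ γ))
      (volume.prod (rpowMixture (-γ⁻¹))) :=
    (measurable_snd.aemeasurable.sub (hint.aemeasurable.comp_fst.pow_const γ)).ennreal_ofReal
  calc ENNReal.ofReal (∫ z, g z)
      = ∫⁻ z, ENNReal.ofReal (g z) :=
        ofReal_integral_eq_lintegral_ofReal hint (ae_of_all _ fun z => (hg₀ z).le)
    _ = ∫⁻ z, (∫⁻ R, ENNReal.ofReal (R - g z ^ γ) ∂rpowMixture (-γ⁻¹)) := by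
      refine lintegral_congr fun z => ?_
      rw [lintegral_ofReal_sub_rpowMixture (neg_pos.2 (inv_lt_zero.2 hγ))
        (Real.rpow_pos_of_pos (hg₀ z) γ), neg_neg, Real.rpow_rpow_inv (hg₀ z).le hγ.ne]
    _ = ∫⁻ R, (∫⁻ z, ENNReal.ofReal (R - g z ^ γ)) ∂rpowMixture (-γ⁻¹) :=
      lintegral_lintegral_swap hmeas
    _ = _ := by simp only [ofReal_sub_rpow_eq_posHopfLax hγ hV ht (hg _)]

theorem concaveOn_integral_of_isLUB_hopfLaxValue {γ : ℝ} (hγ : γ < 0) {V : ℝ → ℝ}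
    (hV : ConvexOn ℝ univ V) (hV_nonneg : ∀ y, 0 ≤ V y) (hV_zero : V 0 = 0) {f : ℝ → ℝ}
    {h : ℝ → ℝ → ℝ}
    (hh : ∀ t, 0 < t → ∀ z, IsLUB (hopfLaxValue γ V f t z '' {x | 0 < f x}) (h t z))
    (hint : ∀ t, 0 < t → Integrable (h t)) :
    ConcaveOn ℝ (Ioi 0) fun t => ∫ z, h t z := by
  refine concaveOn_of_concaveOn_ofReal (convex_Ioi 0) (fun t ht => integral_nonneg fun z =>
    (pos_of_isLUB_hopfLaxValue hV_nonneg ht.le (hh t ht z)).le) ?_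
  refine (concaveOn_lintegral (convex_Ioi 0) (ae_of_all (rpowMixture (-γ⁻¹)) fun R =>
    concaveOn_lintegral_posHopfLax_of_nonneg (convexOn_perspective hV)
      (fun t ht => perspective_nonneg hV_nonneg (le_of_lt ht)) (fun t _ => ?_)
      (fun x => R - f x ^ γ) {x | 0 < f x})).congr fun t ht =>
        (ofReal_integral_eq_lintegral_posHopfLax hγ hV_nonneg (le_of_lt ht) (hh t ht)
          (hint t ht)).symm
  simp [perspective, hV_zero]

theorem convexOn_abs_rpow_div {p : ℝ} (hp : 1 ≤ p) :
    ConvexOn ℝ univ fun y : ℝ => |y| ^ p / p := by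
  have hp₀ : 0 ≤ p := zero_le_one.trans hp
  have habs : (fun y : ℝ => |y|) '' univ = Ici 0 := by
    ext y
    exact ⟨by rintro ⟨x, -, rfl⟩; exact abs_nonneg x, fun hy => ⟨y, trivial, abs_of_nonneg hy⟩⟩
  have h : ConvexOn ℝ univ fun y : ℝ => |y| ^ p :=
    ConvexOn.comp (habs ▸ convexOn_rpow hp) convexOn_univ_norm
      (habs ▸ Real.monotoneOn_rpow_Ici_of_exponent_nonneg hp₀)
  exact (h.smul (inv_nonneg.2 hp₀)).congr fun y _ => by simp [div_eq_inv_mul]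

theorem hopf_lax_integral_concave_gamma_neg_general {γ : ℝ} (hγ : γ < 0) {V : ℝ → ℝ}
    (hV : ConvexOn ℝ univ V) (hV_nonneg : ∀ y, 0 ≤ V y) (hV_zero : V 0 = 0) {f : ℝ → ℝ}
    (hf : Continuous f) (hfb : BddAbove (range f)) (hfne : ∃ x, 0 < f x) {h : ℝ → ℝ → ℝ}
    (hh : ∀ t, 0 < t → ∀ z, h t z = sSup {v : ℝ | ∃ x y : ℝ, z = x + t * y ∧
      0 < f x ∧ y ≠ 0 ∧ v = (f x ^ γ + t * V y) ^ (1 / γ)})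
    (hint : ∀ t, 0 < t → Integrable (h t)) :
    ConcaveOn ℝ (Ioi 0) fun t => ∫ z, h t z := by
  have hVc : Continuous V := continuousOn_univ.1 (hV.continuousOn isOpen_univ)
  refine concaveOn_integral_of_isLUB_hopfLaxValue hγ hV hV_nonneg hV_zero (f := f)
    (fun t ht z => ?_) hint
  simpa only [hh t ht z, one_div] using isLUB_hopfLaxValue_sSup hγ hVc hV_nonneg hf hfb hfne ht z

/-- Theorem B, case γ < 0: concavity in time of the integral of the
γ-Hopf-Lax supremal convolution with kinetic cost `|y|^p/p`. -/
theorem hopf_lax_integral_concave_gamma_neg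
    (γ : ℝ) (hγ : γ ∈ Ioo (-1 : ℝ) 0) (p : ℝ) (hp : 1 ≤ p)
    (f : ℝ → ℝ) (hf0 : ∀ x, 0 ≤ f x) (hfb : ∃ M, ∀ x, f x ≤ M)
    (hflip : ∃ K, LipschitzWith K f) (hfne : ∃ x, 0 < f x)
    (h : ℝ → ℝ → ℝ)
    (hh : ∀ t, 0 < t → ∀ z, h t z = sSup {v : ℝ | ∃ x y : ℝ, z = x + t * y ∧
      0 < f x ∧ y ≠ 0 ∧ v = (f x ^ γ + t * (|y| ^ p / p)) ^ (1 / γ)})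
    (hint : ∀ t, 0 < t → Integrable (h t))
    (F : ℝ → ℝ) (hF : ∀ t, F t = ∫ z, h t z) :
    ConcaveOn ℝ (Ioi 0) F := by
  obtain ⟨M, hM⟩ := hfb
  exact funext hF ▸ hopf_lax_integral_concave_gamma_neg_general hγ.2 (convexOn_abs_rpow_div hp)
    (fun y => by positivity) (by simp [(one_pos.trans_le hp).ne']) hflip.choose_spec.continuous
    ⟨M, forall_mem_range.2 hM⟩ hfne hh hint
end

section
/- Let p ≥ 1. Let f : ℝ → [0,∞) be a bounded Lipschitz continuous function, not identically zero. For t > 0 define h_t(z) = sup{f(x)·exp(-t·|y|^p/p) : x, y ∈ ℝ, z = x + t·y}, and assume that for each t > 0 the function h_t is Lebesgue-measurable and Lebesgue-integrable on ℝ. Then the function F(t) = ∫_ℝ h_t(z) dz is concave on (0,∞). -/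
open MeasureTheory Set

/-!
Compare the times `t`, `t + a` and `t + a + b`. For `f` restricted to a compact interval, every
end point at time `t + a + b` is reached along an optimal line, and the optimal starting point is a
monotone function of the end point. At its jumps the starting point is made to sweep the gap, so
that the lines are labelled by their position `m ∈ ℝ` at time `t + a`, and the masses at the other
two times become integrals over `m`.

The integrands do not compare pointwise, because the speed at which the end point moves is not
controlled. Adding the total derivative of the value at the end point times a suitable function of
the velocity repairs this: where the end point moves, differentiating the optimality relation
produces a subgradient of the cost, and convexity gives the pointwise bound; where it stands still,
the semigroup inequality suffices. The added term vanishes with the velocity and has its sign, so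
its boundary values are favourable. Exhausting `ℝ` by compact intervals gives the theorem.
-/

open Filter Topology

section RealFunctions

lemma hasDerivAt_primitive {g : ℝ → ℝ} (hg : Continuous g) (x : ℝ) :
    HasDerivAt (fun s ↦ ∫ v in (0 : ℝ)..s, g v) (g x) x :=
  intervalIntegral.integral_hasDerivAt_right (hg.intervalIntegrable _ _)
    (hg.stronglyMeasurableAtFilter _ _) hg.continuousAt

lemma locallyLipschitz_primitive {g : ℝ → ℝ} (hg : Continuous g) :
    LocallyLipschitz fun s ↦ ∫ v in (0 : ℝ)..s, g v := by
  refine ContDiff.locallyLipschitz (𝕂 := ℝ) (contDiff_one_iff_deriv.2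
    ⟨fun y ↦ (hasDerivAt_primitive hg y).differentiableAt, ?_⟩)
  rwa [funext fun y ↦ (hasDerivAt_primitive hg y).deriv]

lemma lipschitzWith_of_monotone_of_monotone_sub {φ : ℝ → ℝ} {c : NNReal} (hφ : Monotone φ)
    (h : Monotone fun m ↦ c * m - φ m) : LipschitzWith c φ := by
  refine LipschitzWith.of_le_add_mul c fun m m' ↦ ?_
  rcases le_total m m' with hm | hm
  · exact (hφ hm).trans (le_add_of_nonneg_right (by positivity))
  · have := h hm
    rw [Real.dist_eq, abs_of_nonneg (sub_nonneg.2 hm)]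
    simp only at this
    linarith

lemma hasDerivAt_comp_zero_of_locallyLipschitz {B ζ : ℝ → ℝ} {m : ℝ} (hB : LocallyLipschitz B)
    (hζ : HasDerivAt ζ 0 m) : HasDerivAt (fun s ↦ B (ζ s)) 0 m := by
  obtain ⟨C, u, hu, hC⟩ := hB (ζ m)
  have hcont : ContinuousAt ζ m := hζ.continuousAt
  rw [hasDerivAt_iff_isLittleO] at hζ ⊢
  simp only [smul_zero, sub_zero] at hζ ⊢
  refine Asymptotics.IsBigO.trans_isLittleO (Asymptotics.IsBigO.of_bound C ?_) hζ
  filter_upwards [hcont hu] with s hs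
  simpa [dist_eq_norm] using hC.dist_le_mul _ hs _ (mem_of_mem_nhds hu)

lemma absolutelyContinuousOnInterval_of_locallyLipschitz {φ : ℝ → ℝ} (hφ : LocallyLipschitz φ)
    (c d : ℝ) : AbsolutelyContinuousOnInterval φ c d := by
  obtain ⟨C, hC⟩ := (hφ.locallyLipschitzOn (s := uIcc c d)).exists_lipschitzOnWith_of_compact
    isCompact_uIcc
  exact hC.absolutelyContinuousOnInterval

lemma ae_differentiableAt_of_locallyLipschitz {φ : ℝ → ℝ} (hφ : LocallyLipschitz φ) :
    ∀ᵐ m, DifferentiableAt ℝ φ m := by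
  have h (n : ℕ) : ∀ᵐ m, m ∈ uIcc (-(n : ℝ)) n → DifferentiableAt ℝ φ m :=
    (absolutelyContinuousOnInterval_of_locallyLipschitz hφ _ _).ae_differentiableAt
  filter_upwards [ae_all_iff.2 h] with m hm
  obtain ⟨n, hn⟩ := exists_nat_ge |m|
  exact hm n (Icc_subset_uIcc (abs_le.1 hn))

lemma sub_le_integral_of_locallyLipschitz {φ h : ℝ → ℝ} {c d : ℝ} (hcd : c ≤ d)
    (hφ : LocallyLipschitz φ) (hh : IntervalIntegrable h volume c d)
    (hle : ∀ᵐ m, deriv φ m ≤ h m) : φ d - φ c ≤ ∫ m in c..d, h m := by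
  have hac := absolutelyContinuousOnInterval_of_locallyLipschitz hφ c d
  rw [← hac.integral_deriv_eq_sub]
  exact intervalIntegral.integral_mono_ae hcd hac.intervalIntegrable_deriv hh hle

lemma concaveOn_of_tendsto {E ι : Type*} [AddCommGroup E] [Module ℝ E] {s : Set E} {l : Filter ι}
    [l.NeBot] {F : ι → E → ℝ} {G : E → ℝ} (hF : ∀ᶠ n in l, ConcaveOn ℝ s (F n))
    (hlim : ∀ x ∈ s, Tendsto (fun n ↦ F n x) l (𝓝 (G x))) : ConcaveOn ℝ s G := by
  obtain ⟨_, hn⟩ := hF.exists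
  refine ⟨hn.1, fun x hx y hy α β hα hβ hαβ ↦ ?_⟩
  refine le_of_tendsto_of_tendsto
    (((hlim x hx).const_smul α).add ((hlim y hy).const_smul β))
    (hlim _ (hn.1 hx hy hα hβ hαβ)) ?_
  filter_upwards [hF] with n hn
  exact hn.2 hx hy hα hβ hαβ

end RealFunctions

section CompletedGraph

variable {G ζ : ℝ → ℝ} {μ : ℝ}

lemma rightAdjoint_apply_apply (hG : StrictMono G) (hζ : IsOrderRightAdjoint G ζ) (z : ℝ) :
    ζ (G z) = z := by
  have h : {x | G x ≤ G z} = Iic z := by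
    ext x
    exact hG.le_iff_le
  exact (hζ (G z)).unique (h ▸ isLUB_Iic)

lemma monotone_sub_mul_rightAdjoint (hG : Monotone fun z ↦ G z - μ * z) (hμ : 0 < μ)
    (hζ : IsOrderRightAdjoint G ζ) : Monotone fun m ↦ m - μ * ζ m := by
  intro m m' hm
  have hδ : 0 ≤ (m' - m) / μ := div_nonneg (sub_nonneg.2 hm) hμ.le
  have hle : ζ m' ≤ ζ m + (m' - m) / μ := by
    refine (hζ m').2 fun z (hz : G z ≤ m') ↦ sub_le_iff_le_add.1 ((hζ m).1 ?_)
    have h := hG (sub_le_self z hδ)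
    have hcancel : μ * ((m' - m) / μ) = m' - m := by field_simp
    simp only [mem_ofPred_eq, mul_sub, hcancel] at h ⊢
    linarith
  rw [← sub_le_iff_le_add', le_div_iff₀ hμ] at hle
  simp only
  linarith

lemma mem_closure_range_of_deriv_rightAdjoint_ne_zero (hζ : IsOrderRightAdjoint G ζ) {m : ℝ}
    (hm : deriv ζ m ≠ 0) : m ∈ closure (range G) := by
  by_contra hm_gap
  obtain ⟨ε, hε, hgap⟩ := Metric.isOpen_iff.1 isClosed_closure.isOpen_compl m hm_gap
  have hgap' (z : ℝ) : G z ≤ m - ε ∨ m + ε ≤ G z := by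
    by_contra! h
    exact hgap (by rwa [Real.ball_eq_Ioo]) (subset_closure (mem_range_self z))
  have hsublevel : ∀ m' ∈ Ioo (m - ε) (m + ε), {z | G z ≤ m'} = {z | G z ≤ m} := by
    intro m' hm'
    ext z
    simp only [mem_ofPred_eq]
    rcases hgap' z with h | h
    · exact iff_of_true (h.trans hm'.1.le) (by linarith)
    · exact iff_of_false (by linarith [hm'.2]) (by linarith)
  have hconst : ζ =ᶠ[𝓝 m] fun _ ↦ ζ m := by
    filter_upwards [Ioo_mem_nhds (sub_lt_self m hε) (lt_add_of_pos_right m hε)] with m' hm'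
    exact (hζ m').unique (hsublevel m' hm' ▸ hζ m)
  exact hm (by rw [hconst.deriv_eq, deriv_const])

lemma exists_le_and_exists_ge_of_monotone_sub (hG : Monotone fun z ↦ G z - μ * z) (hμ : 0 < μ)
    (m : ℝ) : (∃ z, G z ≤ m) ∧ ∃ z, m ≤ G z := by
  have hcancel : μ * ((m - G 0) / μ) = m - G 0 := by field_simp
  refine ⟨⟨min 0 ((m - G 0) / μ), ?_⟩, max 0 ((m - G 0) / μ), ?_⟩
  · have h₁ := hG (min_le_left 0 ((m - G 0) / μ))
    have h₂ := mul_le_mul_of_nonneg_left (min_le_right 0 ((m - G 0) / μ)) hμ.le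
    simp only at h₁
    linarith
  · have h₁ := hG (le_max_left 0 ((m - G 0) / μ))
    have h₂ := mul_le_mul_of_nonneg_left (le_max_right 0 ((m - G 0) / μ)) hμ.le
    simp only at h₁
    linarith

/-- `(ζ, ξ)` parametrizes the completed graph of `X`: at a jump of `X`, `ζ` stands still while `ξ`
sweeps the gap. -/
lemma exists_completedGraph {X : ℝ → ℝ} (hX : Monotone X) {S : Set ℝ} (hS : S.OrdConnected)
    (hXS : ∀ z, X z ∈ S) (hμ₀ : 0 < μ) (hμ₁ : μ < 1) :
    ∃ ζ ξ : ℝ → ℝ, Monotone ζ ∧ Monotone ξ ∧ (∀ m, ξ m ∈ S) ∧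
      (∀ m, (1 - μ) * ξ m + μ * ζ m = m) ∧
      ∀ m, deriv ζ m ≠ 0 → (ζ m, ξ m) ∈ closure (range fun s ↦ (s, X s)) := by
  have hν : 0 < 1 - μ := sub_pos.2 hμ₁
  set G : ℝ → ℝ := fun z ↦ (1 - μ) * X z + μ * z with hG_def
  have hG : Monotone fun z ↦ G z - μ * z := by
    simpa [hG_def] using hX.const_mul hν.le
  have hG_strict : StrictMono G := by
    simpa using hG.add_strictMono (strictMono_mul_left_of_pos hμ₀)
  have hG_unbounded := exists_le_and_exists_ge_of_monotone_sub hG hμ₀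
  obtain ⟨ζ, hζ⟩ : ∃ ζ, IsOrderRightAdjoint G ζ :=
    ⟨_, isOrderRightAdjoint_csSup G (fun m ↦ (hG_unbounded m).1) fun m ↦
      (hG_unbounded m).2.imp fun _ hz _ hz' ↦ hG_strict.le_iff_le.1 (le_trans hz' hz)⟩
  have hsub := monotone_sub_mul_rightAdjoint hG hμ₀ hζ
  have hζ_cont : Continuous ζ := by
    refine (lipschitzWith_of_monotone_of_monotone_sub (c := μ⁻¹.toNNReal) hζ.right_mono
      ?_).continuous
    have h := hsub.const_mul (inv_nonneg.2 hμ₀.le)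
    simpa [mul_sub, hμ₀.le, hμ₀.ne'] using h
  set ξ : ℝ → ℝ := fun m ↦ (m - μ * ζ m) / (1 - μ) with hξ_def
  have hξ_mono : Monotone ξ := fun m m' hm ↦ div_le_div_of_nonneg_right (hsub hm) hν.le
  have hζG (z : ℝ) : ζ (G z) = z := rightAdjoint_apply_apply hG_strict hζ z
  have hξG (z : ℝ) : ξ (G z) = X z := by
    simp only [hξ_def, hζG]
    simp [hG_def, hν.ne']
  refine ⟨ζ, ξ, hζ.right_mono, hξ_mono, fun m ↦ ?_, fun m ↦ ?_, fun m hm ↦ ?_⟩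
  · obtain ⟨⟨z, hz⟩, z', hz'⟩ := hG_unbounded m
    exact hS.out (hXS z) (hXS z') ⟨hξG z ▸ hξ_mono hz, hξG z' ▸ hξ_mono hz'⟩
  · simp only [hξ_def]
    field_simp
    ring
  · refine map_mem_closure (f := fun m ↦ (ζ m, ξ m)) (by fun_prop)
      (mem_closure_range_of_deriv_rightAdjoint_ne_zero hζ hm) ?_
    rintro _ ⟨z, rfl⟩
    exact ⟨z, by simp only [hζG, hξG]⟩

end CompletedGraph

section Subgradient

/-- `D` is a subgradient of `V` at `y`. It replaces `deriv V y` where `V` has a kink. -/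
def IsSubgradientAt (V : ℝ → ℝ) (y D : ℝ) : Prop :=
  ∀ w, V y + D * (w - y) ≤ V w

variable {V : ℝ → ℝ}

lemma IsSubgradientAt.comp_neg {y D : ℝ} (h : IsSubgradientAt V y D) :
    IsSubgradientAt (fun s ↦ V (-s)) (-y) (-D) := by
  intro w
  have := h (-w)
  simp only [neg_neg]
  linarith

lemma le_sub_of_le_comp_of_hasDerivAt {φ c : ℝ → ℝ} {x w φ' : ℝ} (hV : ConvexOn ℝ univ V)
    (hc : HasDerivAt c 1 0) (hc_zero : c 0 = 0) (hφ : HasDerivAt φ φ' 0)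
    (hle : ∀ ε, φ ε ≤ V (x + c ε * (w - x))) (heq : φ 0 = V x) : φ' ≤ V w - V x := by
  have hc_slope := hc.tendsto_slope_zero_right
  have hc_small : ∀ᶠ ε in 𝓝[>] (0 : ℝ), c ε < 1 :=
    nhdsWithin_le_nhds (hc.continuousAt.eventually_lt_const (by simp [hc_zero]))
  have hchord : ∀ᶠ ε in 𝓝[>] (0 : ℝ),
      ε⁻¹ • (φ (0 + ε) - φ 0) ≤ ε⁻¹ • (c (0 + ε) - c 0) * (V w - V x) := by
    filter_upwards [hc_small, hc_slope.eventually_const_lt one_pos, self_mem_nhdsWithin]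
      with ε hc₁ hc₀ hε
    simp only [hc_zero, zero_add, sub_zero, smul_eq_mul] at hc₀ ⊢
    have hcε : 0 < c ε := (pos_iff_pos_of_mul_pos hc₀).1 (inv_pos.2 hε)
    have hconv := hV.2 (mem_univ x) (mem_univ w) (sub_nonneg.2 hc₁.le) hcε.le
      (sub_add_cancel _ _)
    have hpoint : (1 - c ε) • x + c ε • w = x + c ε * (w - x) := by
      simp only [smul_eq_mul]
      ring
    rw [hpoint, smul_eq_mul, smul_eq_mul] at hconv
    rw [mul_assoc]
    refine mul_le_mul_of_nonneg_left ?_ (inv_pos.2 hε).le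
    linarith [hle ε]
  simpa using le_of_tendsto_of_tendsto hφ.tendsto_slope_zero_right
    (hc_slope.mul_const (V w - V x)) hchord

lemma isSubgradientAt_div_of_le_comp {φ u : ℝ → ℝ} {m φ' u' : ℝ} (hV : ConvexOn ℝ univ V)
    (hu : HasDerivAt u u' m) (hu₀ : u' ≠ 0) (hφ : HasDerivAt φ φ' m)
    (hle : ∀ s, φ s ≤ V (u s)) (heq : φ m = V (u m)) :
    IsSubgradientAt V (u m) (φ' / u') := by
  intro w
  rcases eq_or_ne w (u m) with rfl | hw
  · simp
  have hw₀ : w - u m ≠ 0 := sub_ne_zero.2 hw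
  -- Moving `m` with speed `k` moves `u` towards `w`, whichever side of `u m` the point `w` is on.
  obtain ⟨k, hk⟩ : ∃ k, w - u m = u' * k := ⟨(w - u m) / u', by field_simp⟩
  have hline : HasDerivAt (fun ε ↦ m + ε * k) k 0 := by
    simpa using ((hasDerivAt_id (0 : ℝ)).mul_const k).const_add m
  have hφ_line : HasDerivAt (fun ε ↦ φ (m + ε * k)) (φ' * k) 0 :=
    HasDerivAt.comp (0 : ℝ) (by simpa using hφ) hline
  have hc : HasDerivAt (fun ε ↦ (u (m + ε * k) - u m) / (w - u m)) 1 0 := by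
    have h := ((HasDerivAt.comp (0 : ℝ) (by simpa using hu) hline).sub_const (u m)).div_const
      (w - u m)
    rwa [← hk, div_self hw₀] at h
  have h := le_sub_of_le_comp_of_hasDerivAt hV hc (by simp) hφ_line
    (fun ε ↦ (hle _).trans_eq (by rw [div_mul_cancel₀ _ hw₀, add_sub_cancel])) (by simpa using heq)
  have hslope : φ' / u' * (w - u m) = φ' * k := by
    rw [hk]
    field_simp
  linarith

end Subgradient

section KineticCost

/-- The costs for which the argument works, such as the kinetic cost `|y| ^ p / p`: convex, and
minimal at `0` with value `0`. -/
structure IsKineticCost (V : ℝ → ℝ) : Prop where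
  convexOn : ConvexOn ℝ univ V
  map_zero : V 0 = 0
  nonneg : ∀ y, 0 ≤ V y

lemma IsKineticCost.comp_neg {V : ℝ → ℝ} (hV : IsKineticCost V) :
    IsKineticCost fun s ↦ V (-s) where
  convexOn := hV.convexOn.comp_linearMap (-LinearMap.id)
  map_zero := by simp [hV.map_zero]
  nonneg y := hV.nonneg (-y)

lemma isKineticCost_abs_rpow_div {p : ℝ} (hp : 1 ≤ p) : IsKineticCost fun y ↦ |y| ^ p / p where
  convexOn := by
    have hp₀ : 0 ≤ p := zero_le_one.trans hp
    have habs : ConvexOn ℝ univ fun y : ℝ ↦ |y| := convexOn_univ_norm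
    have himage : (fun y : ℝ ↦ |y|) '' univ = Ici 0 :=
      subset_antisymm (image_subset_iff.2 fun y _ ↦ abs_nonneg y)
        fun y hy ↦ ⟨y, mem_univ y, abs_of_nonneg hy⟩
    have hpow : ConvexOn ℝ univ fun y : ℝ ↦ |y| ^ p :=
      ConvexOn.comp (g := fun x ↦ x ^ p) (himage ▸ convexOn_rpow hp) habs
        (himage ▸ Real.monotoneOn_rpow_Ici_of_exponent_nonneg hp₀)
    simpa [div_eq_inv_mul] using hpow.smul (inv_nonneg.2 hp₀)
  map_zero := by simp [(zero_lt_one.trans_le hp).ne']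
  nonneg y := div_nonneg (Real.rpow_nonneg (abs_nonneg y) p) (zero_le_one.trans hp)

end KineticCost

section TransportCorrection

open Real (exp)

/-- The weight integrated by `transportCorrection`, as a function of the cost `v`. It is chosen so
that `(a + b) * transportWeight a b` is the derivative of `transportExcess a b`. -/
noncomputable def transportWeight (a b v : ℝ) : ℝ :=
  b * (exp ((a + b) * v) - exp (b * v))

/-- The excess `b * g + a * B - (a + b) * h`, with `B` normalized to `1`, of the values `g`, `h`,
`B` at the times `t`, `t + a`, `t + a + b` along an optimal line whose velocity has cost `v`. -/
noncomputable def transportExcess (a b v : ℝ) : ℝ :=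
  b * exp ((a + b) * v) + a - (a + b) * exp (b * v)

/-- The function of the velocity `y` that has to be added to the transported mass to make the
comparison between the three times hold pointwise; see `transportExcess_le`. -/
noncomputable def transportCorrection (V : ℝ → ℝ) (a b y : ℝ) : ℝ :=
  ∫ s in (0 : ℝ)..y, transportWeight a b (V s)

variable {V : ℝ → ℝ} {a b : ℝ}

@[fun_prop]
lemma continuous_transportWeight : Continuous (transportWeight a b) := by
  unfold transportWeight
  fun_prop

lemma monotoneOn_transportWeight (ha : 0 ≤ a) (hb : 0 ≤ b) :
    MonotoneOn (transportWeight a b) (Ici 0) := by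
  intro v hv w _ hvw
  have hsplit : ∀ u, transportWeight a b u = b * (exp (b * u) * (exp (a * u) - 1)) := by
    intro u
    rw [transportWeight, add_mul, Real.exp_add]
    ring
  have hv₁ : 0 ≤ exp (a * v) - 1 := sub_nonneg.2 (Real.one_le_exp (mul_nonneg ha hv))
  rw [hsplit, hsplit]
  gcongr

lemma transportWeight_nonneg (ha : 0 ≤ a) (hb : 0 ≤ b) {v : ℝ} (hv : 0 ≤ v) :
    0 ≤ transportWeight a b v := by
  simpa [transportWeight] using monotoneOn_transportWeight ha hb self_mem_Ici hv hv

lemma transportExcess_zero : transportExcess a b 0 = 0 := by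
  simp [transportExcess, add_comm]

lemma hasDerivAt_transportExcess (v : ℝ) :
    HasDerivAt (transportExcess a b) ((a + b) * transportWeight a b v) v := by
  have hexp (c : ℝ) : HasDerivAt (fun v ↦ exp (c * v)) (exp (c * v) * c) v := by
    simpa using ((hasDerivAt_id v).const_mul c).exp
  convert! (((hexp (a + b)).const_mul b).add_const a).sub ((hexp b).const_mul (a + b)) using 1
  rw [transportWeight]
  ring

lemma transportCorrection_zero : transportCorrection V a b 0 = 0 := by
  simp [transportCorrection]

lemma transportCorrection_neg (y : ℝ) :
    transportCorrection V a b (-y) = -transportCorrection (fun s ↦ V (-s)) a b y := by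
  have h := intervalIntegral.integral_comp_neg (a := 0) (b := y) fun s ↦ transportWeight a b (V s)
  rw [transportCorrection, transportCorrection, h, neg_zero, intervalIntegral.integral_symm]

lemma transportCorrection_nonneg (hV : ∀ y, 0 ≤ V y) (ha : 0 ≤ a) (hb : 0 ≤ b) {y : ℝ}
    (hy : 0 ≤ y) : 0 ≤ transportCorrection V a b y :=
  intervalIntegral.integral_nonneg hy fun s _ ↦ transportWeight_nonneg ha hb (hV s)

lemma transportCorrection_nonpos (hV : ∀ y, 0 ≤ V y) (ha : 0 ≤ a) (hb : 0 ≤ b) {y : ℝ}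
    (hy : y ≤ 0) : transportCorrection V a b y ≤ 0 := by
  rw [← neg_neg y, transportCorrection_neg]
  exact neg_nonpos.2 (transportCorrection_nonneg (fun s ↦ hV (-s)) ha hb (neg_nonneg.2 hy))

lemma transportExcess_mul_sub (D s₀ y : ℝ) :
    transportExcess a b (D * (y - s₀)) =
      (a + b) * D * ∫ s in s₀..y, transportWeight a b (D * (s - s₀)) := by
  have hderiv (s : ℝ) : HasDerivAt (fun s ↦ transportExcess a b (D * (s - s₀)))
      ((a + b) * D * transportWeight a b (D * (s - s₀))) s := by
    have hline : HasDerivAt (fun s ↦ D * (s - s₀)) D s := by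
      simpa using ((hasDerivAt_id s).sub_const s₀).const_mul D
    convert! (hasDerivAt_transportExcess _).comp s hline using 1
    ring
  rw [← intervalIntegral.integral_const_mul,
    intervalIntegral.integral_eq_sub_of_hasDerivAt (fun s _ ↦ hderiv s)
      (Continuous.intervalIntegrable (by fun_prop) _ _)]
  simp [transportExcess_zero]

lemma transportExcess_le_of_pos (hV : IsKineticCost V) (ha : 0 ≤ a) (hb : 0 ≤ b) {y D : ℝ}
    (hy : 0 < y) (hD : IsSubgradientAt V y D) :
    transportExcess a b (V y) ≤ (a + b) * D * transportCorrection V a b y := by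
  have hVc : Continuous V := hV.convexOn.locallyLipschitz.continuous
  have hVD : V y ≤ D * y := by
    have := hD 0
    rw [hV.map_zero] at this
    linarith
  have hD₀ : 0 ≤ D := nonneg_of_mul_nonneg_left ((hV.nonneg y).trans hVD) hy
  rcases hD₀.eq_or_lt with rfl | hD_pos
  · have hVy : V y = 0 := le_antisymm (by simpa using hVD) (hV.nonneg y)
    simp [hVy, transportExcess_zero]
  obtain ⟨s₀, hs₀⟩ : ∃ s₀, V y = D * (y - s₀) := ⟨y - V y / D, by field_simp; ring⟩
  have hs₀_nonneg : 0 ≤ s₀ := nonneg_of_mul_nonneg_right (by linarith) hD_pos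
  have hs₀_le : s₀ ≤ y :=
    sub_nonneg.1 (nonneg_of_mul_nonneg_right (hs₀ ▸ hV.nonneg y) hD_pos)
  have htangent_le (s : ℝ) : D * (s - s₀) ≤ V s := by
    linarith [hD s]
  have hab : 0 ≤ (a + b) * D := by positivity
  calc transportExcess a b (V y)
      = (a + b) * D * ∫ s in s₀..y, transportWeight a b (D * (s - s₀)) := by
        rw [hs₀, transportExcess_mul_sub]
    _ ≤ (a + b) * D * ∫ s in s₀..y, transportWeight a b (V s) := by
        refine mul_le_mul_of_nonneg_left (intervalIntegral.integral_mono_on hs₀_le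
          (Continuous.intervalIntegrable (by fun_prop) _ _)
          (Continuous.intervalIntegrable (by fun_prop) _ _) fun s hs ↦ ?_) hab
        exact monotoneOn_transportWeight ha hb (mul_nonneg hD₀ (sub_nonneg.2 hs.1))
          (hV.nonneg s) (htangent_le s)
    _ ≤ (a + b) * D * transportCorrection V a b y := by
        refine mul_le_mul_of_nonneg_left (intervalIntegral.integral_mono_interval hs₀_nonneg
          hs₀_le le_rfl (Eventually.of_forall fun s ↦ ?_)
          (Continuous.intervalIntegrable (by fun_prop) _ _)) hab
        exact transportWeight_nonneg ha hb (hV.nonneg s)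

lemma transportExcess_le (hV : IsKineticCost V) (ha : 0 ≤ a) (hb : 0 ≤ b) {y D : ℝ}
    (hD : IsSubgradientAt V y D) :
    transportExcess a b (V y) ≤ (a + b) * D * transportCorrection V a b y := by
  rcases lt_trichotomy y 0 with hy | rfl | hy
  · have h := transportExcess_le_of_pos hV.comp_neg ha hb (neg_pos.2 hy) hD.comp_neg
    have hA := transportCorrection_neg (V := V) (a := a) (b := b) (-y)
    rw [neg_neg] at h hA
    rw [hA]
    linarith
  · simp [hV.map_zero, transportExcess_zero, transportCorrection_zero]
  · exact transportExcess_le_of_pos hV ha hb hy hD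

end TransportCorrection

section HopfLax

open Real (exp)

/-- The Hopf-Lax supremal convolution at time `t` of `f` with the cost `V`, the starting points
being restricted to `K`. The velocity is eliminated through `z = x + t * y`, so `t ≠ 0` is needed
for this to mean anything; see `hopfLaxOn_univ_eq`. -/
noncomputable def hopfLaxOn (V f : ℝ → ℝ) (K : Set ℝ) (t z : ℝ) : ℝ :=
  sSup ((fun x ↦ f x * exp (-(t * V ((z - x) / t)))) '' K)

variable {V f : ℝ → ℝ} {K : Set ℝ} {t a : ℝ}

lemma hopfLaxOn_univ_eq (ht : t ≠ 0) (z : ℝ) :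
    hopfLaxOn V f univ t z =
      sSup {v | ∃ x y : ℝ, z = x + t * y ∧ v = f x * exp (-(t * V y))} := by
  rw [hopfLaxOn, image_univ]
  congr 1
  ext v
  constructor
  · rintro ⟨x, rfl⟩
    exact ⟨x, (z - x) / t, by field_simp; ring, rfl⟩
  · rintro ⟨x, y, rfl, rfl⟩
    exact ⟨x, by simp only [add_sub_cancel_left, mul_div_cancel_left₀ y ht]⟩

lemma hopfLaxOn_nonneg (hf₀ : ∀ x ∈ K, 0 ≤ f x) (t z : ℝ) : 0 ≤ hopfLaxOn V f K t z :=
  Real.sSup_nonneg <| forall_mem_image.2 fun x hx ↦ mul_nonneg (hf₀ x hx) (Real.exp_pos _).le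

lemma hopfLaxOn_eq_zero (hf : ∀ x ∈ K, f x = 0) (t z : ℝ) : hopfLaxOn V f K t z = 0 :=
  le_antisymm (Real.sSup_nonpos <| forall_mem_image.2 fun x hx ↦ by simp [hf x hx])
    (hopfLaxOn_nonneg (fun x hx ↦ (hf x hx).ge) t z)

lemma isLUB_hopfLaxOn (hV : ∀ y, 0 ≤ V y) (hf₀ : ∀ x, 0 ≤ f x) (hfb : ∃ M, ∀ x, f x ≤ M)
    (hne : K.Nonempty) (ht : 0 ≤ t) (z : ℝ) :
    IsLUB ((fun x ↦ f x * exp (-(t * V ((z - x) / t)))) '' K) (hopfLaxOn V f K t z) := by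
  obtain ⟨M, hM⟩ := hfb
  refine isLUB_csSup (hne.image _) ⟨M, ?_⟩
  rintro _ ⟨x, -, rfl⟩
  have hexp : exp (-(t * V ((z - x) / t))) ≤ 1 :=
    Real.exp_le_one_iff.2 (neg_nonpos.2 (mul_nonneg ht (hV _)))
  exact (mul_le_of_le_one_right (hf₀ x) hexp).trans (hM x)

lemma hopfLaxOn_mono {L : Set ℝ} (hV : ∀ y, 0 ≤ V y) (hf₀ : ∀ x, 0 ≤ f x)
    (hfb : ∃ M, ∀ x, f x ≤ M) (hK : K.Nonempty) (hKL : K ⊆ L) (ht : 0 ≤ t) (z : ℝ) :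
    hopfLaxOn V f K t z ≤ hopfLaxOn V f L t z :=
  (isLUB_hopfLaxOn hV hf₀ hfb hK ht z).mono (isLUB_hopfLaxOn hV hf₀ hfb (hK.mono hKL) ht z)
    (image_mono hKL)

lemma tendsto_hopfLaxOn_of_monotone {K : ℕ → Set ℝ} (hV : ∀ y, 0 ≤ V y) (hf₀ : ∀ x, 0 ≤ f x)
    (hfb : ∃ M, ∀ x, f x ≤ M) (hK : Monotone K) (hne : ∀ n, (K n).Nonempty) (ht : 0 ≤ t) (z : ℝ) :
    Tendsto (fun n ↦ hopfLaxOn V f (K n) t z) atTop (𝓝 (hopfLaxOn V f (⋃ n, K n) t z)) := by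
  have hlub (n : ℕ) := isLUB_hopfLaxOn hV hf₀ hfb (hne n) ht z
  have hlub_union := isLUB_hopfLaxOn hV hf₀ hfb ((hne 0).mono (subset_iUnion K 0)) ht z
  refine tendsto_atTop_isLUB (fun m n hmn ↦ hopfLaxOn_mono hV hf₀ hfb (hne m) (hK hmn) ht z) ?_
  refine ⟨forall_mem_range.2 fun n ↦
    hopfLaxOn_mono hV hf₀ hfb (hne n) (subset_iUnion K n) ht z, fun c hc ↦ hlub_union.2 ?_⟩
  rintro _ ⟨x, hx, rfl⟩
  obtain ⟨n, hn⟩ := mem_iUnion.1 hx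
  exact ((hlub n).1 (mem_image_of_mem _ hn)).trans (hc (mem_range_self n))

section Compact

variable (hV : Continuous V) (hf : Continuous f) (hK : IsCompact K)
include hV hf hK

lemma isGreatest_hopfLaxOn (hne : K.Nonempty) (t z : ℝ) :
    IsGreatest ((fun x ↦ f x * exp (-(t * V ((z - x) / t)))) '' K) (hopfLaxOn V f K t z) :=
  (hK.image (by fun_prop)).isGreatest_sSup (hne.image _)

lemma le_hopfLaxOn {x : ℝ} (hx : x ∈ K) (t z : ℝ) :
    f x * exp (-(t * V ((z - x) / t))) ≤ hopfLaxOn V f K t z :=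
  (isGreatest_hopfLaxOn hV hf hK ⟨x, hx⟩ t z).2 (mem_image_of_mem _ hx)

lemma le_hopfLaxOn_add_mul {x : ℝ} (hx : x ∈ K) (ht : t ≠ 0) (y : ℝ) :
    f x * exp (-(t * V y)) ≤ hopfLaxOn V f K t (x + t * y) := by
  simpa [ht] using le_hopfLaxOn hV hf hK hx t (x + t * y)

lemma exists_eq_hopfLaxOn (hne : K.Nonempty) (t z : ℝ) :
    ∃ x ∈ K, f x * exp (-(t * V ((z - x) / t))) = hopfLaxOn V f K t z :=
  (isGreatest_hopfLaxOn hV hf hK hne t z).1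

lemma hopfLaxOn_pos (hpos : ∃ x ∈ K, 0 < f x) (t z : ℝ) : 0 < hopfLaxOn V f K t z := by
  obtain ⟨x, hx, hfx⟩ := hpos
  exact (mul_pos hfx (Real.exp_pos _)).trans_le (le_hopfLaxOn hV hf hK hx t z)

end Compact

lemma locallyLipschitz_hopfLaxOn (hV : LocallyLipschitz V) (hf : Continuous f) (hK : IsCompact K)
    (hne : K.Nonempty) (t : ℝ) : LocallyLipschitz (hopfLaxOn V f K t) := by
  intro z₀
  have hcost : LocallyLipschitz fun u ↦ exp (-(t * V (u / t))) := by
    have h₁ : ContDiff ℝ 1 fun s : ℝ ↦ exp (-(t * s)) := by fun_prop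
    have h₂ : ContDiff ℝ 1 fun u : ℝ ↦ u / t := by fun_prop
    exact h₁.locallyLipschitz.comp (hV.comp h₂.locallyLipschitz)
  have hcomp : IsCompact ((fun q : ℝ × ℝ ↦ q.1 - q.2) '' (Metric.closedBall z₀ 1 ×ˢ K)) :=
    ((isCompact_closedBall z₀ 1).prod hK).image (by fun_prop)
  obtain ⟨C, hC⟩ := hcost.locallyLipschitzOn.exists_lipschitzOnWith_of_compact hcomp
  obtain ⟨M, hM⟩ := hK.exists_bound_of_continuousOn hf.continuousOn
  refine ⟨M.toNNReal * C, Metric.closedBall z₀ 1, Metric.closedBall_mem_nhds z₀ one_pos,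
    LipschitzOnWith.of_le_add_mul _ fun z hz z' hz' ↦ ?_⟩
  obtain ⟨x, hx, hxz⟩ := exists_eq_hopfLaxOn hV.continuous hf hK hne t z
  have hC_le := hC.dist_le_mul (z - x) ⟨(z, x), ⟨hz, hx⟩, rfl⟩ (z' - x) ⟨(z', x), ⟨hz', hx⟩, rfl⟩
  rw [dist_sub_right, Real.dist_eq] at hC_le
  have hfx : |f x| ≤ M.toNNReal := (hM x hx).trans (Real.le_coe_toNNReal M)
  calc hopfLaxOn V f K t z
      = f x * exp (-(t * V ((z' - x) / t)))
          + f x * (exp (-(t * V ((z - x) / t))) - exp (-(t * V ((z' - x) / t)))) := by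
        rw [← hxz]
        ring
    _ ≤ hopfLaxOn V f K t z' + |f x| * |exp (-(t * V ((z - x) / t)))
          - exp (-(t * V ((z' - x) / t)))| :=
        add_le_add (le_hopfLaxOn hV.continuous hf hK hx t z')
          ((le_abs_self _).trans (abs_mul _ _).le)
    _ ≤ hopfLaxOn V f K t z' + ↑(M.toNNReal * C) * dist z z' := by
        rw [NNReal.coe_mul, mul_assoc]
        gcongr

lemma hopfLaxOn_mul_exp_le (hV : ConvexOn ℝ univ V) (hf : Continuous f) (hf₀ : ∀ x, 0 ≤ f x)
    (hK : IsCompact K) (hne : K.Nonempty) (ht : 0 < t) (ha : 0 < a) (x y : ℝ) :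
    hopfLaxOn V f K t x * exp (-(a * V y)) ≤ hopfLaxOn V f K (t + a) (x + a * y) := by
  have hVc : Continuous V := hV.locallyLipschitz.continuous
  obtain ⟨x₀, hx₀, hopt⟩ := exists_eq_hopfLaxOn hVc hf hK hne t x
  have hconv := hV.2 (mem_univ ((x - x₀) / t)) (mem_univ y)
    (show 0 ≤ t / (t + a) by positivity) (show 0 ≤ a / (t + a) by positivity) (by field_simp)
  have hmean : (t / (t + a)) • ((x - x₀) / t) + (a / (t + a)) • y
      = (x + a * y - x₀) / (t + a) := by
    simp only [smul_eq_mul]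
    field_simp
    ring
  rw [hmean, smul_eq_mul, smul_eq_mul, div_mul_eq_mul_div, div_mul_eq_mul_div, ← add_div,
    le_div_iff₀' (by positivity)] at hconv
  calc hopfLaxOn V f K t x * exp (-(a * V y))
      = f x₀ * exp (-(t * V ((x - x₀) / t) + a * V y)) := by
        rw [← hopt, mul_assoc, ← Real.exp_add, neg_add]
    _ ≤ f x₀ * exp (-((t + a) * V ((x + a * y - x₀) / (t + a)))) := by
        have := hf₀ x₀
        gcongr
    _ ≤ hopfLaxOn V f K (t + a) (x + a * y) := le_hopfLaxOn hVc hf hK hx₀ _ _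

lemma add_le_add_of_convexOn (hV : ConvexOn ℝ univ V) {u c d : ℝ} (hc : 0 < c) (hd : 0 < d) :
    V (u + c) + V (u + d) ≤ V u + V (u + c + d) := by
  have hbound {c d : ℝ} (hc : 0 < c) (hd : 0 < d) :
      V (u + c) ≤ d / (c + d) * V u + c / (c + d) * V (u + c + d) := by
    have h := hV.2 (mem_univ u) (mem_univ (u + c + d)) (show 0 ≤ d / (c + d) by positivity)
      (show 0 ≤ c / (c + d) by positivity) (by field_simp; ring)
    convert! h using 2
    simp only [smul_eq_mul]
    field_simp
    ring
  have h := add_le_add (hbound hc hd) (hbound hd hc)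
  rw [add_right_comm u d c, add_comm d c] at h
  refine h.trans_eq ?_
  field_simp
  ring

lemma mul_exp_neg_le_of_add_le {p q α β γ δ : ℝ} (hq : 0 ≤ q)
    (h : p * exp (-α) ≤ q * exp (-β)) (hle : γ + α ≤ β + δ) :
    p * exp (-δ) ≤ q * exp (-γ) :=
  calc p * exp (-δ) = p * exp (-α) * exp (α - δ) := by rw [mul_assoc, ← Real.exp_add]; ring_nf
    _ ≤ q * exp (-β) * exp (α - δ) := by gcongr
    _ = q * exp (α - δ - β) := by rw [mul_assoc, ← Real.exp_add]; ring_nf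
    _ ≤ q * exp (-γ) := by gcongr; linarith

/-- The smallest optimal starting point is monotone because spreading two velocities apart, their
sum being kept, increases the total cost. -/
lemma exists_monotone_optimal (hV : ConvexOn ℝ univ V) (hf : Continuous f) (hf₀ : ∀ x, 0 ≤ f x)
    (hK : IsCompact K) (hne : K.Nonempty) (ht : 0 < t) :
    ∃ X : ℝ → ℝ, Monotone X ∧ ∀ z, X z ∈ K ∧
      f (X z) * exp (-(t * V ((z - X z) / t))) = hopfLaxOn V f K t z := by
  have hVc : Continuous V := hV.locallyLipschitz.continuous
  have hleast (z : ℝ) : ∃ x, IsLeast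
      (K ∩ {x | f x * exp (-(t * V ((z - x) / t))) = hopfLaxOn V f K t z}) x :=
    (hK.inter_right (isClosed_eq (by fun_prop) continuous_const)).exists_isLeast
      (exists_eq_hopfLaxOn hVc hf hK hne t z)
  choose X hX using hleast
  refine ⟨X, fun z z' hzz' ↦ ?_, fun z ↦ (hX z).1⟩
  rcases hzz'.eq_or_lt with rfl | hlt
  · exact le_rfl
  by_contra! hcross
  have hconv := add_le_add_of_convexOn hV (u := (z - X z) / t) (div_pos (sub_pos.2 hcross) ht)
    (div_pos (sub_pos.2 hlt) ht)
  rw [← add_div, ← add_div, ← add_div, sub_add_sub_cancel, add_comm (z - X z), sub_add_sub_cancel,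
    sub_add_sub_cancel', ← mul_le_mul_iff_right₀ ht, mul_add, mul_add] at hconv
  have hX'_opt : f (X z) * exp (-(t * V ((z - X z) / t)))
      ≤ f (X z') * exp (-(t * V ((z - X z') / t))) := by
    refine mul_exp_neg_le_of_add_le (hf₀ _) ?_ (hconv.trans_eq (add_comm _ _))
    rw [(hX z').1.2]
    exact le_hopfLaxOn hVc hf hK (hX z).1.1 t z'
  rw [(hX z).1.2] at hX'_opt
  exact hcross.not_ge ((hX z).2 ⟨(hX z').1.1,
    (le_hopfLaxOn hVc hf hK (hX z').1.1 t z).antisymm hX'_opt⟩)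

end HopfLax

section Characteristics

open Real (exp)

/-- A family of characteristics `r ↦ ξ m + r * y m` labelled by their position `m` at time `s`,
which reach their end point at time `T` along an optimal path.

Where `m ↦ ξ m + T * y m` is stationary, several starting points compete for the same end point;
the characteristics then sweep the interval between these starting points, and optimality is not
required. -/
structure IsCharacteristicFamily (V f : ℝ → ℝ) (K : Set ℝ) (s T : ℝ) (ξ y : ℝ → ℝ) : Prop where
  start_mem : ∀ m, ξ m ∈ K
  monotone_start : Monotone ξ
  monotone_end : Monotone fun m ↦ ξ m + T * y m
  position_eq : ∀ m, ξ m + s * y m = m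
  optimal : ∀ m, deriv (fun m ↦ ξ m + T * y m) m ≠ 0 →
    f (ξ m) * exp (-(T * V (y m))) = hopfLaxOn V f K T (ξ m + T * y m)

variable {V f : ℝ → ℝ} {K : Set ℝ} {s T r : ℝ} {ξ y : ℝ → ℝ}

lemma exists_isCharacteristicFamily (hV : ConvexOn ℝ univ V) (hf : Continuous f)
    (hf₀ : ∀ x, 0 ≤ f x) (hK : IsCompact K) (hK_conn : K.OrdConnected) (hne : K.Nonempty)
    (hs : 0 < s) (hsT : s < T) : ∃ ξ y, IsCharacteristicFamily V f K s T ξ y := by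
  have hT : 0 < T := hs.trans hsT
  have hVc : Continuous V := hV.locallyLipschitz.continuous
  have hBc : Continuous (hopfLaxOn V f K T) :=
    (locallyLipschitz_hopfLaxOn hV.locallyLipschitz hf hK hne T).continuous
  obtain ⟨X, hX_mono, hX⟩ := exists_monotone_optimal hV hf hf₀ hK hne hT
  obtain ⟨ζ, ξ, hζ_mono, hξ_mono, hξ_mem, hmean, hclosure⟩ :=
    exists_completedGraph hX_mono hK_conn (fun z ↦ (hX z).1) (div_pos hs hT) ((div_lt_one hT).2 hsT)
  have hend (m : ℝ) : ξ m + T * ((ζ m - ξ m) / T) = ζ m := by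
    field_simp
    ring
  refine ⟨ξ, fun m ↦ (ζ m - ξ m) / T, hξ_mem, hξ_mono, ?_, fun m ↦ ?_, ?_⟩
  · simpa only [hend] using hζ_mono
  · linear_combination hmean m
  · intro m hm
    simp only [hend] at hm ⊢
    have hclosed : IsClosed {q : ℝ × ℝ |
        f q.2 * exp (-(T * V ((q.1 - q.2) / T))) = hopfLaxOn V f K T q.1} :=
      isClosed_eq (by fun_prop) (by fun_prop)
    exact closure_minimal (range_subset_iff.2 fun z ↦ (hX z).2) hclosed (hclosure m hm)

namespace IsCharacteristicFamily

lemma velocity_eq (h : IsCharacteristicFamily V f K s T ξ y) (hs : s ≠ 0) (m : ℝ) :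
    y m = (m - ξ m) / s := by
  rw [eq_div_iff hs]
  linarith [h.position_eq m]

lemma start_add_mul_velocity (h : IsCharacteristicFamily V f K s T ξ y) (hs : s ≠ 0) (r m : ℝ) :
    ξ m + r * y m = (1 - r / s) * ξ m + r / s * m := by
  rw [h.velocity_eq hs]
  ring

lemma locallyLipschitz_start (h : IsCharacteristicFamily V f K s T ξ y) (hs : 0 ≤ s)
    (hsT : s < T) : LocallyLipschitz ξ := by
  have hsub : 0 < T - s := sub_pos.2 hsT
  refine (lipschitzWith_of_monotone_of_monotone_sub (c := (T / (T - s)).toNNReal)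
    h.monotone_start ?_).locallyLipschitz
  have hend (m : ℝ) : T / (T - s) * m - ξ m = s / (T - s) * (ξ m + T * y m) := by
    field_simp
    linear_combination -T * h.position_eq m
  rw [Real.coe_toNNReal _ (div_nonneg (hs.trans hsT.le) hsub.le)]
  simpa only [hend] using h.monotone_end.const_mul (div_nonneg hs hsub.le)

lemma locallyLipschitz_velocity (h : IsCharacteristicFamily V f K s T ξ y) (hs : 0 < s)
    (hsT : s < T) : LocallyLipschitz y := by
  have hlin : ContDiff ℝ 1 fun q : ℝ × ℝ ↦ (q.1 - q.2) / s := by fun_prop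
  rw [funext (h.velocity_eq hs.ne')]
  exact hlin.locallyLipschitz.comp
    (LipschitzWith.id.locallyLipschitz.prodMk (h.locallyLipschitz_start hs.le hsT))

lemma locallyLipschitz_position (h : IsCharacteristicFamily V f K s T ξ y) (hs : 0 < s)
    (hsT : s < T) (r : ℝ) : LocallyLipschitz fun m ↦ ξ m + r * y m := by
  have hlin : ContDiff ℝ 1 fun q : ℝ × ℝ ↦ q.1 + r * q.2 := by fun_prop
  exact hlin.locallyLipschitz.comp
    ((h.locallyLipschitz_start hs.le hsT).prodMk (h.locallyLipschitz_velocity hs hsT))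

lemma hasDerivAt_position (h : IsCharacteristicFamily V f K s T ξ y) {m w : ℝ}
    (hy : HasDerivAt y w m) (r : ℝ) : HasDerivAt (fun m ↦ ξ m + r * y m) (1 + (r - s) * w) m := by
  have hposition (m : ℝ) : ξ m + r * y m = m + (r - s) * y m := by
    linear_combination h.position_eq m
  simpa only [hposition] using (hasDerivAt_id' m).fun_add (hy.const_mul (r - s))

lemma tendsto_position_atTop (h : IsCharacteristicFamily V f K s T ξ y) (hK : IsCompact K)
    (hs : 0 < s) (hr : 0 < r) : Tendsto (fun m ↦ ξ m + r * y m) atTop atTop := by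
  obtain ⟨C, hC⟩ := hK.exists_bound_of_continuousOn (f := fun x ↦ (1 - r / s) * x) (by fun_prop)
  simp only [h.start_add_mul_velocity hs.ne']
  exact tendsto_atTop_add_left_of_le _ (-C) (fun m ↦ (abs_le.1 (hC _ (h.start_mem m))).1)
    (tendsto_id.const_mul_atTop (div_pos hr hs))

lemma tendsto_position_atBot (h : IsCharacteristicFamily V f K s T ξ y) (hK : IsCompact K)
    (hs : 0 < s) (hr : 0 < r) : Tendsto (fun m ↦ ξ m + r * y m) atBot atBot := by
  obtain ⟨C, hC⟩ := hK.exists_bound_of_continuousOn (f := fun x ↦ (1 - r / s) * x) (by fun_prop)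
  simp only [h.start_add_mul_velocity hs.ne']
  exact tendsto_atBot_add_left_of_ge _ C (fun m ↦ (abs_le.1 (hC _ (h.start_mem m))).2)
    (tendsto_id.const_mul_atBot (div_pos hr hs))

lemma velocity_nonneg (h : IsCharacteristicFamily V f K s T ξ y) (hs : 0 < s) {m : ℝ}
    (hm : m ∈ upperBounds K) : 0 ≤ y m := by
  rw [h.velocity_eq hs.ne']
  exact div_nonneg (sub_nonneg.2 (hm (h.start_mem m))) hs.le

lemma velocity_nonpos (h : IsCharacteristicFamily V f K s T ξ y) (hs : 0 < s) {m : ℝ}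
    (hm : m ∈ lowerBounds K) : y m ≤ 0 := by
  rw [h.velocity_eq hs.ne']
  exact div_nonpos_of_nonpos_of_nonneg (sub_nonpos.2 (hm (h.start_mem m))) hs.le

end IsCharacteristicFamily

end Characteristics

section Transport

open Real (exp)

variable {V f : ℝ → ℝ} {K : Set ℝ} {t a b : ℝ} {ξ y : ℝ → ℝ}

/-- The primitive whose derivative is compared with `(a + b) * hopfLaxOn V f K (t + a)`. Along the
characteristics it adds up the mass at the times `t` and `t + a + b`, plus a correction which is
nonnegative at `+∞` and nonpositive at `-∞`. -/
noncomputable def transportPotential (V f : ℝ → ℝ) (K : Set ℝ) (t a b : ℝ) (ξ y : ℝ → ℝ)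
    (m : ℝ) : ℝ :=
  b * (∫ z in (0 : ℝ)..(ξ m + t * y m), hopfLaxOn V f K t z) +
    a * (∫ z in (0 : ℝ)..(ξ m + (t + a + b) * y m), hopfLaxOn V f K (t + a + b) z) +
    (a + b) * (hopfLaxOn V f K (t + a + b) (ξ m + (t + a + b) * y m) *
      transportCorrection V a b (y m))

lemma locallyLipschitz_transportPotential (hV : ConvexOn ℝ univ V) (hf : Continuous f)
    (hK : IsCompact K) (hne : K.Nonempty) (ht : 0 < t) (ha : 0 < a) (hb : 0 < b)
    (h : IsCharacteristicFamily V f K (t + a) (t + a + b) ξ y) :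
    LocallyLipschitz (transportPotential V f K t a b ξ y) := by
  have hs : 0 < t + a := add_pos ht ha
  have hsT : t + a < t + a + b := lt_add_of_pos_right _ hb
  have hVc : Continuous V := hV.locallyLipschitz.continuous
  have hB := locallyLipschitz_hopfLaxOn hV.locallyLipschitz hf hK hne
  have hx := h.locallyLipschitz_position hs hsT
  have hstart := (locallyLipschitz_primitive (hB t).continuous).comp (hx t)
  have hend := (locallyLipschitz_primitive (hB (t + a + b)).continuous).comp (hx (t + a + b))
  have hcorr : LocallyLipschitz fun m ↦ transportCorrection V a b (y m) :=
    (locallyLipschitz_primitive (by fun_prop)).comp (h.locallyLipschitz_velocity hs hsT)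
  have hcombine : ContDiff ℝ 1 fun q : (ℝ × ℝ) × ℝ × ℝ ↦
    b * q.1.1 + a * q.1.2 + (a + b) * (q.2.1 * q.2.2) := by fun_prop
  exact hcombine.locallyLipschitz.comp
    ((hstart.prodMk hend).prodMk (((hB (t + a + b)).comp (hx (t + a + b))).prodMk hcorr))

lemma hasDerivAt_transportPotential (hV : ConvexOn ℝ univ V) (hf : Continuous f)
    (hK : IsCompact K) (hne : K.Nonempty)
    (h : IsCharacteristicFamily V f K (t + a) (t + a + b) ξ y) {m w B' : ℝ}
    (hy : HasDerivAt y w m)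
    (hB : HasDerivAt (fun m ↦ hopfLaxOn V f K (t + a + b) (ξ m + (t + a + b) * y m)) B' m) :
    HasDerivAt (transportPotential V f K t a b ξ y)
      (b * (hopfLaxOn V f K t (ξ m + t * y m) * (1 - a * w)) +
        a * (hopfLaxOn V f K (t + a + b) (ξ m + (t + a + b) * y m) * (1 + b * w)) +
        (a + b) * (B' * transportCorrection V a b (y m) +
          hopfLaxOn V f K (t + a + b) (ξ m + (t + a + b) * y m) *
            (transportWeight a b (V (y m)) * w))) m := by
  have hVc : Continuous V := hV.locallyLipschitz.continuous
  have hgc (r : ℝ) : Continuous (hopfLaxOn V f K r) :=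
    (locallyLipschitz_hopfLaxOn hV.locallyLipschitz hf hK hne r).continuous
  have hstart := (hasDerivAt_primitive (hgc t) _).comp m (h.hasDerivAt_position hy t)
  have hend := (hasDerivAt_primitive (hgc (t + a + b)) _).comp m
    (h.hasDerivAt_position hy (t + a + b))
  have hcorr : HasDerivAt (fun m ↦ transportCorrection V a b (y m))
      (transportWeight a b (V (y m)) * w) m :=
    (hasDerivAt_primitive (by fun_prop) _).comp m hy
  convert! ((hstart.const_mul b).add (hend.const_mul a)).add
    ((hB.mul hcorr).const_mul (a + b)) using 1
  ring

/-- Freezing the optimal starting point `x` bounds the value at neighbouring end points from below.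
Taking logarithms, this is a differentiable function touching `V` from below. -/
lemma exists_isSubgradientAt_of_hasDerivAt_hopfLaxOn (hV : ConvexOn ℝ univ V)
    (hf : Continuous f) (hK : IsCompact K) {T x m ζ' B' : ℝ} {ζ : ℝ → ℝ} (hT : 0 < T)
    (hx : x ∈ K) (hfx : 0 < f x)
    (hopt : f x * exp (-(T * V ((ζ m - x) / T))) = hopfLaxOn V f K T (ζ m))
    (hζ : HasDerivAt ζ ζ' m) (hζ' : ζ' ≠ 0)
    (hB : HasDerivAt (fun s ↦ hopfLaxOn V f K T (ζ s)) B' m) :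
    ∃ D, IsSubgradientAt V ((ζ m - x) / T) D ∧ B' = -(hopfLaxOn V f K T (ζ m) * D * ζ') := by
  have hVc : Continuous V := hV.locallyLipschitz.continuous
  have hBpos (s : ℝ) : 0 < hopfLaxOn V f K T (ζ s) :=
    hopfLaxOn_pos hVc hf hK ⟨x, hx, hfx⟩ T (ζ s)
  have hlog (v : ℝ) : Real.log (f x * exp (-(T * v))) = Real.log (f x) - T * v := by
    rw [Real.log_mul hfx.ne' (Real.exp_ne_zero _), Real.log_exp, sub_eq_add_neg]
  refine ⟨_, isSubgradientAt_div_of_le_comp (u := fun s ↦ (ζ s - x) / T) hV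
    ((hζ.sub_const x).div_const T) (div_ne_zero hζ' hT.ne')
    (((hB.log (hBpos m).ne').const_sub (Real.log (f x))).div_const T)
    (fun s ↦ ?_) ?_, ?_⟩
  · have h := Real.log_le_log (mul_pos hfx (Real.exp_pos _)) (le_hopfLaxOn hVc hf hK hx T (ζ s))
    rw [hlog] at h
    rw [div_le_iff₀ hT]
    linarith
  · rw [← hopt, hlog]
    field_simp
    ring
  · have := (hBpos m).ne'
    field_simp

lemma transport_le_of_stationary_end {v w g B h : ℝ} (ha : 0 ≤ a) (hb : 0 ≤ b) (hv : 0 ≤ v)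
    (hw : 1 + b * w = 0) (hh : g * exp (-(a * v)) ≤ h) (hg : g ≤ B * exp ((a + b) * v)) :
    b * (g * (1 - a * w)) + a * (B * (1 + b * w)) + (a + b) * (B * (transportWeight a b v * w))
      ≤ (a + b) * h := by
  have hexp : exp (b * v) = exp ((a + b) * v) * exp (-(a * v)) := by
    rw [← Real.exp_add]
    ring_nf
  have hle : 0 ≤ 1 - exp (-(a * v)) :=
    sub_nonneg.2 (Real.exp_le_one_iff.2 (neg_nonpos.2 (mul_nonneg ha hv)))
  have : 0 ≤ a + b := add_nonneg ha hb
  have hbw : b * w = -1 := by linarith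
  calc b * (g * (1 - a * w)) + a * (B * (1 + b * w)) + (a + b) * (B * (transportWeight a b v * w))
      = (a + b) * (g - B * exp ((a + b) * v) * (1 - exp (-(a * v)))) := by
        rw [transportWeight, hexp]
        linear_combination
          (-(g * a) + a * B + (a + b) * B * exp ((a + b) * v) * (1 - exp (-(a * v)))) * hbw
    _ ≤ (a + b) * (g - g * (1 - exp (-(a * v)))) := by gcongr
    _ = (a + b) * (g * exp (-(a * v))) := by ring
    _ ≤ (a + b) * h := by gcongr

lemma transport_le_of_moving_end {v w B D A h : ℝ} (hab : 0 ≤ a + b) (hB : 0 ≤ B)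
    (hw : 0 ≤ 1 + b * w) (hh : B * exp (b * v) ≤ h)
    (hA : transportExcess a b v ≤ (a + b) * D * A) :
    b * (B * exp ((a + b) * v) * (1 - a * w)) + a * (B * (1 + b * w)) +
        (a + b) * (-(B * D * (1 + b * w)) * A + B * (transportWeight a b v * w))
      ≤ (a + b) * h :=
  calc b * (B * exp ((a + b) * v) * (1 - a * w)) + a * (B * (1 + b * w)) +
        (a + b) * (-(B * D * (1 + b * w)) * A + B * (transportWeight a b v * w))
      = (a + b) * (B * exp (b * v)) +
          B * (1 + b * w) * (transportExcess a b v - (a + b) * D * A) := by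
        rw [transportExcess, transportWeight]
        ring
    _ ≤ (a + b) * (B * exp (b * v)) :=
        add_le_of_nonpos_right
          (mul_nonpos_of_nonneg_of_nonpos (mul_nonneg hB hw) (sub_nonpos.2 hA))
    _ ≤ (a + b) * h := by gcongr

end Transport

section TransportInequality

open Real (exp)

variable {V f : ℝ → ℝ} {K : Set ℝ} {t a b : ℝ} {ξ y : ℝ → ℝ}

lemma IsCharacteristicFamily.hopfLaxOn_eq_mul_exp {s T : ℝ} (hV : ConvexOn ℝ univ V)
    (hf : Continuous f) (hf₀ : ∀ x, 0 ≤ f x) (hK : IsCompact K)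
    (h : IsCharacteristicFamily V f K s T ξ y) (ht : 0 < t) (htT : t < T) {m : ℝ}
    (hm : deriv (fun m ↦ ξ m + T * y m) m ≠ 0) :
    hopfLaxOn V f K t (ξ m + t * y m) =
      hopfLaxOn V f K T (ξ m + T * y m) * exp ((T - t) * V (y m)) := by
  have hVc : Continuous V := hV.locallyLipschitz.continuous
  apply le_antisymm
  · have hsemi := hopfLaxOn_mul_exp_le hV hf hf₀ hK ⟨_, h.start_mem m⟩ ht (sub_pos.2 htT)
      (ξ m + t * y m) (y m)
    rwa [add_sub_cancel, add_assoc, ← add_mul, add_sub_cancel, Real.exp_neg, ← div_eq_mul_inv,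
      div_le_iff₀ (Real.exp_pos _)] at hsemi
  · rw [← h.optimal m hm, mul_assoc, ← Real.exp_add]
    convert! le_hopfLaxOn_add_mul hVc hf hK (h.start_mem m) ht.ne' (y m) using 3
    ring

lemma IsCharacteristicFamily.exists_isSubgradientAt_velocity {s T ζ' B' m : ℝ}
    (hV : ConvexOn ℝ univ V) (hf : Continuous f) (hK : IsCompact K) (hpos : ∃ x ∈ K, 0 < f x)
    (h : IsCharacteristicFamily V f K s T ξ y) (hT : 0 < T)
    (hend : HasDerivAt (fun m ↦ ξ m + T * y m) ζ' m) (hmoving : ζ' ≠ 0)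
    (hB : HasDerivAt (fun m ↦ hopfLaxOn V f K T (ξ m + T * y m)) B' m) :
    ∃ D, IsSubgradientAt V (y m) D ∧
      B' = -(hopfLaxOn V f K T (ξ m + T * y m) * D * ζ') := by
  have hopt := h.optimal m (hend.deriv ▸ hmoving)
  have hBpos := hopfLaxOn_pos hV.locallyLipschitz.continuous hf hK hpos T (ξ m + T * y m)
  have hvel : (ξ m + T * y m - ξ m) / T = y m := by
    rw [add_sub_cancel_left, mul_div_cancel_left₀ _ hT.ne']
  have hD := exists_isSubgradientAt_of_hasDerivAt_hopfLaxOn hV hf hK hT (h.start_mem m)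
    (pos_of_mul_pos_left (hopt ▸ hBpos) (Real.exp_pos _).le) (by rwa [hvel]) hend hmoving hB
  rwa [hvel] at hD

lemma deriv_transportPotential_le (hV : IsKineticCost V) (hf : Continuous f)
    (hf₀ : ∀ x, 0 ≤ f x) (hK : IsCompact K) (hpos : ∃ x ∈ K, 0 < f x) (ht : 0 < t) (ha : 0 < a)
    (hb : 0 < b) (h : IsCharacteristicFamily V f K (t + a) (t + a + b) ξ y) {m : ℝ}
    (hy : DifferentiableAt ℝ y m)
    (hB : DifferentiableAt ℝ
      (fun m ↦ hopfLaxOn V f K (t + a + b) (ξ m + (t + a + b) * y m)) m) :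
    deriv (transportPotential V f K t a b ξ y) m ≤ (a + b) * hopfLaxOn V f K (t + a) m := by
  have hne : K.Nonempty := ⟨_, h.start_mem m⟩
  have hT : 0 < t + a + b := by positivity
  have hBpos := hopfLaxOn_pos hV.convexOn.locallyLipschitz.continuous hf hK hpos (t + a + b)
  have hend := h.hasDerivAt_position hy.hasDerivAt (t + a + b)
  rw [add_sub_cancel_left] at hend
  have hspeed : 0 ≤ 1 + b * deriv y m := hend.deriv ▸ h.monotone_end.deriv_nonneg
  have hmiddle : hopfLaxOn V f K t (ξ m + t * y m) * exp (-(a * V (y m))) ≤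
      hopfLaxOn V f K (t + a) m := by
    have hsemi := hopfLaxOn_mul_exp_le hV.convexOn hf hf₀ hK hne ht ha (ξ m + t * y m) (y m)
    rwa [add_assoc, ← add_mul, h.position_eq] at hsemi
  rw [(hasDerivAt_transportPotential hV.convexOn hf hK hne h hy.hasDerivAt hB.hasDerivAt).deriv]
  rcases eq_or_ne (1 + b * deriv y m) 0 with hstat | hmoving
  · rw [hstat] at hend
    rw [(hasDerivAt_comp_zero_of_locallyLipschitz
      (locallyLipschitz_hopfLaxOn hV.convexOn.locallyLipschitz hf hK hne _) hend).deriv,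
      zero_mul, zero_add]
    refine transport_le_of_stationary_end ha.le hb.le (hV.nonneg _) hstat hmiddle ?_
    have hsemi := hopfLaxOn_mul_exp_le hV.convexOn hf hf₀ hK hne ht (add_pos ha hb)
      (ξ m + t * y m) (y m)
    rwa [add_assoc (ξ m), ← add_mul, ← add_assoc t, Real.exp_neg, ← div_eq_mul_inv,
      div_le_iff₀ (Real.exp_pos _)] at hsemi
  · have hend_ne : deriv (fun m ↦ ξ m + (t + a + b) * y m) m ≠ 0 := hend.deriv ▸ hmoving
    have hstart := h.hopfLaxOn_eq_mul_exp hV.convexOn hf hf₀ hK ht (by linarith) hend_ne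
    rw [add_assoc t, add_sub_cancel_left, ← add_assoc t] at hstart
    obtain ⟨D, hD, hB'⟩ := h.exists_isSubgradientAt_velocity hV.convexOn hf hK hpos hT hend
      hmoving hB.hasDerivAt
    rw [hstart, mul_assoc, ← Real.exp_add] at hmiddle
    rw [hB', hstart]
    refine transport_le_of_moving_end (add_pos ha hb).le (hBpos _).le hspeed ?_
      (transportExcess_le hV ha.le hb.le hD)
    convert! hmiddle using 3
    ring

end TransportInequality

section Integral

open Real (exp)

variable {V f : ℝ → ℝ} {K : Set ℝ} {t a b : ℝ} {ξ y : ℝ → ℝ}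

lemma transportPotential_sub_le_integral (hV : IsKineticCost V) (hf : Continuous f)
    (hf₀ : ∀ x, 0 ≤ f x) (hK : IsCompact K) (hpos : ∃ x ∈ K, 0 < f x) (ht : 0 < t) (ha : 0 < a)
    (hb : 0 < b) (h : IsCharacteristicFamily V f K (t + a) (t + a + b) ξ y) {c d : ℝ}
    (hcd : c ≤ d) :
    transportPotential V f K t a b ξ y d - transportPotential V f K t a b ξ y c ≤
      (a + b) * ∫ z in c..d, hopfLaxOn V f K (t + a) z := by
  have hne : K.Nonempty := ⟨_, h.start_mem 0⟩
  have hs : 0 < t + a := add_pos ht ha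
  have hsT : t + a < t + a + b := lt_add_of_pos_right _ hb
  have hlip := locallyLipschitz_hopfLaxOn hV.convexOn.locallyLipschitz hf hK hne
  rw [← intervalIntegral.integral_const_mul]
  refine sub_le_integral_of_locallyLipschitz hcd
    (locallyLipschitz_transportPotential hV.convexOn hf hK hne ht ha hb h)
    (((hlip _).continuous.const_mul _).intervalIntegrable _ _) ?_
  filter_upwards [ae_differentiableAt_of_locallyLipschitz (h.locallyLipschitz_velocity hs hsT),
    ae_differentiableAt_of_locallyLipschitz
      ((hlip (t + a + b)).comp (h.locallyLipschitz_position hs hsT (t + a + b)))] with m hy hB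
  exact deriv_transportPotential_le hV hf hf₀ hK hpos ht ha hb h hy hB

lemma integral_add_integral_le_transportPotential_sub (hV : IsKineticCost V) (hf : Continuous f)
    (hK : IsCompact K) (hpos : ∃ x ∈ K, 0 < f x) (hs : 0 < t + a) (ha : 0 ≤ a)
    (hb : 0 ≤ b) (h : IsCharacteristicFamily V f K (t + a) (t + a + b) ξ y) {c d : ℝ}
    (hc : c ∈ lowerBounds K) (hd : d ∈ upperBounds K) :
    b * (∫ z in (ξ c + t * y c)..(ξ d + t * y d), hopfLaxOn V f K t z) +
        a * (∫ z in (ξ c + (t + a + b) * y c)..(ξ d + (t + a + b) * y d),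
          hopfLaxOn V f K (t + a + b) z) ≤
      transportPotential V f K t a b ξ y d - transportPotential V f K t a b ξ y c := by
  have hVc : Continuous V := hV.convexOn.locallyLipschitz.continuous
  have hsplit (r : ℝ) := intervalIntegral.integral_interval_sub_left (a := 0)
    (b := ξ d + r * y d) (c := ξ c + r * y c) (μ := volume) (f := hopfLaxOn V f K r)
  have hint (r u v : ℝ) : IntervalIntegrable (hopfLaxOn V f K r) volume u v :=
    (locallyLipschitz_hopfLaxOn hV.convexOn.locallyLipschitz hf hK
      ⟨_, h.start_mem 0⟩ r).continuous.intervalIntegrable u v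
  have hB (z : ℝ) : 0 ≤ (a + b) * hopfLaxOn V f K (t + a + b) z :=
    mul_nonneg (add_nonneg ha hb) (hopfLaxOn_pos hVc hf hK hpos _ z).le
  have hright := mul_nonneg (hB (ξ d + (t + a + b) * y d))
    (transportCorrection_nonneg hV.nonneg ha hb (h.velocity_nonneg hs hd))
  have hleft := mul_nonpos_of_nonneg_of_nonpos (hB (ξ c + (t + a + b) * y c))
    (transportCorrection_nonpos hV.nonneg ha hb (h.velocity_nonpos hs hc))
  rw [← hsplit t (hint _ _ _) (hint _ _ _), ← hsplit (t + a + b) (hint _ _ _) (hint _ _ _),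
    transportPotential, transportPotential]
  linarith

lemma integral_hopfLaxOn_add_le (hV : IsKineticCost V) (hf : Continuous f)
    (hf₀ : ∀ x, 0 ≤ f x) (hK : IsCompact K) (hK_conn : K.OrdConnected)
    (hpos : ∃ x ∈ K, 0 < f x) (ht : 0 < t) (ha : 0 < a) (hb : 0 < b)
    (hint : ∀ r, 0 < r → Integrable (hopfLaxOn V f K r)) :
    b * (∫ z, hopfLaxOn V f K t z) + a * (∫ z, hopfLaxOn V f K (t + a + b) z) ≤
      (a + b) * ∫ z, hopfLaxOn V f K (t + a) z := by
  have hs : 0 < t + a := add_pos ht ha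
  have hT : 0 < t + a + b := add_pos hs hb
  obtain ⟨ξ, y, h⟩ := exists_isCharacteristicFamily hV.convexOn hf hf₀ hK hK_conn
    (hpos.imp fun _ ↦ And.left) hs (lt_add_of_pos_right (t + a) hb)
  obtain ⟨d, hd⟩ := hK.bddAbove
  obtain ⟨c, hc⟩ := hK.bddBelow
  have hlim {r : ℝ} (hr : 0 < r) := intervalIntegral_tendsto_integral (hint r hr)
    ((h.tendsto_position_atBot hK hs hr).comp tendsto_neg_atTop_atBot)
    (h.tendsto_position_atTop hK hs hr)
  refine le_of_tendsto_of_tendsto (((hlim ht).const_mul b).add ((hlim hT).const_mul a))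
    ((intervalIntegral_tendsto_integral (hint _ hs) tendsto_neg_atTop_atBot
      tendsto_id).const_mul (a + b)) ?_
  filter_upwards [eventually_ge_atTop 0, eventually_ge_atTop d,
    tendsto_neg_atTop_atBot.eventually_le_atBot c] with R hR hRd hRc
  exact (integral_add_integral_le_transportPotential_sub hV hf hK hpos hs ha.le hb.le h
    (fun x hx ↦ hRc.trans (hc hx)) (fun x hx ↦ (hd hx).trans hRd)).trans
    (transportPotential_sub_le_integral hV hf hf₀ hK hpos ht ha hb h (neg_le_self hR))

lemma concaveOn_integral_hopfLaxOn (hV : IsKineticCost V) (hf : Continuous f)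
    (hf₀ : ∀ x, 0 ≤ f x) (hK : IsCompact K) (hK_conn : K.OrdConnected)
    (hint : ∀ r, 0 < r → Integrable (hopfLaxOn V f K r)) :
    ConcaveOn ℝ (Ioi 0) fun t ↦ ∫ z, hopfLaxOn V f K t z := by
  by_cases hpos : ∃ x ∈ K, 0 < f x
  · refine concaveOn_of_slope_anti_adjacent (convex_Ioi 0) fun {r s T} hr _ hrs hsT ↦ ?_
    have hrs' : 0 < s - r := sub_pos.2 hrs
    have hsT' : 0 < T - s := sub_pos.2 hsT
    have h := integral_hopfLaxOn_add_le hV hf hf₀ hK hK_conn hpos hr hrs' hsT' hint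
    simp only [add_sub_cancel] at h
    rw [div_le_div_iff₀ hsT' hrs']
    linarith
  · push Not at hpos
    simpa [hopfLaxOn_eq_zero fun x hx ↦ le_antisymm (hpos x hx) (hf₀ x)] using
      concaveOn_const 0 (convex_Ioi 0)

end Integral

section Limit

open Real (exp)

variable {V f : ℝ → ℝ}

lemma concaveOn_integral_hopfLaxOn_univ (hV : IsKineticCost V) (hf : Continuous f)
    (hf₀ : ∀ x, 0 ≤ f x) (hfb : ∃ M, ∀ x, f x ≤ M)
    (hint : ∀ t, 0 < t → Integrable (hopfLaxOn V f univ t)) :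
    ConcaveOn ℝ (Ioi 0) fun t ↦ ∫ z, hopfLaxOn V f univ t z := by
  have hne (n : ℕ) : (Icc (-n : ℝ) n).Nonempty := nonempty_Icc.2 (neg_le_self n.cast_nonneg)
  have hmono : Monotone fun n : ℕ ↦ Icc (-n : ℝ) n := fun m n hmn ↦ by
    have hmn' : (m : ℝ) ≤ n := Nat.cast_le.2 hmn
    exact Icc_subset_Icc (neg_le_neg hmn') hmn'
  have hunion : ⋃ n : ℕ, Icc (-n : ℝ) n = univ :=
    iUnion_eq_univ_iff.2 fun x ↦ (exists_nat_ge |x|).imp fun n ↦ abs_le.1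
  have hmeas (n : ℕ) (t : ℝ) : AEStronglyMeasurable (hopfLaxOn V f (Icc (-n) n) t) :=
    (locallyLipschitz_hopfLaxOn hV.convexOn.locallyLipschitz hf isCompact_Icc (hne n)
      t).continuous.aestronglyMeasurable
  have hbound (n : ℕ) {t : ℝ} (ht : 0 < t) :
      ∀ᵐ z, ‖hopfLaxOn V f (Icc (-n) n) t z‖ ≤ hopfLaxOn V f univ t z :=
    Eventually.of_forall fun z ↦ by
      rw [Real.norm_of_nonneg (hopfLaxOn_nonneg (fun x _ ↦ hf₀ x) t z)]
      exact hopfLaxOn_mono hV.nonneg hf₀ hfb (hne n) (subset_univ _) ht.le z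
  have hconcave (n : ℕ) : ConcaveOn ℝ (Ioi 0) fun t ↦ ∫ z, hopfLaxOn V f (Icc (-n) n) t z :=
    concaveOn_integral_hopfLaxOn hV hf hf₀ isCompact_Icc ordConnected_Icc fun t ht ↦
      (hint t ht).mono' (hmeas n t) (hbound n ht)
  refine concaveOn_of_tendsto (l := atTop) (Eventually.of_forall hconcave) fun t ht ↦
    tendsto_integral_of_dominated_convergence _ (fun n ↦ hmeas n t) (hint t ht)
      (fun n ↦ hbound n ht) (Eventually.of_forall fun z ↦ ?_)
  rw [← hunion]
  exact tendsto_hopfLaxOn_of_monotone hV.nonneg hf₀ hfb hmono hne (le_of_lt ht) z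

theorem hopf_lax_integral_concave_gamma_zero_general {h : ℝ → ℝ → ℝ} (hV : IsKineticCost V)
    (hf : Continuous f) (hf₀ : ∀ x, 0 ≤ f x) (hfb : ∃ M, ∀ x, f x ≤ M)
    (hh : ∀ t, 0 < t → ∀ z,
      h t z = sSup {v | ∃ x y : ℝ, z = x + t * y ∧ v = f x * exp (-(t * V y))})
    (hint : ∀ t, 0 < t → Integrable (h t)) : ConcaveOn ℝ (Ioi 0) fun t ↦ ∫ z, h t z := by
  have hh_univ (t : ℝ) (ht : 0 < t) : hopfLaxOn V f univ t = h t :=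
    funext fun z ↦ (hopfLaxOn_univ_eq ht.ne' z).trans (hh t ht z).symm
  refine (concaveOn_integral_hopfLaxOn_univ hV hf hf₀ hfb fun t ht ↦ ?_).congr fun t ht ↦ ?_
  · exact (hh_univ t ht).symm ▸ hint t ht
  · simp only [hh_univ t ht]

end Limit

/-- Theorem B, case γ = 0: concavity in time of the integral of the
log-Hopf-Lax supremal convolution with kinetic cost `|y|^p/p`. -/
theorem hopf_lax_integral_concave_gamma_zero
    (p : ℝ) (hp : 1 ≤ p)
    (f : ℝ → ℝ) (hf0 : ∀ x, 0 ≤ f x) (hfb : ∃ M, ∀ x, f x ≤ M)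
    (hflip : ∃ K, LipschitzWith K f) (hfne : ∃ x, 0 < f x)
    (h : ℝ → ℝ → ℝ)
    (hh : ∀ t, 0 < t → ∀ z, h t z = sSup {v : ℝ | ∃ x y : ℝ, z = x + t * y ∧
      v = f x * Real.exp (-(t * (|y| ^ p / p)))})
    (hint : ∀ t, 0 < t → Integrable (h t))
    (F : ℝ → ℝ) (hF : ∀ t, F t = ∫ z, h t z) :
    ConcaveOn ℝ (Ioi 0) F := by
  obtain ⟨_, hL⟩ := hflip
  exact funext hF ▸ hopf_lax_integral_concave_gamma_zero_general (isKineticCost_abs_rpow_div hp)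
    hL.continuous hf0 hfb hh hint
end

section
/- Let μ be a Borel measure on ℝ with a continuous density ψ : ℝ → [0,∞) with respect to Lebesgue measure, let A ⊆ ℝ be a nonempty compact set, and let V(t) = μ(A + t·[-1,1]). Let s ∈ (0,1] and let t₀ > 0 with V(t₀) > 0. Then the function t ↦ V(t)^s has a left derivative L at t₀ (a derivative within (-∞, t₀]) and a right derivative R at t₀ (a derivative within [t₀, ∞)), and L ≥ R. -/
open MeasureTheory Set Pointwise

/-!
For `t ≥ r > 0` the closed `t`-neighbourhood of a set of diameter at most `2r` is, up to its two
endpoints, that of its infimum and supremum. Hence, up to null sets, the `t`-neighbourhoods of a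
bounded set are those of a fixed finite set. Adjoining a new largest point `a` to a finite set with
largest point `b` enlarges its `t`-neighbourhood by the interval from `max (a - t) (b + t)` to
`a + t`, whose measure is a minimum of two differentiable functions of `t`. Functions whose left
derivative dominates the right one are stable under minima, sums and powers. For finite sets,
neighbourhoods made of half-open intervals `(a - t, a + t]` turn this increment into a disjoint one.
-/

open Filter Topology

/-- `f` has one-sided derivatives at `x`, and the left one dominates the right one, as is the case
for concave functions. -/
def HasConcaveKinkAt (f : ℝ → ℝ) (x : ℝ) : Prop :=
  ∃ L R : ℝ, HasDerivWithinAt f L (Iic x) x ∧ HasDerivWithinAt f R (Ici x) x ∧ R ≤ L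

namespace HasConcaveKinkAt

variable {f g : ℝ → ℝ} {x : ℝ}

lemma of_differentiableAt (hf : DifferentiableAt ℝ f x) : HasConcaveKinkAt f x :=
  ⟨deriv f x, deriv f x, hf.hasDerivAt.hasDerivWithinAt, hf.hasDerivAt.hasDerivWithinAt, le_rfl⟩

lemma continuousAt (hf : HasConcaveKinkAt f x) : ContinuousAt f x := by
  obtain ⟨L, R, hL, hR, -⟩ := hf
  exact continuousAt_iff_continuous_left_right.2 ⟨hL.continuousWithinAt, hR.continuousWithinAt⟩

lemma congr_of_eventuallyEq (hf : HasConcaveKinkAt f x) (h : g =ᶠ[𝓝 x] f) :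
    HasConcaveKinkAt g x := by
  obtain ⟨L, R, hL, hR, hRL⟩ := hf
  exact ⟨L, R, hL.congr_of_eventuallyEq (h.filter_mono nhdsWithin_le_nhds) h.self_of_nhds,
    hR.congr_of_eventuallyEq (h.filter_mono nhdsWithin_le_nhds) h.self_of_nhds, hRL⟩

lemma add (hf : HasConcaveKinkAt f x) (hg : HasConcaveKinkAt g x) :
    HasConcaveKinkAt (fun t ↦ f t + g t) x := by
  obtain ⟨L, R, hL, hR, hRL⟩ := hf
  obtain ⟨L', R', hL', hR', hRL'⟩ := hg
  exact ⟨L + L', R + R', hL.add hL', hR.add hR', add_le_add hRL hRL'⟩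

lemma rpow_const (hf : HasConcaveKinkAt f x) (hx : 0 ≤ f x) {s : ℝ} (hs : 0 ≤ s)
    (h : f x ≠ 0 ∨ 1 ≤ s) : HasConcaveKinkAt (fun t ↦ f t ^ s) x := by
  obtain ⟨L, R, hL, hR, hRL⟩ := hf
  refine ⟨L * s * f x ^ (s - 1), R * s * f x ^ (s - 1), hL.rpow_const h, hR.rpow_const h, ?_⟩
  gcongr

end HasConcaveKinkAt

section Min

variable {f g : ℝ → ℝ} {f' g' x : ℝ}

lemma hasDerivWithinAt_Iic_min (hf : HasDerivWithinAt f f' (Iic x) x)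
    (hg : HasDerivWithinAt g g' (Iic x) x) (hfg : f x = g x) :
    HasDerivWithinAt (fun t ↦ min (f t) (g t)) (max f' g') (Iic x) x := by
  rw [hasDerivWithinAt_iff_tendsto_slope, Iic_sdiff_right] at *
  refine (hf.max hg).congr' ?_
  filter_upwards [self_mem_nhdsWithin] with t ht
  have hneg : t - x ≤ 0 := sub_nonpos.2 (mem_Iio.1 ht).le
  simp only [slope_def_field, ← hfg, min_self, max_div_div_right_of_nonpos hneg,
    min_sub_sub_right]

lemma hasDerivWithinAt_Ici_min (hf : HasDerivWithinAt f f' (Ici x) x)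
    (hg : HasDerivWithinAt g g' (Ici x) x) (hfg : f x = g x) :
    HasDerivWithinAt (fun t ↦ min (f t) (g t)) (min f' g') (Ici x) x := by
  rw [hasDerivWithinAt_iff_tendsto_slope, Ici_sdiff_left] at *
  refine (hf.min hg).congr' ?_
  filter_upwards [self_mem_nhdsWithin] with t ht
  have hpos : 0 ≤ t - x := sub_nonneg.2 (mem_Ioi.1 ht).le
  simp only [slope_def_field, ← hfg, min_self, min_div_div_right hpos, min_sub_sub_right]

lemma HasConcaveKinkAt.min (hf : HasConcaveKinkAt f x) (hg : HasConcaveKinkAt g x) :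
    HasConcaveKinkAt (fun t ↦ min (f t) (g t)) x := by
  rcases lt_trichotomy (f x) (g x) with h | h | h
  · refine hf.congr_of_eventuallyEq ?_
    filter_upwards [hf.continuousAt.eventually_lt hg.continuousAt h] with t ht
    exact min_eq_left ht.le
  · obtain ⟨L, R, hL, hR, hRL⟩ := hf
    obtain ⟨L', R', hL', hR', -⟩ := hg
    exact ⟨_, _, hasDerivWithinAt_Iic_min hL hL' h, hasDerivWithinAt_Ici_min hR hR' h,
      (min_le_left _ _).trans (hRL.trans (le_max_left _ _))⟩
  · refine hg.congr_of_eventuallyEq ?_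
    filter_upwards [hg.continuousAt.eventually_lt hf.continuousAt h] with t ht
    exact min_eq_right ht.le

end Min

lemma mem_add_iff_exists_sub_mem {G : Type*} [AddCommGroup G] {s t : Set G} {x : G} :
    x ∈ s + t ↔ ∃ a ∈ s, x - a ∈ t := by
  simp only [Set.mem_add, ← eq_sub_iff_add_eq', exists_eq_right]

section Neighbourhoods

variable {A : Set ℝ} {a b t : ℝ}

lemma add_Icc_neg_subset_Icc (ha : a ∈ lowerBounds A) (hb : b ∈ upperBounds A) :
    A + Icc (-t) t ⊆ Icc (a - t) (b + t) := by
  rintro _ ⟨y, hy, z, hz, rfl⟩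
  exact ⟨by linarith [ha hy, hz.1], by linarith [hb hy, hz.2]⟩

lemma Ioo_subset_add_Icc_neg (ha : IsGLB A a) (hb : IsLUB A b) (hab : b - a ≤ 2 * t) :
    Ioo (a - t) (b + t) ⊆ A + Icc (-t) t := by
  rintro x ⟨hax, hxb⟩
  rw [mem_add_iff_exists_sub_mem]
  rcases le_or_gt x (a + t) with hx | hx
  · obtain ⟨y, hy, hay, hyx⟩ := ha.exists_between (sub_lt_iff_lt_add.1 hax)
    exact ⟨y, hy, by linarith, by linarith⟩
  · obtain ⟨y, hy, hxy, hyb⟩ := hb.exists_between (sub_lt_iff_lt_add.2 hxb)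
    exact ⟨y, hy, by linarith, by linarith⟩

lemma pair_add_Ioc_neg (hab : a ≤ b) (hba : b - a ≤ 2 * t) :
    {a, b} + Ioc (-t) t = Ioc (a - t) (b + t) := by
  ext x
  simp only [mem_add_iff_exists_sub_mem, mem_insert_iff, mem_singleton_iff, exists_eq_or_imp,
    exists_eq_left, mem_Ioc]
  grind

lemma add_Icc_neg_ae_eq_pair_add_Ioc_neg (μ : Measure ℝ) [NullSingletonClass μ] (hA : A.Nonempty)
    (ha : IsGLB A a) (hb : IsLUB A b) (hba : b - a ≤ 2 * t) :
    A + Icc (-t) t =ᵐ[μ] ({a, b} : Set ℝ) + Ioc (-t) t := by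
  rw [pair_add_Ioc_neg (isGLB_le_isLUB ha hb hA) hba]
  exact ((add_Icc_neg_subset_Icc ha.1 hb.1).eventuallyLE.trans Ioc_ae_eq_Icc.symm.le).antisymm
    (Ioo_ae_eq_Ioc.symm.le.trans (Ioo_subset_add_Icc_neg ha hb hba).eventuallyLE)

lemma exists_finset_add_Icc_neg_ae_eq_of_subset_closedBall (μ : Measure ℝ) [NullSingletonClass μ]
    {c r : ℝ} (hA : A ⊆ Metric.closedBall c r) :
    ∃ S : Finset ℝ, ∀ t, r ≤ t → A + Icc (-t) t =ᵐ[μ] (S : Set ℝ) + Ioc (-t) t := by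
  rcases A.eq_empty_or_nonempty with rfl | hne
  · exact ⟨∅, fun t _ ↦ by simp⟩
  rw [Real.closedBall_eq_Icc] at hA
  have hInf : IsGLB A (sInf A) := isGLB_csInf hne (bddBelow_Icc.mono hA)
  have hSup : IsLUB A (sSup A) := isLUB_csSup hne (bddAbove_Icc.mono hA)
  have hlow : c - r ≤ sInf A := le_csInf hne fun x hx ↦ (hA hx).1
  have hupp : sSup A ≤ c + r := csSup_le hne fun x hx ↦ (hA hx).2
  refine ⟨{sInf A, sSup A}, fun t ht ↦ ?_⟩
  simpa using add_Icc_neg_ae_eq_pair_add_Ioc_neg μ hne hInf hSup (by linarith)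

lemma exists_finset_add_Icc_neg_ae_eq (μ : Measure ℝ) [NullSingletonClass μ]
    (hA : Bornology.IsBounded A) {r : ℝ} (hr : 0 < r) :
    ∃ S : Finset ℝ, ∀ t, r ≤ t → A + Icc (-t) t =ᵐ[μ] (S : Set ℝ) + Ioc (-t) t := by
  obtain ⟨T, -, hT, hAT⟩ := exists_finite_cover_balls_of_isCompact_closure hA.isCompact_closure hr
  have hpiece (c : ℝ) : A ∩ Metric.ball c r ⊆ Metric.closedBall c r :=
    inter_subset_right.trans Metric.ball_subset_closedBall
  choose S hS using fun c ↦ exists_finset_add_Icc_neg_ae_eq_of_subset_closedBall μ (hpiece c)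
  refine ⟨hT.toFinset.biUnion S, fun t ht ↦ ?_⟩
  have hA_eq : A = ⋃ c ∈ T, A ∩ Metric.ball c r := by
    rw [← inter_iUnion₂, inter_eq_left.2 hAT]
  have hS_eq : (hT.toFinset.biUnion S : Set ℝ) = ⋃ c ∈ T, (S c : Set ℝ) := by simp
  rw [hA_eq, hS_eq, iUnion₂_add, iUnion₂_add]
  exact Filter.EventuallyEq.countable_bUnion hT.countable fun c _ ↦ hS c t ht

lemma insert_add_Ioc_neg (hb : IsGreatest A b) (hba : b ≤ a) :
    insert a A + Ioc (-t) t = (A + Ioc (-t) t) ∪ Ioc (max (a - t) (b + t)) (a + t) := by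
  ext x
  simp only [mem_union, mem_add_iff_exists_sub_mem, mem_insert_iff, exists_eq_or_imp, mem_Ioc,
    max_lt_iff]
  constructor
  · rintro (hx | hx)
    · rcases le_or_gt x (b + t) with hxb | hxb
      · exact Or.inl ⟨b, hb.1, by linarith, by linarith⟩
      · exact Or.inr ⟨⟨by linarith, hxb⟩, by linarith⟩
    · exact Or.inl hx
  · rintro (hx | hx)
    · exact Or.inr hx
    · exact Or.inl ⟨by linarith, by linarith⟩

lemma disjoint_add_Ioc_neg (hb : b ∈ upperBounds A) :
    Disjoint (A + Ioc (-t) t) (Ioc (max (a - t) (b + t)) (a + t)) := by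
  rw [Set.disjoint_left]
  rintro _ ⟨y, hy, z, hz, rfl⟩ hx
  linarith [hb hy, hz.2, (le_max_right _ _).trans_lt hx.1]

end Neighbourhoods

section Stieltjes

variable (F : StieltjesFunction ℝ)

lemma stieltjes_measureReal_Ioc {a b : ℝ} (hab : a ≤ b) : F.measure.real (Ioc a b) = F b - F a := by
  rw [measureReal_def, F.measure_Ioc, ENNReal.toReal_ofReal (sub_nonneg.2 (F.mono hab))]

variable {F}

lemma nullSingletonClass_stieltjes_measure (hF : Continuous F) : NullSingletonClass F.measure where
  measure_singleton a := by
    rw [F.measure_singleton, hF.continuousAt.continuousWithinAt.leftLim_eq, sub_self,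
      ENNReal.ofReal_zero]

lemma stieltjes_measureReal_insert_add_Ioc_neg {S : Finset ℝ} {a b t : ℝ}
    (hb : IsGreatest (S : Set ℝ) b) (hba : b ≤ a) (ht : 0 ≤ t) :
    F.measure.real (insert a (S : Set ℝ) + Ioc (-t) t) =
      F.measure.real ((S : Set ℝ) + Ioc (-t) t) +
        min (F (a + t) - F (a - t)) (F (a + t) - F (b + t)) := by
  have hbdd : Bornology.IsBounded ((S : Set ℝ) + Ioc (-t) t) :=
    S.finite_toSet.isBounded.add (Metric.isBounded_Ioc _ _)
  rw [insert_add_Ioc_neg hb hba, measureReal_union (disjoint_add_Ioc_neg hb.2) measurableSet_Ioc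
      hbdd.measure_lt_top.ne measure_Ioc_lt_top.ne,
    stieltjes_measureReal_Ioc F (max_le (by linarith) (by linarith)), F.mono.map_max,
    min_sub_sub_left]

lemma hasConcaveKinkAt_measureReal_finset_add_Ioc_neg (hF : Differentiable ℝ F) (S : Finset ℝ)
    {t₀ : ℝ} (ht₀ : 0 < t₀) :
    HasConcaveKinkAt (fun t ↦ F.measure.real ((S : Set ℝ) + Ioc (-t) t)) t₀ := by
  have hball (a : ℝ) : HasConcaveKinkAt (fun t ↦ F (a + t) - F (a - t)) t₀ :=
    .of_differentiableAt (by fun_prop)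
  have hgap (a b : ℝ) : HasConcaveKinkAt (fun t ↦ F (a + t) - F (b + t)) t₀ :=
    .of_differentiableAt (by fun_prop)
  induction S using Finset.induction_on_max with
  | empty => simpa using HasConcaveKinkAt.of_differentiableAt (differentiableAt_const (0 : ℝ))
  | insert a S hlt ih =>
    rcases S.eq_empty_or_nonempty with rfl | hne
    · refine (hball a).congr_of_eventuallyEq ?_
      filter_upwards [lt_mem_nhds ht₀] with t ht
      rw [← stieltjes_measureReal_Ioc F (by linarith)]
      simp [sub_eq_add_neg, add_comm]
    · have hmax : IsGreatest (S : Set ℝ) (S.max' hne) := S.isGreatest_max' hne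
      refine (ih.add ((hball a).min (hgap a (S.max' hne)))).congr_of_eventuallyEq ?_
      filter_upwards [lt_mem_nhds ht₀] with t ht
      rw [Finset.coe_insert,
        stieltjes_measureReal_insert_add_Ioc_neg hmax (hlt _ hmax.1).le ht.le]

end Stieltjes

lemma exists_stieltjesFunction_measure_eq_withDensity {ψ : ℝ → ℝ} (hψc : Continuous ψ)
    (hψ0 : ∀ x, 0 ≤ ψ x) :
    ∃ F : StieltjesFunction ℝ, Differentiable ℝ F ∧
      volume.withDensity (fun x ↦ ENNReal.ofReal (ψ x)) = F.measure := by
  have hderiv (y : ℝ) : HasDerivAt (fun u ↦ ∫ x in (0 : ℝ)..u, ψ x) (ψ y) y :=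
    hψc.integral_hasStrictDerivAt 0 y |>.hasDerivAt
  let F : StieltjesFunction ℝ :=
    { toFun := fun u ↦ ∫ x in (0 : ℝ)..u, ψ x
      mono' := monotone_of_hasDerivAt_nonneg hderiv hψ0
      right_continuous' := fun y ↦ (hderiv y).continuousAt.continuousWithinAt }
  have : IsLocallyFiniteMeasure (volume.withDensity fun x ↦ ENNReal.ofReal (ψ x)) :=
    IsLocallyFiniteMeasure.withDensity_ofReal hψc
  refine ⟨F, fun y ↦ (hderiv y).differentiableAt, Measure.ext_of_Ioc _ _ fun a b hab ↦ ?_⟩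
  have hint (c d : ℝ) : IntervalIntegrable ψ volume c d := hψc.intervalIntegrable c d
  calc
    volume.withDensity (fun x ↦ ENNReal.ofReal (ψ x)) (Ioc a b)
      = ENNReal.ofReal (∫ x in Ioc a b, ψ x) := by
        rw [withDensity_apply _ measurableSet_Ioc, ofReal_integral_eq_lintegral_ofReal
          hψc.integrableOn_Ioc (Eventually.of_forall hψ0)]
    _ = ENNReal.ofReal (F b - F a) := by
        rw [← intervalIntegral.integral_of_le hab.le,
          ← intervalIntegral.integral_interval_sub_left (hint 0 b) (hint 0 a)]
    _ = F.measure (Ioc a b) := (F.measure_Ioc a b).symm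

theorem parallel_volume_one_sided_derivatives_general {F : StieltjesFunction ℝ}
    (hF : Differentiable ℝ F) {A : Set ℝ} (hA : Bornology.IsBounded A) {s t₀ : ℝ} (hs : 0 ≤ s)
    (ht₀ : 0 < t₀) (h : F.measure.real (A + t₀ • Icc (-1 : ℝ) 1) ≠ 0 ∨ 1 ≤ s) :
    HasConcaveKinkAt (fun t ↦ F.measure.real (A + t • Icc (-1 : ℝ) 1) ^ s) t₀ := by
  have := nullSingletonClass_stieltjes_measure hF.continuous
  obtain ⟨S, hS⟩ := exists_finset_add_Icc_neg_ae_eq F.measure hA (half_pos ht₀)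
  have hV : HasConcaveKinkAt (fun t ↦ F.measure.real (A + t • Icc (-1 : ℝ) 1)) t₀ := by
    refine (hasConcaveKinkAt_measureReal_finset_add_Ioc_neg hF S ht₀).congr_of_eventuallyEq ?_
    filter_upwards [lt_mem_nhds ht₀, lt_mem_nhds (half_lt_self ht₀)] with t ht0 ht
    rw [LinearOrderedField.smul_Icc ht0, mul_neg_one, mul_one, measureReal_congr (hS t ht.le)]
  exact hV.rpow_const measureReal_nonneg hs h

/-- For a measure with continuous density on ℝ, the s-power of the parallel
μ-volume has one-sided derivatives at every t₀ > 0 with positive volume,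
and the left derivative dominates the right one. -/
theorem parallel_volume_one_sided_derivatives
    (ψ : ℝ → ℝ) (hψc : Continuous ψ) (hψ0 : ∀ x, 0 ≤ ψ x)
    (A : Set ℝ) (hA : IsCompact A) (hAne : A.Nonempty)
    (s : ℝ) (hs : s ∈ Ioc (0 : ℝ) 1) (t₀ : ℝ) (ht₀ : 0 < t₀)
    (hpos : 0 < ((volume.withDensity fun x => ENNReal.ofReal (ψ x))
      (A + t₀ • Icc (-1 : ℝ) 1)).toReal) :
    ∃ L R : ℝ,
      HasDerivWithinAt
        (fun t => ((volume.withDensity fun x => ENNReal.ofReal (ψ x))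
          (A + t • Icc (-1 : ℝ) 1)).toReal ^ s) L (Iic t₀) t₀ ∧
      HasDerivWithinAt
        (fun t => ((volume.withDensity fun x => ENNReal.ofReal (ψ x))
          (A + t • Icc (-1 : ℝ) 1)).toReal ^ s) R (Ici t₀) t₀ ∧
      R ≤ L := by
  obtain ⟨F, hF, hFψ⟩ := exists_stieltjesFunction_measure_eq_withDensity hψc hψ0
  rw [hFψ] at hpos ⊢
  exact parallel_volume_one_sided_derivatives_general hF hA.isBounded hs.1.le ht₀ (.inl hpos.ne')
end

section
/- Let s ∈ (1/2, 1), let γ = s/(1-s) (so γ > 1), let b = 10·(1 - 2^{(1-γ)/γ})^{-1}, let μ be the Borel measure on ℝ with density x ↦ x^{1/γ}·1_{[0,b]}(x) with respect to Lebesgue measure, and let A = [0,1] ∪ [2,b]. Then the function t ↦ μ(A + t·[-1,1]) is not s-concave on [0,∞): there exist t₁, t₂ ≥ 0 with μ(A + t₁·[-1,1])·μ(A + t₂·[-1,1]) > 0 and λ ∈ [0,1] such that μ(A + ((1-λ)t₁ + λt₂)·[-1,1]) < ((1-λ)·μ(A + t₁·[-1,1])^s + λ·μ(A + t₂·[-1,1])^s)^{1/s}.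 -/
open MeasureTheory Set Pointwise

/-!
Write `V t = μ (A + t • [-1, 1])`. For small `t ≥ 0` the two components of `A = [0, 1] ∪ [2, b]`
only grow into the gap `(1, 2)`, so with `f x = x ^ (1 / γ)` one has `V' t = f (1 + t) + f (2 - t)`
and `V'' 0 = f' 1 - f' 2`, which is positive because `γ > 1` makes `f'` decreasing. If `V` were
`s`-concave, then `V ^ s` would be concave near `0`, forcing `V 0 * V'' 0 ≤ (1 - s) * V' 0 ^ 2`.
The right-hand side does not depend on `b` while `V 0` grows with `b`, so this fails for large `b`.
-/

/-- `s`-concavity on `S` of a nonnegative function `F`, for `s ≠ 0`: the inequality is required only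
at pairs of points where `F` does not vanish, expressed through the product. Convexity of `S` is
not part of the definition. -/
def SConcaveOn {E : Type*} [AddCommMonoid E] [Module ℝ E] (s : ℝ) (S : Set E) (F : E → ℝ) : Prop :=
  ∀ x ∈ S, ∀ y ∈ S, 0 < F x * F y → ∀ l ∈ Icc (0 : ℝ) 1,
    ((1 - l) * F x ^ s + l * F y ^ s) ^ (1 / s) ≤ F ((1 - l) • x + l • y)

/-- The parallel volume of `A` at distance `t`: the `μ`-measure of the closed `t`-neighbourhood of
`A`, written as the Minkowski sum `A + t • [-1, 1]`. As a real number it is `0` when that measure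
is infinite. -/
noncomputable def parallelVolume (μ : Measure ℝ) (A : Set ℝ) (t : ℝ) : ℝ :=
  μ.real (A + t • Icc (-1 : ℝ) 1)

section SecondOrderCondition

theorem SConcaveOn.concaveOn_rpow {E : Type*} [AddCommMonoid E] [Module ℝ E] {s : ℝ} {S T : Set E}
    {F : E → ℝ} (hF : SConcaveOn s S F) (hs : 0 < s) (hT : Convex ℝ T) (hTS : T ⊆ S)
    (hpos : ∀ x ∈ T, 0 < F x) : ConcaveOn ℝ T fun x => F x ^ s := by
  refine ⟨hT, fun x hx y hy k l hk hl hkl => ?_⟩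
  obtain rfl : k = 1 - l := by linarith
  have hxs : 0 ≤ F x ^ s := Real.rpow_nonneg (hpos x hx).le s
  have hys : 0 ≤ F y ^ s := Real.rpow_nonneg (hpos y hy).le s
  have hle := hF x (hTS hx) y (hTS hy) (mul_pos (hpos x hx) (hpos y hy)) l ⟨hl, by linarith⟩
  rw [one_div] at hle
  exact (Real.rpow_inv_le_iff_of_pos (by positivity) (hpos _ (hT hx hy hk hl hkl)).le hs).1 hle

variable {S : Set ℝ} {x : ℝ}

theorem second_deriv_nonpos_of_concaveOn {φ φ' : ℝ → ℝ} {φ'' : ℝ} (hS : UniqueDiffOn ℝ S)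
    (hconc : ConcaveOn ℝ S φ) (hφ : ∀ t ∈ S, HasDerivWithinAt φ (φ' t) S t) (hx : x ∈ S)
    (hφ' : HasDerivWithinAt φ' φ'' S x) : φ'' ≤ 0 := by
  have hderiv : EqOn (derivWithin φ S) φ' S := fun t ht => (hφ t ht).derivWithin (hS t ht)
  have hanti : AntitoneOn φ' S :=
    (hconc.antitoneOn_derivWithin fun t ht => (hφ t ht).differentiableWithinAt).congr hderiv
  rw [← hφ'.derivWithin (hS x hx)]
  exact hanti.derivWithin_nonpos

theorem mul_second_deriv_le_of_concaveOn_rpow {s : ℝ} {H H' : ℝ → ℝ} {H'' : ℝ} (hs : 0 < s)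
    (hS : UniqueDiffOn ℝ S) (hconc : ConcaveOn ℝ S fun t => H t ^ s) (hpos : ∀ t ∈ S, 0 < H t)
    (hH : ∀ t ∈ S, HasDerivWithinAt H (H' t) S t) (hx : x ∈ S)
    (hH' : HasDerivWithinAt H' H'' S x) : H x * H'' ≤ (1 - s) * H' x ^ 2 := by
  have hHx := hpos x hx
  have hnonpos := second_deriv_nonpos_of_concaveOn hS hconc
    (fun t ht => (hH t ht).rpow_const (Or.inl (hpos t ht).ne')) hx
    ((hH'.mul_const s).mul ((hH x hx).rpow_const (p := s - 1) (Or.inl hHx.ne')))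
  have hfactor : H'' * s * H x ^ (s - 1) + H' x * s * (H' x * (s - 1) * H x ^ (s - 1 - 1)) =
      s * H x ^ (s - 1 - 1) * (H x * H'' - (1 - s) * H' x ^ 2) := by
    rw [Real.rpow_sub_one hHx.ne' (s - 1)]
    field_simp
    ring
  rw [hfactor] at hnonpos
  have hcoeff : 0 < s * H x ^ (s - 1 - 1) := by positivity
  linarith [nonpos_of_mul_nonpos_right hnonpos hcoeff]

end SecondOrderCondition

theorem withDensity_ofReal_ite_mem {α : Type*} [MeasurableSpace α] (μ : Measure α) {S : Set α}
    [DecidablePred (· ∈ S)] (hS : MeasurableSet S) (f : α → ℝ) :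
    μ.withDensity (fun x => ENNReal.ofReal (if x ∈ S then f x else 0)) =
      (μ.restrict S).withDensity fun x => ENNReal.ofReal (f x) := by
  rw [← withDensity_indicator hS]
  congr 1 with x
  by_cases hx : x ∈ S <;> simp [hx]

theorem withDensity_ofReal_real_apply {α : Type*} [MeasurableSpace α] {μ : Measure α} {f : α → ℝ}
    {T : Set α} (hT : MeasurableSet T) (hf : AEStronglyMeasurable f (μ.restrict T))
    (hnonneg : 0 ≤ᵐ[μ.restrict T] f) :
    (μ.withDensity fun x => ENNReal.ofReal (f x)).real T = ∫ x in T, f x ∂μ := by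
  rw [measureReal_def, withDensity_apply _ hT, integral_eq_lintegral_of_nonneg_ae hnonneg hf]

theorem smul_Icc_neg_one_one {t : ℝ} (ht : 0 ≤ t) : t • Icc (-1 : ℝ) 1 = Icc (-t) t := by
  have himage := image_mul_left_Icc ht (by norm_num : (-1 : ℝ) ≤ 1)
  rwa [mul_neg, mul_one] at himage

theorem Icc_union_Icc_add_smul_Icc {u c d v t : ℝ} (huc : u ≤ c) (hdv : d ≤ v) (ht : 0 ≤ t) :
    (Icc u c ∪ Icc d v) + t • Icc (-1 : ℝ) 1 = Icc (u - t) (c + t) ∪ Icc (d - t) (v + t) := by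
  rw [smul_Icc_neg_one_one ht, union_add, Icc_add_Icc huc (by linarith),
    Icc_add_Icc hdv (by linarith)]
  simp only [sub_eq_add_neg]

section TwoIntervals

variable {f : ℝ → ℝ} {u c d v t : ℝ}

theorem parallelVolume_Icc_union_Icc (hf : Continuous f) (hnonneg : ∀ x ∈ Icc u v, 0 ≤ f x)
    (huc : u ≤ c) (hdv : d ≤ v) (ht : 0 ≤ t) (htcd : c + t < d - t) :
    parallelVolume ((volume.restrict (Icc u v)).withDensity fun x => ENNReal.ofReal (f x))
      (Icc u c ∪ Icc d v) t = (∫ x in u..(c + t), f x) + ∫ x in (d - t)..v, f x := by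
  have hmeas : MeasurableSet (Icc (u - t) (c + t) ∪ Icc (d - t) (v + t)) :=
    measurableSet_Icc.union measurableSet_Icc
  have hinter : (Icc (u - t) (c + t) ∪ Icc (d - t) (v + t)) ∩ Icc u v =
      Icc u (c + t) ∪ Icc (d - t) v := by
    rw [union_inter_distrib_right, Icc_inter_Icc, Icc_inter_Icc, sup_of_le_right (by linarith),
      inf_of_le_left (by linarith), sup_of_le_left (by linarith), inf_of_le_right (by linarith)]
  have hdisj : Disjoint (Icc u (c + t)) (Icc (d - t) v) :=
    disjoint_left.2 fun x hx hx' => (hx.2.trans_lt htcd).not_ge hx'.1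
  rw [parallelVolume, Icc_union_Icc_add_smul_Icc huc hdv ht,
    withDensity_ofReal_real_apply hmeas hf.aestronglyMeasurable
      (ae_restrict_of_ae (ae_restrict_of_forall_mem measurableSet_Icc hnonneg)),
    Measure.restrict_restrict hmeas, hinter,
    setIntegral_union hdisj measurableSet_Icc hf.integrableOn_Icc hf.integrableOn_Icc,
    integral_Icc_eq_integral_Ioc, integral_Icc_eq_integral_Ioc,
    intervalIntegral.integral_of_le (by linarith), intervalIntegral.integral_of_le (by linarith)]

theorem hasDerivAt_integral_add_integral_sub (hf : Continuous f) (u c d v t : ℝ) :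
    HasDerivAt (fun t => (∫ x in u..(c + t), f x) + ∫ x in (d - t)..v, f x)
      (f (c + t) + f (d - t)) t := by
  have hleft : HasDerivAt (fun y => ∫ x in u..y, f x) (f (c + t)) (c + t) :=
    (hf.integral_hasStrictDerivAt u (c + t)).hasDerivAt
  have hright : HasDerivAt (fun y => ∫ x in y..v, f x) (-f (d - t)) (d - t) :=
    intervalIntegral.integral_hasDerivAt_left (hf.intervalIntegrable _ _)
      hf.stronglyMeasurable.stronglyMeasurableAtFilter hf.continuousAt
  exact ((hleft.comp_const_add c t).fun_add (hright.comp_const_sub d t)).congr_deriv (by ring)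

theorem integral_add_integral_le_of_enlarge (hf : Continuous f) (hnonneg : ∀ x ∈ Icc u v, 0 ≤ f x)
    (huc : u ≤ c) (hdv : d ≤ v) (ht : 0 ≤ t) (hcv : c + t ≤ v) (hud : u ≤ d - t) :
    (∫ x in u..c, f x) + ∫ x in d..v, f x ≤
      (∫ x in u..(c + t), f x) + ∫ x in (d - t)..v, f x := by
  refine add_le_add
    (intervalIntegral.integral_mono_interval le_rfl huc (by linarith) ?_
      (hf.intervalIntegrable _ _))
    (intervalIntegral.integral_mono_interval (by linarith) hdv le_rfl ?_
      (hf.intervalIntegrable _ _))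
  · exact ae_restrict_of_forall_mem measurableSet_Ioc fun x hx =>
      hnonneg x ⟨hx.1.le, by linarith [hx.2]⟩
  · exact ae_restrict_of_forall_mem measurableSet_Ioc fun x hx =>
      hnonneg x ⟨by linarith [hx.1], hx.2⟩

theorem mul_deriv_sub_deriv_le_of_sConcaveOn_parallelVolume {s c' d' : ℝ} (hs : 0 < s)
    (hf : Continuous f) (hnonneg : ∀ x ∈ Icc u v, 0 ≤ f x) (huc : u ≤ c) (hcd : c < d)
    (hdv : d ≤ v) (hc' : HasDerivAt f c' c) (hd' : HasDerivAt f d' d)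
    (hpos : 0 < (∫ x in u..c, f x) + ∫ x in d..v, f x)
    (hconc : SConcaveOn s (Ici 0) (parallelVolume
      ((volume.restrict (Icc u v)).withDensity fun x => ENNReal.ofReal (f x))
      (Icc u c ∪ Icc d v))) :
    ((∫ x in u..c, f x) + ∫ x in d..v, f x) * (c' - d') ≤ (1 - s) * (f c + f d) ^ 2 := by
  obtain ⟨r, hr, hrcd⟩ : ∃ r, 0 < r ∧ c + r < d - r := ⟨(d - c) / 3, by linarith, by linarith⟩
  set H : ℝ → ℝ := fun t => (∫ x in u..(c + t), f x) + ∫ x in (d - t)..v, f x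
  have hvol : EqOn (parallelVolume _ (Icc u c ∪ Icc d v)) H (Icc 0 r) := fun t ht =>
    parallelVolume_Icc_union_Icc hf hnonneg huc hdv ht.1 (by linarith [ht.2])
  have hHpos : ∀ t ∈ Icc 0 r, 0 < H t := fun t ht => hpos.trans_le
    (integral_add_integral_le_of_enlarge hf hnonneg huc hdv ht.1 (by linarith [ht.2])
      (by linarith [ht.2]))
  have hHconc : ConcaveOn ℝ (Icc 0 r) fun t => H t ^ s :=
    (hconc.concaveOn_rpow hs (convex_Icc 0 r) Icc_subset_Ici_self
      fun t ht => (hHpos t ht).trans_eq (hvol ht).symm).congr fun t ht => by simp only [hvol ht]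
  have hH' : HasDerivAt (fun t => f (c + t) + f (d - t)) (c' + -d') 0 :=
    (HasDerivAt.comp_const_add c 0 (by rwa [add_zero])).add
      (HasDerivAt.comp_const_sub d 0 (by rwa [sub_zero]))
  simpa only [H, add_zero, sub_zero, ← sub_eq_add_neg] using
    mul_second_deriv_le_of_concaveOn_rpow hs (uniqueDiffOn_Icc hr) hHconc hHpos
      (fun t _ => (hasDerivAt_integral_add_integral_sub hf u c d v t).hasDerivWithinAt)
      (left_mem_Icc.2 hr.le) hH'.hasDerivWithinAt

end TwoIntervals

section PowerDensity

variable {a b : ℝ}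

theorem two_rpow_sub_one_lt_one (ha : a < 1) : (2 : ℝ) ^ (a - 1) < 1 :=
  Real.rpow_lt_one_of_one_lt_of_neg one_lt_two (by linarith)

theorem two_lt_of_nine_halves_mul_inv_le (ha₁ : a < 1)
    (hb : 9 / 2 * (1 - (2 : ℝ) ^ (a - 1))⁻¹ ≤ b) : 2 < b := by
  have hone : 1 ≤ (1 - (2 : ℝ) ^ (a - 1))⁻¹ :=
    (one_le_inv₀ (sub_pos.2 (two_rpow_sub_one_lt_one ha₁))).2
      (by linarith [Real.rpow_pos_of_pos two_pos (a - 1)])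
  linarith

theorem one_add_two_rpow_sq_lt (ha₀ : 0 < a) (ha₁ : a < 1)
    (hb : 9 / 2 * (1 - (2 : ℝ) ^ (a - 1))⁻¹ ≤ b) :
    (1 + (2 : ℝ) ^ a) ^ 2 < (1 - 2 ^ (a + 1) + b ^ (a + 1)) * (1 - 2 ^ (a - 1)) := by
  have hb₂ : 2 < b := two_lt_of_nine_halves_mul_inv_le ha₁ hb
  have hgap : 0 < 1 - (2 : ℝ) ^ (a - 1) := sub_pos.2 (two_rpow_sub_one_lt_one ha₁)
  have hb_gap : 9 / 2 ≤ b * (1 - (2 : ℝ) ^ (a - 1)) := by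
    rwa [← div_eq_mul_inv, div_le_iff₀ hgap] at hb
  have hplus : (2 : ℝ) ^ (a + 1) = 2 * 2 ^ a := by rw [Real.rpow_add_one two_ne_zero, mul_comm]
  have hminus : (2 : ℝ) ^ (a - 1) = 2 ^ a / 2 := Real.rpow_sub_one two_ne_zero a
  -- The constant `9 / 2` is read off `(1 + y) ^ 2 = (1 - 2 * y) * (1 - y / 2) + y * (9 / 2)`.
  calc (1 + (2 : ℝ) ^ a) ^ 2
      = (1 - 2 ^ (a + 1)) * (1 - 2 ^ (a - 1)) + 2 ^ a * (9 / 2) := by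
        rw [hplus, hminus]
        ring
    _ < (1 - 2 ^ (a + 1)) * (1 - 2 ^ (a - 1)) + b ^ a * (9 / 2) := by
        gcongr
    _ ≤ (1 - 2 ^ (a + 1)) * (1 - 2 ^ (a - 1)) + b ^ a * (b * (1 - 2 ^ (a - 1))) := by
        gcongr
    _ = (1 - 2 ^ (a + 1) + b ^ (a + 1)) * (1 - 2 ^ (a - 1)) := by
        rw [Real.rpow_add_one (by linarith : b ≠ 0)]
        ring

theorem not_sConcaveOn_parallelVolume_rpow {s : ℝ} (ha₀ : 0 < a) (ha₁ : a < 1)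
    (hs : 1 / (a + 1) ≤ s) (hb : 9 / 2 * (1 - (2 : ℝ) ^ (a - 1))⁻¹ ≤ b) :
    ¬ SConcaveOn s (Ici 0) (parallelVolume
      ((volume.restrict (Icc 0 b)).withDensity fun x => ENNReal.ofReal (x ^ a))
      (Icc 0 1 ∪ Icc 2 b)) := by
  intro hconc
  have hs₀ : 0 < s := lt_of_lt_of_le (by positivity) hs
  have hb₂ : 2 < b := two_lt_of_nine_halves_mul_inv_le ha₁ hb
  have hgap : 0 < 1 - (2 : ℝ) ^ (a - 1) := sub_pos.2 (two_rpow_sub_one_lt_one ha₁)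
  have hvol : (∫ x in (0 : ℝ)..1, x ^ a) + ∫ x in (2 : ℝ)..b, x ^ a =
      (1 - 2 ^ (a + 1) + b ^ (a + 1)) / (a + 1) := by
    rw [integral_rpow (Or.inl (by linarith)), integral_rpow (Or.inl (by linarith)),
      Real.one_rpow, Real.zero_rpow (by linarith)]
    ring
  have hkey := one_add_two_rpow_sq_lt ha₀ ha₁ hb
  have hpos : 0 < (∫ x in (0 : ℝ)..1, x ^ a) + ∫ x in (2 : ℝ)..b, x ^ a := by
    rw [hvol]
    exact div_pos (pos_of_mul_pos_left ((sq_nonneg _).trans_lt hkey) hgap.le) (by linarith)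
  have hle := mul_deriv_sub_deriv_le_of_sConcaveOn_parallelVolume hs₀
    (Real.continuous_rpow_const ha₀.le) (fun x hx => Real.rpow_nonneg hx.1 a) zero_le_one
    one_lt_two hb₂.le (Real.hasDerivAt_rpow_const (Or.inl one_ne_zero))
    (Real.hasDerivAt_rpow_const (Or.inl two_ne_zero)) hpos hconc
  rw [hvol, Real.one_rpow, Real.one_rpow] at hle
  have hs_compl : 1 - s ≤ a / (a + 1) := by
    have : 1 - 1 / (a + 1) = a / (a + 1) := by field_simp; ring
    linarith
  refine hle.not_gt ?_
  calc (1 - s) * (1 + (2 : ℝ) ^ a) ^ 2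
      ≤ a / (a + 1) * (1 + 2 ^ a) ^ 2 := by gcongr
    _ < a / (a + 1) * ((1 - 2 ^ (a + 1) + b ^ (a + 1)) * (1 - 2 ^ (a - 1))) := by gcongr
    _ = (1 - 2 ^ (a + 1) + b ^ (a + 1)) / (a + 1) * (a * 1 - a * 2 ^ (a - 1)) := by ring

end PowerDensity

theorem parallel_volume_not_sconcave_large_s_general {s γ b : ℝ} (hγ : 1 < γ)
    (hs : γ / (1 + γ) ≤ s) (hb : 9 / 2 * (1 - (2 : ℝ) ^ ((1 - γ) / γ))⁻¹ ≤ b) :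
    ¬ SConcaveOn s (Ici 0) (parallelVolume
      (volume.withDensity fun x => ENNReal.ofReal (if x ∈ Icc (0 : ℝ) b then x ^ (1 / γ) else 0))
      (Icc 0 1 ∪ Icc 2 b)) := by
  have hγ₀ : 0 < γ := by linarith
  have hexp : (1 - γ) / γ = 1 / γ - 1 := by field_simp
  have hs_inv : 1 / (1 / γ + 1) = γ / (1 + γ) := by field_simp
  rw [withDensity_ofReal_ite_mem _ measurableSet_Icc]
  exact not_sConcaveOn_parallelVolume_rpow (by positivity) ((div_lt_one hγ₀).2 hγ)
    (hs_inv.trans_le hs) (hexp ▸ hb)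

/-- For s ∈ (1/2, 1) the parallel μ-volume of `A = [0,1] ∪ [2,b]` with respect to
the s-concave measure with density `x^{1/γ} 1_{[0,b]}` is not s-concave. -/
theorem parallel_volume_not_sconcave_large_s
    (s : ℝ) (hs : s ∈ Ioo (1 / 2 : ℝ) 1) (γ : ℝ) (hγ : γ = s / (1 - s))
    (b : ℝ) (hb : b = 10 * (1 - (2 : ℝ) ^ ((1 - γ) / γ))⁻¹)
    (μ : Measure ℝ)
    (hμ : μ = volume.withDensity fun x =>
      ENNReal.ofReal (if x ∈ Icc (0 : ℝ) b then x ^ (1 / γ) else 0))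
    (A : Set ℝ) (hA : A = Icc (0 : ℝ) 1 ∪ Icc 2 b) :
    ∃ t₁ t₂ : ℝ, 0 ≤ t₁ ∧ 0 ≤ t₂ ∧
      0 < (μ (A + t₁ • Icc (-1 : ℝ) 1)).toReal * (μ (A + t₂ • Icc (-1 : ℝ) 1)).toReal ∧
      ∃ l ∈ Icc (0 : ℝ) 1,
        (μ (A + ((1 - l) * t₁ + l * t₂) • Icc (-1 : ℝ) 1)).toReal <
          ((1 - l) * (μ (A + t₁ • Icc (-1 : ℝ) 1)).toReal ^ s
            + l * (μ (A + t₂ • Icc (-1 : ℝ) 1)).toReal ^ s) ^ (1 / s) := by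
  obtain ⟨hs_half, hs_one⟩ := hs
  have hs_compl : 0 < 1 - s := by linarith
  have hγ_one : 1 < γ := by rw [hγ, one_lt_div hs_compl]; linarith
  have hs_eq : γ / (1 + γ) = s := by rw [hγ]; field_simp; ring
  have hgap : (2 : ℝ) ^ ((1 - γ) / γ) < 1 :=
    Real.rpow_lt_one_of_one_lt_of_neg one_lt_two (div_neg_of_neg_of_pos (by linarith) (by linarith))
  have hb_le : 9 / 2 * (1 - (2 : ℝ) ^ ((1 - γ) / γ))⁻¹ ≤ b := by
    linarith [inv_pos.2 (sub_pos.2 hgap)]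
  by_contra! hconc
  refine parallel_volume_not_sconcave_large_s_general hγ_one hs_eq.le hb_le ?_
  rw [← hμ, ← hA]
  exact fun t₁ ht₁ t₂ ht₂ => hconc t₁ t₂ ht₁ ht₂
end

section
/- Let I ⊆ ℝ be an open interval and let ψ : ℝ → [0,∞) be a function that is concave on I and vanishes outside I, and let μ be the Borel measure on ℝ with density ψ with respect to Lebesgue measure. Let A ⊆ ℝ be a nonempty compact set and let d > 0 be such that A + [-d,d] ⊆ I. Then the function t ↦ μ(A + t·[-1,1]) is concave on [0,d]. -/
open MeasureTheory Set Pointwise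

open Metric Filter Topology

/-!
For a finite set, insert the points from left to right. Adding a new rightmost point `x` to a set
with greatest element `b` enlarges the closed `t`-neighborhood by the interval
`(max (x - t) (b + t), x + t]`, so, `ψ` being nonnegative, the volume grows by the minimum of
`∫ y in x - t..x + t, ψ y` and `∫ y in b + t..x + t, ψ y`. Both are concave in `t`: the first has
derivative `ψ (x - t) + ψ (x + t)`, which is antitone since it is an even concave function of `t`;
the second is `∫ y in b..x, ψ (y + t)`, an integral of concave functions.

A compact set `A` is approximated by finite `ε`-nets `N ⊆ A`: the closed `(t + ε)`-neighborhood of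
`N` lies between the closed `t`- and `(t + ε)`-neighborhoods of `A`, and their volumes have the same
limit as `ε → 0`. Since `I` is open, there is room to increase `t = d` by a small `ε`.
-/

section Concave

variable {𝕜 E β : Type*}

lemma concaveOn_of_tendsto_s7 [Semiring 𝕜] [PartialOrder 𝕜] [AddCommMonoid E] [SMul 𝕜 E]
    [AddCommMonoid β] [PartialOrder β] [SMul 𝕜 β] [TopologicalSpace β] [OrderClosedTopology β]
    [ContinuousAdd β] [ContinuousConstSMul 𝕜 β] {ι : Type*} {l : Filter ι} [l.NeBot] {s : Set E}
    {f : ι → E → β} {g : E → β} (hf : ∀ᶠ i in l, ConcaveOn 𝕜 s (f i))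
    (hfg : ∀ x ∈ s, Tendsto (f · x) l (𝓝 (g x))) : ConcaveOn 𝕜 s g := by
  obtain ⟨i, hi⟩ := hf.exists
  refine ⟨hi.1, fun x hx y hy a b ha hb hab => ?_⟩
  refine le_of_tendsto_of_tendsto (((hfg x hx).const_smul a).add ((hfg y hy).const_smul b))
    (hfg _ (hi.1 hx hy ha hb hab)) ?_
  filter_upwards [hf] with j hj using hj.2 hx hy ha hb hab

variable [Field 𝕜] [LinearOrder 𝕜] [IsStrictOrderedRing 𝕜] [AddCommGroup E] [Module 𝕜 E]
  [AddCommGroup β] [LinearOrder β] [IsOrderedAddMonoid β] [Module 𝕜 β] [IsStrictOrderedModule 𝕜 β]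

lemma antitoneOn_of_concaveOn_of_even {s : Set 𝕜} {f : 𝕜 → β} (hf : ConcaveOn 𝕜 s f)
    (hs : ∀ t ∈ s, -t ∈ s) (hf_even : f.Even) : AntitoneOn f (s ∩ Ici 0) := by
  intro u hu t ht hut
  have hu_mem : u ∈ Icc (-t) t := ⟨(neg_nonpos.2 ht.2).trans hu.2, hut⟩
  simpa only [hf_even t, min_self] using hf.min_le_of_mem_Icc (hs t ht.1) ht.1 hu_mem

lemma antitoneOn_symmetric_sum {I : Set E} {ψ : E → β} (hψ : ConcaveOn 𝕜 I ψ) (x v : E) :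
    AntitoneOn (fun t : 𝕜 => ψ (x - t • v) + ψ (x + t • v))
      {t | 0 ≤ t ∧ x - t • v ∈ I ∧ x + t • v ∈ I} := by
  set s : Set 𝕜 := {t | x - t • v ∈ I ∧ x + t • v ∈ I}
  have hsub : ConcaveOn 𝕜 {t : 𝕜 | x - t • v ∈ I} (fun t => ψ (x - t • v)) := by
    simpa [Function.comp_def, preimage, AffineMap.lineMap_apply, ← sub_eq_neg_add] using
      hψ.comp_affineMap (AffineMap.lineMap x (x - v))
  have hadd : ConcaveOn 𝕜 {t : 𝕜 | x + t • v ∈ I} (fun t => ψ (x + t • v)) := by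
    simpa [Function.comp_def, preimage, AffineMap.lineMap_apply, add_comm] using
      hψ.comp_affineMap (AffineMap.lineMap x (x + v))
  have hs : Convex 𝕜 s := hsub.1.inter hadd.1
  have hsum := (hsub.subset (fun _ ht => ht.1) hs).add (hadd.subset (fun _ ht => ht.2) hs)
  refine (antitoneOn_of_concaveOn_of_even hsum ?_ ?_).mono fun t ht => ⟨ht.2, ht.1⟩
  · intro t ht
    simpa only [s, mem_ofPred_eq, neg_smul, sub_neg_eq_add, ← sub_eq_add_neg, and_comm] using ht
  · intro t
    simp only [Pi.add_apply, neg_smul, sub_neg_eq_add, ← sub_eq_add_neg]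
    exact add_comm _ _

end Concave

section IntervalIntegral

lemma concaveOn_integral_of_antitoneOn {g : ℝ → ℝ} {s : Set ℝ} (hs : Convex ℝ s)
    (hg : AntitoneOn g s) {c : ℝ} (hc : c ∈ s) : ConcaveOn ℝ s (fun t => ∫ y in c..t, g y) := by
  have hint {u v : ℝ} (hu : u ∈ s) (hv : v ∈ s) : IntervalIntegrable g volume u v :=
    (hg.mono (hs.ordConnected.uIcc_subset hu hv)).intervalIntegrable
  refine concaveOn_of_slope_anti_adjacent hs fun {x y z} hx hz hxy hyz => ?_
  have hIcc : Icc x z ⊆ s := hs.ordConnected.out hx hz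
  have hy : y ∈ s := hIcc ⟨hxy.le, hyz.le⟩
  have hright : ∫ u in y..z, g u ≤ g y * (z - y) := by
    simpa [mul_comm] using intervalIntegral.integral_mono_on hyz.le (hint hy hz)
      (intervalIntegrable_const (c := g y))
      (fun u hu => hg hy (hIcc ⟨hxy.le.trans hu.1, hu.2⟩) hu.1)
  have hleft : g y * (y - x) ≤ ∫ u in x..y, g u := by
    simpa [mul_comm] using intervalIntegral.integral_mono_on hxy.le
      (intervalIntegrable_const (c := g y)) (hint hx hy)
      (fun u hu => hg (hIcc ⟨hu.1, hu.2.trans hyz.le⟩) hy hu.2)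
  rw [intervalIntegral.integral_interval_sub_left (hint hc hz) (hint hc hy),
    intervalIntegral.integral_interval_sub_left (hint hc hy) (hint hc hx)]
  calc (∫ u in y..z, g u) / (z - y) ≤ g y := (div_le_iff₀ (sub_pos.2 hyz)).2 hright
    _ ≤ (∫ u in x..y, g u) / (y - x) := (le_div_iff₀ (sub_pos.2 hxy)).2 hleft

lemma antitoneOn_integral_left {f : ℝ → ℝ} {μ : Measure ℝ} {a c : ℝ}
    (hf : IntegrableOn f (Icc a c) μ) (hf0 : ∀ y ∈ Icc a c, 0 ≤ f y) :
    AntitoneOn (fun u => ∫ y in u..c, f y ∂μ) (Icc a c) := by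
  intro u hu v hv huv
  have huc : Icc u c ⊆ Icc a c := Icc_subset_Icc_left hu.1
  refine intervalIntegral.integral_mono_interval huv hv.2 le_rfl ?_ ?_
  · exact ae_restrict_of_forall_mem measurableSet_Ioc fun y hy =>
      hf0 y (huc (Ioc_subset_Icc_self hy))
  · exact (intervalIntegrable_iff_integrableOn_Ioc_of_le hu.2).2
      (hf.mono_set (Ioc_subset_Icc_self.trans huc))

variable {I : Set ℝ} {ψ : ℝ → ℝ} {b x d : ℝ}

lemma concaveOn_integral_symmetric_interval (hψ : ConcaveOn ℝ I ψ) (hcont : ContinuousOn ψ I)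
    (hd : 0 ≤ d) (hI : Icc (x - d) (x + d) ⊆ I) :
    ConcaveOn ℝ (Icc 0 d) (fun t => ∫ y in (x - t)..(x + t), ψ y) := by
  have hanti : AntitoneOn (fun t => ψ (x - t) + ψ (x + t)) (Icc 0 d) := by
    have hsum := antitoneOn_symmetric_sum hψ x (1 : ℝ)
    simp only [smul_eq_mul, mul_one] at hsum
    exact hsum.mono fun t ht => ⟨ht.1, hI (by constructor <;> linarith [ht.1, ht.2]),
      hI (by constructor <;> linarith [ht.1, ht.2])⟩
  refine (concaveOn_integral_of_antitoneOn (convex_Icc 0 d) hanti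
    (left_mem_Icc.2 hd)).congr fun t ht => ?_
  have hint {u v : ℝ} (hu : u ∈ Icc (x - d) (x + d)) (hv : v ∈ Icc (x - d) (x + d)) :
      IntervalIntegrable ψ volume u v :=
    (hcont.mono ((uIcc_subset_Icc hu hv).trans hI)).intervalIntegrable
  have hleft : IntervalIntegrable ψ volume (x - t) x :=
    hint (by constructor <;> linarith [ht.1, ht.2]) (by constructor <;> linarith)
  have hright : IntervalIntegrable ψ volume x (x + t) :=
    hint (by constructor <;> linarith) (by constructor <;> linarith [ht.1, ht.2])
  calc ∫ y in 0..t, (ψ (x - y) + ψ (x + y))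
      = (∫ y in 0..t, ψ (x - y)) + ∫ y in 0..t, ψ (x + y) :=
        intervalIntegral.integral_add (by simpa using (hleft.comp_sub_left x).symm)
          (by simpa using hright.comp_add_left x)
    _ = (∫ y in (x - t)..x, ψ y) + ∫ y in x..(x + t), ψ y := by simp
    _ = ∫ y in (x - t)..(x + t), ψ y :=
        intervalIntegral.integral_add_adjacent_intervals hleft hright

lemma concaveOn_integral_translated_interval (hψ : ConcaveOn ℝ I ψ) (hcont : ContinuousOn ψ I)
    (hbx : b ≤ x) (hI : Icc b (x + d) ⊆ I) :
    ConcaveOn ℝ (Icc 0 d) (fun t => ∫ y in (b + t)..(x + t), ψ y) := by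
  have hmem {t y : ℝ} (ht : t ∈ Icc 0 d) (hy : y ∈ Icc b x) : y + t ∈ I :=
    hI ⟨by linarith [ht.1, hy.1], by linarith [ht.2, hy.2]⟩
  simp only [← intervalIntegral.integral_comp_add_right, intervalIntegral.integral_of_le hbx]
  refine integral_concaveOn_of_integrand_ae (f := fun y t => ψ (y + t)) (convex_Icc 0 d)
    (ae_restrict_of_forall_mem measurableSet_Ioc fun y hy => ?_) fun t ht => ?_
  · exact (hψ.translate_right y).subset (fun t ht => hmem ht (Ioc_subset_Icc_self hy))
      (convex_Icc 0 d)
  · exact ((hcont.comp (by fun_prop) fun y hy => hmem ht hy).integrableOn_compact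
      isCompact_Icc).mono_set Ioc_subset_Icc_self

end IntervalIntegral

section FiniteSet

variable {A : Set ℝ} {b x t : ℝ}

lemma cthickening_insert {X : Type*} [PseudoMetricSpace X] {r : ℝ} (hr : 0 ≤ r) (a : X)
    (s : Set X) : cthickening r (insert a s) = closedBall a r ∪ cthickening r s := by
  rw [insert_eq, cthickening_union, cthickening_singleton a hr]

lemma cthickening_subset_Iic (hb : b ∈ upperBounds A) (ht : 0 ≤ t) :
    cthickening t A ⊆ Iic (b + t) := by
  have hIic : A ⊆ Iic b := fun a ha => hb ha
  refine (cthickening_subset_of_subset t hIic).trans ?_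
  rw [isClosed_Iic.cthickening_eq_biUnion_closedBall ht]
  refine iUnion₂_subset fun a (ha : a ≤ b) y hy => ?_
  rw [Real.closedBall_eq_Icc] at hy
  exact hy.2.trans (by gcongr)

lemma Ioc_sdiff_cthickening (hb : IsGreatest A b) (hbx : b ≤ x) (ht : 0 ≤ t) :
    Ioc (x - t) (x + t) \ cthickening t A = Ioc (max (x - t) (b + t)) (x + t) := by
  ext y
  simp only [Set.mem_sdiff, mem_Ioc, max_lt_iff]
  refine ⟨fun ⟨hy, hyA⟩ => ⟨⟨hy.1, ?_⟩, hy.2⟩, fun ⟨hy, hyx⟩ => ⟨⟨hy.1, hyx⟩, fun hyA => ?_⟩⟩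
  · by_contra! hyb
    refine hyA (closedBall_subset_cthickening hb.1 t ?_)
    rw [Real.closedBall_eq_Icc]
    exact ⟨by linarith [hy.1], hyb⟩
  · exact hy.2.not_ge (cthickening_subset_Iic hb.2 ht hyA)

lemma setIntegral_cthickening_insert {E : Type*} [NormedAddCommGroup E] [NormedSpace ℝ E]
    {f : ℝ → E} (hb : IsGreatest A b) (hbx : b ≤ x) (ht : 0 ≤ t)
    (hf : IntegrableOn f (cthickening t (insert x A))) :
    ∫ y in cthickening t (insert x A), f y
      = (∫ y in cthickening t A, f y) + ∫ y in (max (x - t) (b + t))..(x + t), f y := by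
  have hdiff : (cthickening t (insert x A) \ cthickening t A : Set ℝ)
      =ᵐ[volume] Ioc (max (x - t) (b + t)) (x + t) := by
    rw [cthickening_insert ht, union_sdiff_right, Real.closedBall_eq_Icc,
      ← Ioc_sdiff_cthickening hb hbx ht]
    exact ae_eq_set_sdiff Ioc_ae_eq_Icc.symm ae_eq_rfl
  have hmax : max (x - t) (b + t) ≤ x + t := max_le (by linarith) (by linarith)
  rw [← integral_inter_add_sdiff isClosed_cthickening.measurableSet hf, setIntegral_congr_set hdiff,
    inter_eq_right.2 (cthickening_subset_of_subset t (subset_insert x A)),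
    intervalIntegral.integral_of_le hmax]

variable {I : Set ℝ} {ψ : ℝ → ℝ} {d : ℝ}

lemma concaveOn_integral_insertion_gain (hψ : ConcaveOn ℝ I ψ) (hcont : ContinuousOn ψ I)
    (hψ0 : ∀ y ∈ I, 0 ≤ ψ y) (hbx : b ≤ x) (hd : 0 ≤ d)
    (hI : Icc (b - d) (x + d) ⊆ I) :
    ConcaveOn ℝ (Icc 0 d) (fun t => ∫ y in (max (x - t) (b + t))..(x + t), ψ y) := by
  have hsymm := concaveOn_integral_symmetric_interval hψ hcont hd
    ((Icc_subset_Icc_left (by linarith)).trans hI)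
  have htrans := concaveOn_integral_translated_interval hψ hcont hbx
    ((Icc_subset_Icc_left (by linarith)).trans hI)
  refine (hsymm.inf htrans).congr fun t ht => ?_
  have htI : Icc (b - t) (x + t) ⊆ I :=
    (Icc_subset_Icc (by linarith [ht.2]) (by linarith [ht.2])).trans hI
  have hanti := antitoneOn_integral_left
    ((hcont.mono htI).integrableOn_compact (μ := volume) isCompact_Icc)
    (fun y hy => hψ0 y (htI hy))
  exact (hanti.map_max (a := x - t) (b := b + t) (by constructor <;> linarith [ht.1])
    (by constructor <;> linarith [ht.1])).symm

lemma concaveOn_setIntegral_cthickening_finset (hψ : ConcaveOn ℝ I ψ) (hcont : ContinuousOn ψ I)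
    (hψ0 : ∀ y ∈ I, 0 ≤ ψ y) (hd : 0 ≤ d) (N : Finset ℝ)
    (hI : cthickening d (N : Set ℝ) ⊆ I) :
    ConcaveOn ℝ (Icc 0 d) (fun t => ∫ y in cthickening t (N : Set ℝ), ψ y) := by
  induction N using Finset.induction_on_max with
  | empty => simpa using concaveOn_const (0 : ℝ) (convex_Icc 0 d)
  | insert x N hmax ih =>
    rw [Finset.coe_insert] at hI ⊢
    have hN : cthickening d (N : Set ℝ) ⊆ I :=
      (cthickening_subset_of_subset d (subset_insert x N)).trans hI
    have hx : Icc (x - d) (x + d) ⊆ I := by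
      rw [← Real.closedBall_eq_Icc]
      exact (closedBall_subset_cthickening (mem_insert x _) d).trans hI
    rcases N.eq_empty_or_nonempty with rfl | hne
    · refine (concaveOn_integral_symmetric_interval hψ hcont hd hx).congr fun t ht => ?_
      simp only [Finset.coe_empty, insert_empty_eq, cthickening_singleton x ht.1,
        Real.closedBall_eq_Icc, integral_Icc_eq_integral_Ioc]
      exact intervalIntegral.integral_of_le (by linarith [ht.1])
    set b := N.max' hne
    have hb : IsGreatest (N : Set ℝ) b := N.isGreatest_max' hne
    have hbx : b ≤ x := (hmax b hb.1).le
    have hbI : b - d ∈ I := hN (closedBall_subset_cthickening hb.1 d (by simp [abs_of_nonneg hd]))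
    have hbxI : Icc (b - d) (x + d) ⊆ I :=
      hψ.1.ordConnected.out hbI (hx (right_mem_Icc.2 (by linarith)))
    refine ((ih hN).add (concaveOn_integral_insertion_gain hψ hcont hψ0 hbx hd hbxI)).congr
      fun t ht => (setIntegral_cthickening_insert hb hbx ht.1 ?_).symm
    exact (hcont.mono ((cthickening_mono ht.2 _).trans hI)).integrableOn_compact
      (N.finite_toSet.insert x).isCompact.cthickening

end FiniteSet

section Approximation

variable {X : Type*} [PseudoMetricSpace X] {A : Set X}

lemma exists_finset_subset_cthickening (hA : TotallyBounded A) {ε : ℝ} (hε : 0 < ε) :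
    ∃ N : Finset X, ↑N ⊆ A ∧ A ⊆ cthickening ε (N : Set X) := by
  obtain ⟨N, hNA, hNfin, hAN⟩ := finite_approx_of_totallyBounded hA ε hε
  lift N to Finset X using hNfin
  exact ⟨N, hNA, hAN.trans (iUnion₂_subset fun y hy =>
    ball_subset_closedBall.trans (closedBall_subset_cthickening hy ε))⟩

variable [MeasurableSpace X] [OpensMeasurableSpace X] {μ : Measure X} {d D : ℝ}

lemma tendsto_measure_cthickening_nhdsGT {t : ℝ} (hD : ∃ r > t, μ (cthickening r A) ≠ ⊤) :
    Tendsto (fun r => μ (cthickening r A)) (𝓝[>] t) (𝓝 (μ (cthickening t A))) := by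
  rw [cthickening_eq_iInter_cthickening A]
  exact tendsto_measure_biInter_gt (fun _ _ => isClosed_cthickening.nullMeasurableSet)
    (fun _ _ _ h => cthickening_mono h A) hD

lemma concaveOn_measureReal_cthickening_of_finset (hA : TotallyBounded A) (hdD : d < D)
    (hμ : μ (cthickening D A) ≠ ⊤)
    (hfin : ∀ N : Finset X, ↑N ⊆ A →
      ConcaveOn ℝ (Icc 0 D) (fun t => μ.real (cthickening t (N : Set X)))) :
    ConcaveOn ℝ (Icc 0 d) (fun t => μ.real (cthickening t A)) := by
  choose! N hNA hAN using fun (ε : ℝ) (hε : 0 < ε) => exists_finset_subset_cthickening hA hε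
  have hsmall : ∀ᶠ ε in 𝓝[>] (0 : ℝ), 0 < ε ∧ ε ≤ D - d := Ioc_mem_nhdsGT (sub_pos.2 hdD)
  refine concaveOn_of_tendsto_s7 (l := 𝓝[>] (0 : ℝ))
    (f := fun ε t => μ.real (cthickening (t + ε) (N ε : Set X))) ?_ fun t ht => ?_
  · filter_upwards [hsmall] with ε ⟨hε, hεD⟩
    refine ((hfin (N ε) (hNA ε hε)).translate_left ε).subset (fun t ht => ?_) (convex_Icc 0 d)
    constructor <;> linarith [ht.1, ht.2]
  have hshift : Tendsto (fun ε => t + ε) (𝓝[>] 0) (𝓝[>] t) := by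
    rw [Tendsto, map_add_left_nhdsGT, add_zero]
  have hfinite {r : ℝ} (hr : r ≤ D) : μ (cthickening r A) ≠ ⊤ :=
    measure_ne_top_of_subset (cthickening_mono hr A) hμ
  have hlim : Tendsto (fun ε => μ.real (cthickening (t + ε) A)) (𝓝[>] 0)
      (𝓝 (μ.real (cthickening t A))) :=
    (ENNReal.tendsto_toReal (hfinite (ht.2.trans hdD.le))).comp
      ((tendsto_measure_cthickening_nhdsGT ⟨D, ht.2.trans_lt hdD, hμ⟩).comp hshift)
  refine tendsto_of_tendsto_of_tendsto_of_le_of_le' tendsto_const_nhds hlim ?_ ?_ <;>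
    filter_upwards [hsmall] with ε ⟨hε, hεD⟩
  · have hNε : cthickening (t + ε) (N ε : Set X) ⊆ cthickening (t + ε) A :=
      cthickening_subset_of_subset _ (hNA ε hε)
    refine measureReal_mono ?_ (measure_ne_top_of_subset hNε (hfinite (by linarith [ht.2])))
    exact (cthickening_subset_of_subset t (hAN ε hε)).trans
      (cthickening_cthickening_subset ht.1 hε.le _)
  · exact measureReal_mono (cthickening_subset_of_subset _ (hNA ε hε))
      (hfinite (by linarith [ht.2]))

end Approximation

lemma withDensity_ofReal_apply_eq_ofReal_setIntegral {X : Type*} [MeasurableSpace X] {μ : Measure X}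
    {f : X → ℝ} {s : Set X} (hs : MeasurableSet s) (hf : IntegrableOn f s μ)
    (hf0 : ∀ x ∈ s, 0 ≤ f x) :
    μ.withDensity (fun x => ENNReal.ofReal (f x)) s = ENNReal.ofReal (∫ x in s, f x ∂μ) := by
  rw [withDensity_apply _ hs,
    ofReal_integral_eq_lintegral_ofReal hf (ae_restrict_of_forall_mem hs hf0)]

lemma add_smul_Icc_eq_cthickening {A : Set ℝ} (hA : IsCompact A) {t : ℝ} (ht : 0 ≤ t) :
    A + t • Icc (-1 : ℝ) 1 = cthickening t A := by
  have hball : Icc (-1 : ℝ) 1 = closedBall 0 1 := by simp [Real.closedBall_eq_Icc]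
  rw [hball, smul_unitClosedBall, Real.norm_of_nonneg ht, hA.add_closedBall_zero ht]

theorem concaveOn_measureReal_cthickening {I : Set ℝ} (hIopen : IsOpen I) {ψ : ℝ → ℝ}
    (hψ0 : ∀ x ∈ I, 0 ≤ ψ x) (hψ : ConcaveOn ℝ I ψ) {A : Set ℝ} (hA : IsCompact A) {d : ℝ}
    (hd : 0 ≤ d) (hI : cthickening d A ⊆ I) :
    ConcaveOn ℝ (Icc 0 d)
      (fun t => (volume.withDensity fun x => ENNReal.ofReal (ψ x)).real (cthickening t A)) := by
  have hcont : ContinuousOn ψ I := hψ.continuousOn hIopen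
  obtain ⟨δ, hδ, hδI⟩ := hA.cthickening.exists_cthickening_subset_open hIopen hI
  rw [cthickening_cthickening hδ.le hd] at hδI
  have hdensity {K : Set ℝ} (hK : IsCompact K) (hKI : K ⊆ I) :=
    withDensity_ofReal_apply_eq_ofReal_setIntegral hK.measurableSet
      ((hcont.mono hKI).integrableOn_compact (μ := volume) hK) fun x hx => hψ0 x (hKI hx)
  refine concaveOn_measureReal_cthickening_of_finset hA.totallyBounded (lt_add_of_pos_left d hδ)
    (hdensity hA.cthickening hδI ▸ ENNReal.ofReal_ne_top) fun N hNA => ?_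
  have hN : cthickening (δ + d) (N : Set ℝ) ⊆ I := (cthickening_subset_of_subset _ hNA).trans hδI
  refine (concaveOn_setIntegral_cthickening_finset hψ hcont hψ0 (by positivity) N hN).congr
    fun t ht => ?_
  have htI : cthickening t (N : Set ℝ) ⊆ I := (cthickening_mono ht.2 _).trans hN
  rw [measureReal_def, hdensity N.finite_toSet.isCompact.cthickening htI, ENNReal.toReal_ofReal]
  exact setIntegral_nonneg isClosed_cthickening.measurableSet fun x hx => hψ0 x (htI hx)

theorem parallel_volume_concave_concave_density_general
    {I : Set ℝ} (hIopen : IsOpen I) {ψ : ℝ → ℝ} (hψ0 : ∀ x ∈ I, 0 ≤ ψ x)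
    (hψconc : ConcaveOn ℝ I ψ) {A : Set ℝ} (hA : IsCompact A) {d : ℝ} (hd : 0 ≤ d)
    (hsub : A + Icc (-d) d ⊆ I) :
    ConcaveOn ℝ (Icc 0 d) (fun t =>
      ((volume.withDensity fun x => ENNReal.ofReal (ψ x)) (A + t • Icc (-1 : ℝ) 1)).toReal) := by
  have hI : cthickening d A ⊆ I := by
    rw [← hA.add_closedBall_zero hd]
    simpa [Real.closedBall_eq_Icc] using hsub
  refine (concaveOn_measureReal_cthickening hIopen hψ0 hψconc hA hd hI).congr fun t ht => ?_
  simp only [measureReal_def, add_smul_Icc_eq_cthickening hA ht.1]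

/-- If μ has a density that is concave on an open interval I and vanishes outside,
and A + [-d,d] ⊆ I, then the parallel μ-volume is concave on [0,d]. -/
theorem parallel_volume_concave_concave_density
    (I : Set ℝ) (hIopen : IsOpen I) (hIconv : Convex ℝ I)
    (ψ : ℝ → ℝ) (hψ0 : ∀ x, 0 ≤ ψ x) (hψconc : ConcaveOn ℝ I ψ)
    (hψout : ∀ x ∉ I, ψ x = 0)
    (μ : Measure ℝ) (hμ : μ = volume.withDensity fun x => ENNReal.ofReal (ψ x))
    (A : Set ℝ) (hA : IsCompact A) (hAne : A.Nonempty)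
    (d : ℝ) (hd : 0 < d) (hsub : A + Icc (-d) d ⊆ I) :
    ConcaveOn ℝ (Icc 0 d) (fun t => (μ (A + t • Icc (-1 : ℝ) 1)).toReal) := by
  subst hμ
  exact parallel_volume_concave_concave_density_general hIopen (fun x _ => hψ0 x) hψconc hA hd.le
    hsub
end
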